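/- arXiv:1410.1168 — 2 statements merged into one kernel-verified Lean document; each statement's English description precedes it below -/
import Mathlib

section
/- Let φ be an automorphism of the unit ball B_N. If f is a continuous function on ∂B_N (for the Hardy space case), respectively a continuous function on the closed ball \overline{B_N} (for the weighted Bergman case), then the operator C_φ T_f − T_{f∘φ} C_φ is compact on H^2(B_N), respectively on A^2_s(B_N) for s > −1. -/
open Filter MeasureTheory Metric Set
open scoped ComplexInnerProductSpace Topology

noncomputable section

/-- Borel measurable structure on `ℂ^N`. -/
instance (N : ℕ) : MeasurableSpace (EuclideanSpace ℂ (Fin N)) := borel _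

instance (N : ℕ) : BorelSpace (EuclideanSpace ℂ (Fin N)) := ⟨rfl⟩

/-- The open unit ball `B_N` of `ℂ^N`. -/
abbrev Ball (N : ℕ) : Set (EuclideanSpace ℂ (Fin N)) := Metric.ball 0 1

/-- The normalized volume measure `v` on the unit ball of `ℂ^N`. -/
def ballMeasure (N : ℕ) : Measure (EuclideanSpace ℂ (Fin N)) :=
  (volume (Ball N))⁻¹ • volume.restrict (Ball N)

/-- The normalized surface measure `σ` on the unit sphere `∂B_N`, realized as a measure on
`ℂ^N` (supported on the sphere): it is the push-forward of the normalized volume measure of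
the ball under the radial projection `z ↦ z/‖z‖`. -/
def sphereMeasure (N : ℕ) : Measure (EuclideanSpace ℂ (Fin N)) :=
  Measure.map (fun z => ‖z‖⁻¹ • z) (ballMeasure N)

/-- The weighted measure `dv_s(z) = (Γ(N+s+1)/(N! Γ(s+1))) (1-|z|²)^s dv(z)` defining the
weighted Bergman space `A²_s(B_N)`. -/
def bergmanMeasure (N : ℕ) (s : ℝ) : Measure (EuclideanSpace ℂ (Fin N)) :=
  (ballMeasure N).withDensity fun z =>
    ENNReal.ofReal (Real.Gamma (N + s + 1) / (Nat.factorial N * Real.Gamma (s + 1))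
      * (1 - ‖z‖ ^ 2) ^ s)

/-- An abstract presentation of the Hardy space `H²(B_N)` (for `t = N`, `μ` the normalized
surface measure on the sphere) or of the weighted Bergman space `A²_s(B_N)` (for
`t = N + s + 1`, `μ` the weighted volume measure `dv_s`): a reproducing-kernel Hilbert space
of holomorphic functions on `B_N` with kernel `K_w(z) = (1 - ⟨z,w⟩)^{-t}`, whose inner
product is computed by the (dilated) integral pairing against `μ`. -/
structure BallFunctionSpace (N : ℕ) (t : ℝ) (μ : Measure (EuclideanSpace ℂ (Fin N))) where
  (H : Type)
  [grp : NormedAddCommGroup H]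
  [ips : InnerProductSpace ℂ H]
  [cpl : CompleteSpace H]
  eval : H → EuclideanSpace ℂ (Fin N) → ℂ
  eval_add : ∀ f g : H, ∀ z, eval (f + g) z = eval f z + eval g z
  eval_smul : ∀ (c : ℂ) (f : H) (z : EuclideanSpace ℂ (Fin N)), eval (c • f) z = c * eval f z
  holo : ∀ f : H, DifferentiableOn ℂ (eval f) (Ball N)
  eval_injective : ∀ f g : H, (∀ z ∈ Ball N, eval f z = eval g z) → f = g
  kernel : EuclideanSpace ℂ (Fin N) → H
  eval_kernel : ∀ w ∈ Ball N, ∀ z ∈ Ball N, eval (kernel w) z = (1 - ⟪w, z⟫) ^ (-(t : ℂ))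
  reproducing : ∀ (f : H), ∀ w ∈ Ball N, ⟪kernel w, f⟫ = eval f w
  inner_eq : ∀ f g : H,
    Tendsto (fun r : ℝ => ∫ z, (starRingEnd ℂ) (eval f (r • z)) * eval g (r • z) ∂μ)
      (𝓝[<] (1 : ℝ)) (𝓝 ⟪f, g⟫)

attribute [instance] BallFunctionSpace.grp BallFunctionSpace.ips BallFunctionSpace.cpl

/-- `T` is the composition operator `C_φ : f ↦ f ∘ φ` on `S`. -/
def BallFunctionSpace.IsCompositionOperator {N : ℕ} {t : ℝ}
    {μ : Measure (EuclideanSpace ℂ (Fin N))} (S : BallFunctionSpace N t μ)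
    (φ : EuclideanSpace ℂ (Fin N) → EuclideanSpace ℂ (Fin N)) (T : S.H →L[ℂ] S.H) : Prop :=
  ∀ f : S.H, ∀ z ∈ Ball N, S.eval (T f) z = S.eval f (φ z)

/-- `T` is the Toeplitz operator `T_b : u ↦ P(b·u)` with symbol `b` on `S`;  equivalently,
`⟪v, T u⟫ = lim_{r→1⁻} ∫ conj(v(rz)) b(z) u(rz) dμ(z)` for all `u, v ∈ S`. -/
def BallFunctionSpace.IsToeplitzOperator {N : ℕ} {t : ℝ}
    {μ : Measure (EuclideanSpace ℂ (Fin N))} (S : BallFunctionSpace N t μ)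
    (b : EuclideanSpace ℂ (Fin N) → ℂ) (T : S.H →L[ℂ] S.H) : Prop :=
  ∀ u v : S.H,
    Tendsto (fun r : ℝ => ∫ z, (starRingEnd ℂ) (S.eval v (r • z)) * b z * S.eval u (r • z) ∂μ)
      (𝓝[<] (1 : ℝ)) (𝓝 ⟪v, T u⟫)

/-- `φ` is an automorphism (biholomorphic self-map) of the unit ball `B_N`. -/
def IsBallAutomorphism (N : ℕ) (φ : EuclideanSpace ℂ (Fin N) → EuclideanSpace ℂ (Fin N)) : Prop :=
  DifferentiableOn ℂ φ (Ball N) ∧ Set.MapsTo φ (Ball N) (Ball N) ∧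
    ∃ ψ : EuclideanSpace ℂ (Fin N) → EuclideanSpace ℂ (Fin N),
      DifferentiableOn ℂ ψ (Ball N) ∧ Set.MapsTo ψ (Ball N) (Ball N) ∧
      (∀ z ∈ Ball N, ψ (φ z) = z) ∧ (∀ z ∈ Ball N, φ (ψ z) = z)


lemma exp_apply_hasSum {X : Type*} [NormedAddCommGroup X] [NormedSpace ℂ X] [CompleteSpace X]
    (T : X →L[ℂ] X) (x : X) :
    HasSum (fun n : ℕ => ((n.factorial : ℂ)⁻¹) • (T ^ n) x) (NormedSpace.exp T x) := by
  have h := NormedSpace.exp_series_hasSum_exp' (𝕂 := ℂ) T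
  have h2 := h.mapL (ContinuousLinearMap.apply ℂ X x)
  exact h2

lemma exp_apply_of_ker {X : Type*} [NormedAddCommGroup X] [NormedSpace ℂ X] [CompleteSpace X]
    (T : X →L[ℂ] X) (x : X) (h : T x = 0) : NormedSpace.exp T x = x := by
  have h1 := exp_apply_hasSum T x
  have h2 : HasSum (fun n : ℕ => ((n.factorial : ℂ)⁻¹) • (T ^ n) x) x := by
    have e : x = ((Nat.factorial 0 : ℂ)⁻¹) • (T ^ 0) x := by simp
    nth_rw 2 [e]
    refine hasSum_single 0 ?_
    intro n hn
    obtain ⟨m, rfl⟩ := Nat.exists_eq_succ_of_ne_zero hn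
    simp [pow_succ, h]
  exact h1.unique h2

/-- Abstract Fuglede-Putnam-Rosenblum argument on a Banach space. -/
lemma fpr_abstract {X : Type*} [NormedAddCommGroup X] [NormedSpace ℂ X] [CompleteSpace X]
    (a a' b b' : X →L[ℂ] X) (haa : Commute a a') (hbb : Commute b b') (hab : Commute a b)
    (hab' : Commute a b') (hcomm3 : Commute a' b) (hcomm4 : Commute a' b')
    (hb : ∀ z : ℂ, ‖NormedSpace.exp (z • b' - (starRingEnd ℂ z) • b)‖ ≤ 1)
    (ha : ∀ z : ℂ, ‖NormedSpace.exp (z • a' - (starRingEnd ℂ z) • a)‖ ≤ 1)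
    (x : X) (hx : a x = b x) : a' x = b' x := by
  let ev : (X →L[ℂ] X) →L[ℂ] X := ContinuousLinearMap.apply ℂ X x
  have hev : ∀ T, ev T = T x := fun T => rfl
  set f : ℂ → X := fun z => NormedSpace.exp (z • (b' - a')) x with hf
  have hker : ∀ c : ℂ, NormedSpace.exp (c • (b - a)) x = x := fun c =>
    exp_apply_of_ker _ x (by simp [hx])
  have hfd : Differentiable ℂ f := by
    intro z
    have := (hasDerivAt_exp_smul_const (𝕂 := ℂ) (b' - a') z)
    exact (ev.hasFDerivAt.comp_hasDerivAt z this).differentiableAt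
  have hbd : ∀ z, ‖f z‖ ≤ ‖x‖ := by
    intro z
    have e : NormedSpace.exp (z • (b' - a')) * NormedSpace.exp ((-(starRingEnd ℂ z)) • (b - a))
        = NormedSpace.exp (z • b' - (starRingEnd ℂ z) • b) *
          NormedSpace.exp ((-z) • a' - (starRingEnd ℂ (-z)) • a) := by
      let _ : NormedAlgebra ℚ (X →L[ℂ] X) := .restrictScalars ℚ ℂ _
      have c1 : Commute b' b := hbb.symm
      have c2 : Commute a' a := haa.symm
      rw [← NormedSpace.exp_add_of_commute, ← NormedSpace.exp_add_of_commute]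
      · congr 1
        simp only [map_neg]
        module
      · have := hab.symm; have := hab'.symm; have := hcomm3.symm; have := hcomm4.symm
        refine Commute.sub_left (Commute.sub_right ?_ ?_) (Commute.sub_right ?_ ?_) <;>
        · refine Commute.smul_left (Commute.smul_right ?_ _) _
          assumption
      · have := hab.symm; have := hab'.symm; have := hcomm3.symm; have := hcomm4.symm
        refine Commute.smul_left (Commute.smul_right ?_ _) _
        refine Commute.sub_left (Commute.sub_right ?_ ?_) (Commute.sub_right ?_ ?_) <;> assumption
    have : f z = (NormedSpace.exp (z • b' - (starRingEnd ℂ z) • b) *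
          NormedSpace.exp ((-z) • a' - (starRingEnd ℂ (-z)) • a)) x := by
      rw [← e, mul_apply_eq_comp, hker]
    rw [this, mul_apply_eq_comp]
    calc _ ≤ 1 * ‖NormedSpace.exp ((-z) • a' - (starRingEnd ℂ (-z)) • a) x‖ :=
          ContinuousLinearMap.le_of_opNorm_le _ (hb z) _
      _ ≤ 1 * (1 * ‖x‖) := by
          gcongr
          exact ContinuousLinearMap.le_of_opNorm_le _ (ha (-z)) _
      _ = ‖x‖ := by ring
  have hconst : ∀ z, f z = f 0 := fun z => by
    apply hfd.apply_eq_apply_of_bounded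
    apply (Metric.isBounded_closedBall (x := (0 : X)) (r := ‖x‖)).subset
    rintro - ⟨z, rfl⟩
    simpa using hbd z
  have hd0 : HasDerivAt f ((b' - a') x) 0 := by
    have := (hasDerivAt_exp_smul_const (𝕂 := ℂ) (b' - a') 0)
    have := (ev.hasFDerivAt.comp_hasDerivAt 0 this)
    simpa [hev, Function.comp_def] using this
  have hd1 : HasDerivAt f 0 0 := by
    have : f = fun _ => f 0 := funext hconst
    rw [this]; exact hasDerivAt_const _ _
  have := hd0.unique hd1
  rw [sub_apply, sub_eq_zero] at this
  exact this.symm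
set_option linter.unusedSectionVars false

section calkin
variable {H : Type*} [NormedAddCommGroup H] [InnerProductSpace ℂ H] [CompleteSpace H]

/-- The submodule of compact operators. -/
abbrev cptSub (H : Type*) [NormedAddCommGroup H] [InnerProductSpace ℂ H] : Submodule ℂ (H →L[ℂ] H) :=
  compactOperator (RingHom.id ℂ) H H

lemma mem_cptSub {T : H →L[ℂ] H} : T ∈ cptSub H ↔ IsCompactOperator T := Iff.rfl

instance cptSub_closed : IsClosed (cptSub H : Set (H →L[ℂ] H)) :=
  isClosed_setOfPred_isCompactOperator

lemma cptSub_mul_left (Y : H →L[ℂ] H) {X : H →L[ℂ] H} (hX : X ∈ cptSub H) : Y * X ∈ cptSub H :=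
  IsCompactOperator.clm_comp (mem_cptSub.1 hX) Y

lemma cptSub_mul_right (Y : H →L[ℂ] H) {X : H →L[ℂ] H} (hX : X ∈ cptSub H) : X * Y ∈ cptSub H :=
  IsCompactOperator.comp_clm (mem_cptSub.1 hX) Y

/-- The Calkin quotient, as a Banach space. -/
def Calk (H : Type*) [NormedAddCommGroup H] [InnerProductSpace ℂ H] [CompleteSpace H] : Type _ :=
  (H →L[ℂ] H) ⧸ cptSub H

instance : NormedAddCommGroup (Calk H) := inferInstanceAs (NormedAddCommGroup ((H →L[ℂ] H) ⧸ cptSub H))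
instance : NormedSpace ℂ (Calk H) := inferInstanceAs (NormedSpace ℂ ((H →L[ℂ] H) ⧸ cptSub H))
instance : CompleteSpace (Calk H) := inferInstanceAs (CompleteSpace ((H →L[ℂ] H) ⧸ cptSub H))

/-- The class of an operator. -/
def cmk (X : H →L[ℂ] H) : Calk H := (Submodule.Quotient.mk X : (H →L[ℂ] H) ⧸ cptSub H)

lemma cmk_eq {X Y : H →L[ℂ] H} : cmk X = cmk Y ↔ X - Y ∈ cptSub H := Submodule.Quotient.eq _

lemma quotOp_bound (G : (H →L[ℂ] H) →ₗ[ℂ] (H →L[ℂ] H)) (hG : cptSub H ≤ (cptSub H).comap G) (C : ℝ)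
    (hC : ∀ X, ‖G X‖ ≤ C * ‖X‖) (q : (H →L[ℂ] H) ⧸ cptSub H) :
    ‖(cptSub H).mapQ (cptSub H) G hG q‖ ≤ max C 0 * ‖q‖ := by
  refine le_of_forall_pos_le_add fun ε hε => ?_
  obtain ⟨m, rfl, hm⟩ := Submodule.Quotient.norm_mk_lt q (ε := ε / (max C 0 + 1)) (by positivity)
  have h0 : (0 : ℝ) ≤ max C 0 := le_max_right _ _
  calc _ ≤ ‖G m‖ := by
        rw [Submodule.mapQ_apply]; exact Submodule.Quotient.norm_mk_le _ _
    _ ≤ C * ‖m‖ := hC m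
    _ ≤ max C 0 * ‖m‖ := by gcongr; exact le_max_left _ _
    _ ≤ max C 0 * (‖(Submodule.Quotient.mk m : (H →L[ℂ] H) ⧸ cptSub H)‖ + ε / (max C 0 + 1)) := by
        gcongr
    _ ≤ _ := by
        rw [mul_add]; gcongr
        rw [mul_div_assoc', div_le_iff₀ (by positivity)]
        nlinarith

/-- operator on the quotient induced by a linear map of operators. -/
def quotOp (G : (H →L[ℂ] H) →ₗ[ℂ] (H →L[ℂ] H)) (hG : cptSub H ≤ (cptSub H).comap G) (C : ℝ)
    (hC : ∀ X, ‖G X‖ ≤ C * ‖X‖) : Calk H →L[ℂ] Calk H :=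
  LinearMap.mkContinuous (E := Calk H) (F := Calk H) ((cptSub H).mapQ (cptSub H) G hG) (max C 0)
    (fun q => quotOp_bound G hG C hC q)

def Lop (Y : H →L[ℂ] H) : Calk H →L[ℂ] Calk H :=
  quotOp (LinearMap.mulLeft ℂ Y) (fun _ hX => cptSub_mul_left Y hX) ‖Y‖
    (fun X => by simpa using norm_mul_le Y X)

def Rop (Y : H →L[ℂ] H) : Calk H →L[ℂ] Calk H :=
  quotOp (LinearMap.mulRight ℂ Y) (fun _ hX => cptSub_mul_right Y hX) ‖Y‖
    (fun X => by simpa [mul_comm] using norm_mul_le X Y)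

lemma Lop_mk (Y X : H →L[ℂ] H) : Lop Y (cmk X) = cmk (Y * X) := rfl
lemma Rop_mk (Y X : H →L[ℂ] H) : Rop Y (cmk X) = cmk (X * Y) := rfl

lemma quot_ext {S T : Calk H →L[ℂ] Calk H}
    (h : ∀ X, S (cmk X) = T (cmk X)) : S = T := by
  ext q
  obtain ⟨X, rfl⟩ := Submodule.Quotient.mk_surjective _ q
  exact h X

lemma norm_quotOp_le (G : (H →L[ℂ] H) →ₗ[ℂ] (H →L[ℂ] H)) (hG : cptSub H ≤ (cptSub H).comap G) (C : ℝ)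
    (hC : ∀ X, ‖G X‖ ≤ C * ‖X‖) : ‖quotOp G hG C hC‖ ≤ max C 0 :=
  LinearMap.mkContinuous_norm_le _ (le_max_right _ _) _

lemma norm_Lop_le (Y : H →L[ℂ] H) : ‖Lop Y‖ ≤ ‖Y‖ :=
  (norm_quotOp_le _ _ _ _).trans (by simp)

lemma norm_Rop_le (Y : H →L[ℂ] H) : ‖Rop Y‖ ≤ ‖Y‖ :=
  (norm_quotOp_le _ _ _ _).trans (by simp)

/-- The quotient map as a continuous linear map. -/
def mkL : (H →L[ℂ] H) →L[ℂ] Calk H :=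
  LinearMap.mkContinuous (F := Calk H) (cptSub H).mkQ 1 (fun X => (Submodule.Quotient.norm_mk_le _ X).trans (one_mul _).ge)

lemma mkL_apply (X : H →L[ℂ] H) : mkL X = cmk X := rfl

lemma exp_Lop (Y : H →L[ℂ] H) : NormedSpace.exp (Lop Y) = Lop (NormedSpace.exp Y) := by
  apply quot_ext
  intro X
  have h1 := exp_apply_hasSum (Lop Y) (cmk X)
  have h2 := ((NormedSpace.exp_series_hasSum_exp' (𝕂 := ℂ) Y).mul_right X).mapL mkL
  rw [Lop_mk]
  refine h1.unique ?_
  convert h2 using 1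
  ext n
  have : ∀ n, (Lop Y ^ n) (cmk X) = cmk (Y ^ n * X) := by
    intro n
    induction n with
    | zero => simp
    | succ n ih => rw [pow_succ', mul_apply_eq_comp, ih, Lop_mk, pow_succ', mul_assoc]
  rw [this, smul_mul_assoc, map_smul]
  rfl
  rfl

lemma exp_Rop (Y : H →L[ℂ] H) : NormedSpace.exp (Rop Y) = Rop (NormedSpace.exp Y) := by
  apply quot_ext
  intro X
  have h1 := exp_apply_hasSum (Rop Y) (cmk X)
  have h2 := ((NormedSpace.exp_series_hasSum_exp' (𝕂 := ℂ) Y).mul_left X).mapL mkL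
  rw [Rop_mk]
  refine h1.unique ?_
  convert h2 using 1
  ext n
  have : ∀ n, (Rop Y ^ n) (cmk X) = cmk (X * Y ^ n) := by
    intro n
    induction n with
    | zero => simp
    | succ n ih => rw [pow_succ', mul_apply_eq_comp, ih, Rop_mk, pow_succ, mul_assoc]
  rw [this, mul_smul_comm, map_smul]
  rfl
  rfl

lemma norm_exp_skew_le (z : ℂ) (Y : H →L[ℂ] H) :
    ‖NormedSpace.exp (z • star Y - (starRingEnd ℂ z) • Y)‖ ≤ 1 := by
  let _ : NormedAlgebra ℚ (H →L[ℂ] H) := .restrictScalars ℚ ℂ _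
  have h : (z • star Y - (starRingEnd ℂ z) • Y) ∈ skewAdjoint (H →L[ℂ] H) := by
    rw [skewAdjoint.mem_iff]
    simp [star_sub, star_smul]
  have hu := NormedSpace.exp_mem_unitary_of_mem_skewAdjoint h
  rcases subsingleton_or_nontrivial (H →L[ℂ] H) with hs | hs
  · rw [Subsingleton.elim (NormedSpace.exp _) (0 : H →L[ℂ] H)]; simp
  · exact (CStarRing.norm_of_mem_unitary hu).le

lemma Lop_comb (z w : ℂ) (X Y : H →L[ℂ] H) : z • Lop X - w • Lop Y = Lop (z • X - w • Y) := by
  apply quot_ext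
  intro T
  simp only [sub_apply, smul_apply, Lop_mk, sub_mul, smul_mul_assoc]
  rfl

lemma Rop_comb (z w : ℂ) (X Y : H →L[ℂ] H) : z • Rop X - w • Rop Y = Rop (z • X - w • Y) := by
  apply quot_ext
  intro T
  simp only [sub_apply, smul_apply, Rop_mk, mul_sub, mul_smul_comm]
  rfl

lemma commute_Lop_Rop (X Y : H →L[ℂ] H) : Commute (Rop X) (Lop Y) := by
  apply quot_ext
  intro T
  simp only [mul_apply_eq_comp, Lop_mk, Rop_mk, mul_assoc]

/-- Fuglede-Putnam modulo compact operators. -/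
lemma fuglede_compact (A B C : H →L[ℂ] H) (hA : A * star A - star A * A ∈ cptSub H)
    (hB : B * star B - star B * B ∈ cptSub H) (h : C * A = B * C) :
    C * star A - star B * C ∈ cptSub H := by
  have := fpr_abstract (Rop A) (Rop (star A)) (Lop B) (Lop (star B)) ?_ ?_ (commute_Lop_Rop _ _)
    (commute_Lop_Rop _ _) (commute_Lop_Rop _ _) (commute_Lop_Rop _ _) ?_ ?_
    (cmk C) (by rw [Lop_mk, Rop_mk, h])
  · rw [Lop_mk, Rop_mk, cmk_eq] at this
    exact this
  · apply quot_ext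
    intro T
    simp only [mul_apply_eq_comp, Rop_mk, mul_assoc]
    rw [cmk_eq, ← mul_sub]
    apply cptSub_mul_left
    rw [← neg_sub]
    exact (cptSub H).neg_mem hA
  · apply quot_ext
    intro T
    simp only [mul_apply_eq_comp, Lop_mk, ← mul_assoc]
    rw [cmk_eq, ← sub_mul]
    exact cptSub_mul_right _ hB
  · intro z
    rw [Lop_comb, exp_Lop]
    exact (norm_Lop_le _).trans (norm_exp_skew_le z B)
  · intro z
    rw [Rop_comb, exp_Rop]
    exact (norm_Rop_le _).trans (norm_exp_skew_le z A)
end calkin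

section graded
variable {H : Type*} [NormedAddCommGroup H] [InnerProductSpace ℂ H] [CompleteSpace H]

lemma starProjection_compact (F : Submodule ℂ H) [FiniteDimensional ℂ F] :
    F.starProjection ∈ cptSub H := by
  have : ProperSpace F := FiniteDimensional.proper ℂ F
  have h : IsCompactOperator (F.orthogonalProjectionOnto : H →L[ℂ] F) :=
    ⟨closedBall 0 1, isCompact_closedBall _ _,
      (F.orthogonalProjectionOnto : H →L[ℂ] F).continuous.continuousAt.preimage_mem_nhds
        (by simpa using closedBall_mem_nhds (0 : F) one_pos)⟩
  exact IsCompactOperator.clm_comp h F.subtypeL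

lemma compact_of_graded (V : ℕ → Submodule ℂ H) (hfin : ∀ n, FiniteDimensional ℂ (V n))
    (hort : ∀ n m, n ≠ m → ∀ x ∈ V n, ∀ y ∈ V m, ⟪x, y⟫ = 0)
    (hd : Dense ((⨆ n, V n : Submodule ℂ H) : Set H)) (A B : H →L[ℂ] H) (c : ℕ → ℂ)
    (hc : Tendsto c atTop (𝓝 0)) (h : ∀ n, ∀ x ∈ V n, A x = c n • B x) : A ∈ cptSub H := by
  have hof : OrthogonalFamily ℂ (fun n => V n) (fun n => (V n).subtypeₗᵢ) := by
    intro n m hnm x y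
    exact hort n m hnm x x.2 y y.2
  have key : ∀ ε : ℝ, 0 < ε → ∃ T ∈ cptSub H, ‖A - T‖ ≤ ‖B‖ * ε := by
    intro ε hε
    obtain ⟨m, hm⟩ := (Metric.tendsto_atTop.1 hc) ε hε
    let F : Submodule ℂ H := (Finset.range m).sup V
    have : FiniteDimensional ℂ F := Submodule.finiteDimensional_finset_sup _ _
    refine ⟨A * F.starProjection, cptSub_mul_left _ (starProjection_compact F), ?_⟩
    have hP1 : ∀ n < m, ∀ x ∈ V n, F.starProjection x = x := by
      intro n hn x hx
      apply Submodule.starProjection_eq_self_iff.2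
      have : V n ≤ F := Finset.le_sup (f := V) (Finset.mem_range.2 hn)
      exact this hx
    have hP2 : ∀ n, m ≤ n → ∀ x ∈ V n, F.starProjection x = 0 := by
      intro n hn x hx
      rw [Submodule.starProjection_apply_eq_zero_iff]
      have : F ≤ (ℂ ∙ x)ᗮ := by
        refine Finset.sup_le fun k hk y hy => ?_
        rw [Submodule.mem_orthogonal_singleton_iff_inner_right]
        exact hort n k (by have := Finset.mem_range.1 hk; omega) x hx y hy
      rw [Submodule.mem_orthogonal]
      intro u hu
      exact Submodule.mem_orthogonal_singleton_iff_inner_left.1 (this hu)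
    apply ContinuousLinearMap.opNorm_le_bound _ (by positivity)
    intro x
    have hcl : IsClosed {x | ‖(A - A * F.starProjection) x‖ ≤ ‖B‖ * ε * ‖x‖} :=
      isClosed_le (by fun_prop) (by fun_prop)
    refine hcl.closure_subset_iff.2 ?_ (hd x)
    intro x hx
    obtain ⟨f, hf, rfl⟩ := (Submodule.mem_iSup_iff_exists_finsupp _ _).1 hx
    let g : ∀ n, V n := fun n => ⟨f n, hf n⟩
    let d : ℕ → ℂ := fun n => if n < m then 0 else c n
    have hdn : ∀ n, ‖d n‖ ≤ ε := by
      intro n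
      simp only [d]
      split_ifs with hn
      · simpa using hε.le
      · have := hm n (not_lt.1 hn)
        simpa using this.le
    have e1 : (A - A * F.starProjection) (f.sum fun _ xi => xi)
        = B (∑ n ∈ f.support, d n • f n) := by
      rw [Finsupp.sum, map_sum, map_sum]
      refine Finset.sum_congr rfl fun n _ => ?_
      simp only [d, sub_apply, mul_apply_eq_comp, map_smul]
      split_ifs with hn
      · rw [hP1 n hn _ (hf n)]; simp
      · rw [hP2 n (not_lt.1 hn) _ (hf n)]; simp [h n _ (hf n)]
    have e2 : ‖∑ n ∈ f.support, d n • f n‖ ^ 2 = ∑ n ∈ f.support, ‖d n • f n‖ ^ 2 := by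
      have := hof.norm_sum (fun n => d n • g n) f.support
      simpa [g] using this
    have e3 : ‖∑ n ∈ f.support, f n‖ ^ 2 = ∑ n ∈ f.support, ‖f n‖ ^ 2 := by
      have := hof.norm_sum g f.support
      simpa [g] using this
    have e4 : ‖∑ n ∈ f.support, d n • f n‖ ≤ ε * ‖∑ n ∈ f.support, f n‖ := by
      refine le_of_sq_le_sq ?_ (by positivity)
      rw [e2, mul_pow, e3, Finset.mul_sum]
      refine Finset.sum_le_sum fun n _ => ?_
      rw [norm_smul, mul_pow]
      gcongr
      exact hdn n
    simp only [mem_ofPred_eq]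
    rw [e1, mul_assoc]
    refine (B.le_opNorm _).trans ?_
    exact mul_le_mul_of_nonneg_left e4 (norm_nonneg _)
  have hcl : IsClosed (cptSub H : Set (H →L[ℂ] H)) := cptSub_closed
  rw [← SetLike.mem_coe, ← hcl.closure_eq, Metric.mem_closure_iff]
  intro ε hε
  obtain ⟨T, hT, hT2⟩ := key (ε / (‖B‖ + 1)) (by positivity)
  refine ⟨T, hT, ?_⟩
  rw [dist_eq_norm]
  refine hT2.trans_lt ?_
  rw [← mul_div_assoc, div_lt_iff₀ (by positivity)]
  nlinarith [norm_nonneg B]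
end graded

section coeffs

lemma iteratedDeriv_comp_mul (f : ℂ → ℂ) (c : ℂ) (n : ℕ) :
    iteratedDeriv n (fun x => f (c * x)) = fun x => c ^ n * iteratedDeriv n f (c * x) := by
  induction n with
  | zero => simp
  | succ n ih =>
    rw [iteratedDeriv_succ, ih, iteratedDeriv_succ]
    funext x
    have := deriv_comp_mul_left c (iteratedDeriv n f) x
    rw [deriv_const_mul_field, this, smul_eq_mul]
    ring

lemma contDiffAt_of_ball {F : ℂ → ℂ} {R : ℝ} (hR : 0 < R)
    (hF : DifferentiableOn ℂ F (ball 0 R)) {n : WithTop ℕ∞} : ContDiffAt ℂ n F 0 :=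
  (hF.analyticAt (ball_mem_nhds 0 hR)).contDiffAt

lemma ode_coeff {G K : ℂ → ℂ} {t : ℂ} (hG : DifferentiableOn ℂ G (ball 0 1))
    (h : ∀ x ∈ ball (0 : ℂ) 1, x * deriv G x + t * G x = K x) (n : ℕ) :
    (n + t) * iteratedDeriv n G 0 = iteratedDeriv n K 0 := by
  have hG' : DifferentiableOn ℂ (deriv G) (ball 0 1) := hG.deriv isOpen_ball
  have e : K =ᶠ[𝓝 0] fun x => x * deriv G x + t * G x := by
    filter_upwards [ball_mem_nhds (0 : ℂ) one_pos] with x hx using (h x hx).symm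
  have c1 : ContDiffAt ℂ n (fun x : ℂ => x) 0 := contDiffAt_id
  have c2 : ContDiffAt ℂ n (deriv G) 0 := contDiffAt_of_ball one_pos hG'
  have c3 : ContDiffAt ℂ n G 0 := contDiffAt_of_ball one_pos hG
  rw [e.iteratedDeriv_eq, iteratedDeriv_fun_add (c1.mul c2) (contDiffAt_const.mul c3),
    iteratedDeriv_const_mul_field, iteratedDeriv_fun_mul c1 c2, add_mul]
  congr 1
  rcases n with _ | n
  · simp
  · rw [Finset.sum_eq_single 1]
    · simp [iteratedDeriv_fun_id_zero, iteratedDeriv_succ']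
    · intro b _ hb
      simp [iteratedDeriv_fun_id_zero, hb]
    · simp

lemma eq_zero_of_coeff {F : ℂ → ℂ} (hF : DifferentiableOn ℂ F (ball 0 1))
    (h : ∀ n, iteratedDeriv n F 0 = 0) : ∀ x ∈ ball (0 : ℂ) 1, F x = 0 := by
  intro x hx
  have := Complex.hasSum_taylorSeries_on_ball hF hx
  simp only [h, smul_zero] at this
  exact this.unique hasSum_zero
end coeffs

namespace BallFunctionSpace
section basics
variable {N : ℕ} {t : ℝ} {μ : Measure (EuclideanSpace ℂ (Fin N))} (S : BallFunctionSpace N t μ)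

/-- evaluation as a linear map -/
def evalL (z : EuclideanSpace ℂ (Fin N)) : S.H →ₗ[ℂ] ℂ where
  toFun u := S.eval u z
  map_add' u v := S.eval_add u v z
  map_smul' c u := by simp [S.eval_smul]

lemma eval_sub (u v : S.H) (z) : S.eval (u - v) z = S.eval u z - S.eval v z := map_sub (S.evalL z) u v
lemma eval_zero (z) : S.eval 0 z = 0 := map_zero (S.evalL z)

lemma eval_eq (u : S.H) {z} (hz : z ∈ Ball N) : S.eval u z = ⟪S.kernel z, u⟫ :=
  (S.reproducing u z hz).symm

lemma line_maps (w x : EuclideanSpace ℂ (Fin N)) (hw : w ∈ Ball N) :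
    ∃ R > 0, ∀ l ∈ closedBall (0 : ℂ) R, w + l • x ∈ Ball N := by
  have hc : ContinuousAt (fun l : ℂ => w + l • x) 0 := by fun_prop
  have : (fun l : ℂ => w + l • x) ⁻¹' (Ball N) ∈ 𝓝 (0 : ℂ) :=
    hc.preimage_mem_nhds (isOpen_ball.mem_nhds (by simpa using hw))
  obtain ⟨R, hR, h⟩ := Metric.nhds_basis_closedBall.mem_iff.1 this
  exact ⟨R, hR, h⟩

lemma diff_line (u : S.H) (w x : EuclideanSpace ℂ (Fin N)) {s : Set ℂ}
    (h : ∀ l ∈ s, w + l • x ∈ Ball N) :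
    DifferentiableOn ℂ (fun l : ℂ => S.eval u (w + l • x)) s :=
  (S.holo u).comp (by fun_prop : Differentiable ℂ fun l : ℂ => w + l • x).differentiableOn h

lemma exists_jet (n : ℕ) (w x : EuclideanSpace ℂ (Fin N)) (hw : w ∈ Ball N) :
    ∃ p : S.H, ∀ u, ⟪p, u⟫ = iteratedDeriv n (fun l : ℂ => S.eval u (w + l • x)) 0 := by
  obtain ⟨R, hR, hm⟩ := line_maps w x hw
  have hd : ∀ u, DifferentiableOn ℂ (fun l : ℂ => S.eval u (w + l • x)) (closedBall 0 R) :=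
    fun u => S.diff_line u w x hm
  obtain ⟨C, hC⟩ := banach_steinhaus (ι := sphere (0 : ℂ) R) (𝕜 := ℂ) (𝕜₂ := ℂ)
    (g := fun l => innerSL ℂ (S.kernel (w + l.1 • x))) (by
      intro u
      obtain ⟨C, hC⟩ := (isCompact_closedBall (0 : ℂ) R).exists_bound_of_continuousOn
        (hd u).continuousOn
      refine ⟨C, fun l => ?_⟩
      have hl := sphere_subset_closedBall l.2
      rw [innerSL_apply_apply, S.reproducing u _ (hm _ hl)]
      exact hC _ hl)
  have hb : ∀ u, ‖iteratedDeriv n (fun l : ℂ => S.eval u (w + l • x)) 0‖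
      ≤ (n.factorial * C / R ^ n) * ‖u‖ := by
    intro u
    have := Complex.norm_iteratedDeriv_le_of_forall_mem_sphere_norm_le n hR
      (f := fun l : ℂ => S.eval u (w + l • x)) (c := 0) (C := C * ‖u‖)
      ⟨(hd u).mono ball_subset_closedBall, by
        rw [closure_ball _ hR.ne']; exact (hd u).continuousOn⟩ (by
        intro l hl
        have h1 := hC ⟨l, hl⟩
        have h2 := (innerSL ℂ (S.kernel (w + l • x))).le_of_opNorm_le h1 u
        rwa [innerSL_apply_apply, S.reproducing u _ (hm _ (sphere_subset_closedBall hl))] at h2)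
    refine this.trans_eq ?_
    ring
  have hcd : ∀ u, ContDiffAt ℂ n (fun l : ℂ => S.eval u (w + l • x)) 0 := fun u =>
    contDiffAt_of_ball hR ((hd u).mono ball_subset_closedBall)
  let L : S.H →ₗ[ℂ] ℂ :=
    { toFun := fun u => iteratedDeriv n (fun l : ℂ => S.eval u (w + l • x)) 0
      map_add' := by
        intro u v
        simp only [S.eval_add]
        exact iteratedDeriv_fun_add (hcd u) (hcd v)
      map_smul' := by
        intro c u
        simp only [S.eval_smul]
        simp }
  let L' : S.H →L[ℂ] ℂ := L.mkContinuous _ hb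
  refine ⟨(InnerProductSpace.toDual ℂ S.H).symm L', fun u => ?_⟩
  rw [InnerProductSpace.toDual_symm_apply]
  rfl

/-- the jet vector -/
def jet (n : ℕ) (w x : EuclideanSpace ℂ (Fin N)) : S.H :=
  open Classical in if hw : w ∈ Ball N then (S.exists_jet n w x hw).choose else 0

lemma jet_inner (n : ℕ) {w : EuclideanSpace ℂ (Fin N)} (x) (hw : w ∈ Ball N) (u : S.H) :
    ⟪S.jet n w x, u⟫ = iteratedDeriv n (fun l : ℂ => S.eval u (w + l • x)) 0 := by
  rw [jet, dif_pos hw]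
  exact (S.exists_jet n w x hw).choose_spec u

lemma smul_mem_Ball {w : EuclideanSpace ℂ (Fin N)} (hw : w ∈ Ball N) {l : ℂ}
    (hl : ‖l‖ ≤ 1) : l • w ∈ Ball N := by
  rw [mem_ball_zero_iff] at *
  rw [norm_smul]
  nlinarith [norm_nonneg l, norm_nonneg w]

lemma eq_zero_of_lines (u : S.H)
    (h : ∀ w ∈ Ball N, ∀ l ∈ ball (0 : ℂ) 1, S.eval u (l • w) = 0) : u = 0 := by
  refine S.eval_injective _ _ fun z hz => ?_
  rw [S.eval_zero]
  have hz' : ‖z‖ < 1 := by simpa using hz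
  obtain ⟨r, h1, h2⟩ := exists_between hz'
  have hr : 0 < r := (norm_nonneg z).trans_lt h1
  have := h ((r : ℂ)⁻¹ • z) (by
    rw [mem_ball_zero_iff, norm_smul, norm_inv, Complex.norm_real, Real.norm_of_nonneg hr.le,
      inv_mul_lt_iff₀ hr]; simpa using h1) r (by simpa [abs_of_pos hr] using h2)
  rwa [smul_inv_smul₀ (by exact_mod_cast hr.ne')] at this

lemma eq_zero_of_jets (u : S.H) (h : ∀ n, ∀ w ∈ Ball N, ⟪S.jet n 0 w, u⟫ = 0) : u = 0 := by
  refine S.eq_zero_of_lines u fun w hw => ?_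
  refine eq_zero_of_coeff (F := fun l => S.eval u (l • w)) ?_ ?_
  · have := S.diff_line u 0 w (s := ball 0 1) (fun l hl => by
      simpa using smul_mem_Ball hw (by simpa using (mem_ball_zero_iff.1 hl).le))
    simpa using this
  · intro n
    have := h n w hw
    rw [S.jet_inner n w (by simp)] at this
    simpa using this

end basics
end BallFunctionSpace

namespace BallFunctionSpace
section kernels
variable {N : ℕ} {t : ℝ} {μ : Measure (EuclideanSpace ℂ (Fin N))} (S : BallFunctionSpace N t μ)

lemma eval_kernel_symm {w z : EuclideanSpace ℂ (Fin N)} (hw : w ∈ Ball N) (hz : z ∈ Ball N) :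
    S.eval (S.kernel w) z = (starRingEnd ℂ) (S.eval (S.kernel z) w) := by
  rw [S.eval_eq _ hz, S.eval_eq _ hw, inner_conj_symm]

lemma inner_lt_one {w z : EuclideanSpace ℂ (Fin N)} (hw : w ∈ Ball N) (hz : z ∈ Ball N) : ‖⟪w, z⟫‖ < 1 := by
  rw [mem_ball_zero_iff] at *
  refine (norm_inner_le_norm w z).trans_lt ?_
  nlinarith [norm_nonneg w, norm_nonneg z]

lemma one_sub_slit {c : ℂ} (hc : ‖c‖ < 1) : 1 - c ∈ Complex.slitPlane := by
  left
  have := (Complex.re_le_norm c)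
  simp
  linarith

lemma eval_jet (n : ℕ) {w z : EuclideanSpace ℂ (Fin N)} (x : EuclideanSpace ℂ (Fin N)) (hw : w ∈ Ball N) (hz : z ∈ Ball N) :
    S.eval (S.jet n w x) z =
      (starRingEnd ℂ) (iteratedDeriv n (fun l : ℂ => (1 - ⟪z, w + l • x⟫) ^ (-(t : ℂ))) 0) := by
  rw [S.eval_eq _ hz, ← inner_conj_symm, S.jet_inner n x hw]
  congr 1
  apply Filter.EventuallyEq.iteratedDeriv_eq
  obtain ⟨R, hR, hm⟩ := line_maps w x hw
  filter_upwards [closedBall_mem_nhds (0 : ℂ) hR] with l hl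
  exact S.eval_kernel z hz _ (hm l hl)

/-- `c_n` -/
def jc (t : ℝ) (n : ℕ) : ℂ := (starRingEnd ℂ) (iteratedDeriv n (fun l : ℂ => (1 - l) ^ (-(t : ℂ))) 0)

lemma eval_jet_zero (n : ℕ) {z : EuclideanSpace ℂ (Fin N)} (x : EuclideanSpace ℂ (Fin N)) (hz : z ∈ Ball N) :
    S.eval (S.jet n 0 x) z = jc t n * ⟪x, z⟫ ^ n := by
  rw [S.eval_jet n x (by simp) hz]
  have : (fun l : ℂ => (1 - ⟪z, 0 + l • x⟫) ^ (-(t : ℂ)))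
      = fun l : ℂ => (fun l : ℂ => (1 - l) ^ (-(t : ℂ))) (⟪z, x⟫ * l) := by
    funext l
    simp [mul_comm]
  have h2 := congrFun (iteratedDeriv_comp_mul (fun l : ℂ => (1 - l) ^ (-(t : ℂ))) ⟪z, x⟫ n) 0
  rw [this, h2, jc]
  simp [mul_comm]

lemma eval_D {w z : EuclideanSpace ℂ (Fin N)} (x : EuclideanSpace ℂ (Fin N)) (hw : w ∈ Ball N) (hz : z ∈ Ball N) :
    S.eval (S.jet 1 w x) z =
      t * ⟪x, z⟫ * (starRingEnd ℂ) ((1 - ⟪z, w⟫) ^ (-(t : ℂ) - 1)) := by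
  rw [S.eval_jet 1 x hw hz, iteratedDeriv_one]
  have h1 : HasDerivAt (fun l : ℂ => 1 - ⟪z, w + l • x⟫) (-⟪z, x⟫) 0 := by
    simp only [inner_add_right, inner_smul_right]
    have := ((hasDerivAt_id (0 : ℂ)).mul_const ⟪z, x⟫).const_add ⟪z, w⟫ |>.const_sub 1
    simpa using this
  have h2 := h1.cpow_const (c := -(t : ℂ)) (by simpa using one_sub_slit (inner_lt_one hz hw))
  rw [h2.deriv]
  simp
  ring

/-- `L_w` -/
def Lv (w : EuclideanSpace ℂ (Fin N)) : S.H := S.jet 1 w w + (t : ℂ) • S.kernel w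

lemma eval_Lv {w z : EuclideanSpace ℂ (Fin N)} (hw : w ∈ Ball N) (hz : z ∈ Ball N) :
    S.eval (S.Lv w) z = t * (starRingEnd ℂ) ((1 - ⟪z, w⟫) ^ (-(t : ℂ) - 1)) := by
  rw [Lv, S.eval_add, S.eval_smul, S.eval_D w hw hz, S.eval_kernel_symm hw hz,
    S.eval_kernel z hz w hw]
  have hne : (1 - ⟪z, w⟫ : ℂ) ≠ 0 := Complex.slitPlane_ne_zero (one_sub_slit (inner_lt_one hz hw))
  have : (1 - ⟪z, w⟫ : ℂ) ^ (-(t : ℂ)) = (1 - ⟪z, w⟫) ^ (-(t : ℂ) - 1) * (1 - ⟪z, w⟫) := by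
    rw [Complex.cpow_sub _ _ hne, Complex.cpow_one, div_mul_cancel₀ _ hne]
  rw [this]
  simp only [map_mul, map_sub, map_one, inner_conj_symm]
  ring

lemma eval_D_eq {w z : EuclideanSpace ℂ (Fin N)} (x : EuclideanSpace ℂ (Fin N)) (hw : w ∈ Ball N) (hz : z ∈ Ball N) :
    S.eval (S.jet 1 w x) z = ⟪x, z⟫ * S.eval (S.Lv w) z := by
  rw [S.eval_D x hw hz, S.eval_Lv hw hz]; ring

lemma inner_Lv {w : EuclideanSpace ℂ (Fin N)} (hw : w ∈ Ball N) (u : S.H) :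
    ⟪S.Lv w, u⟫ = deriv (fun l : ℂ => S.eval u (w + l • w)) 0 + t * S.eval u w := by
  rw [Lv, inner_add_left, S.jet_inner 1 w hw, iteratedDeriv_one, inner_smul_left,
    S.reproducing u w hw, Complex.conj_ofReal]

lemma diff_radial (u : S.H) {w : EuclideanSpace ℂ (Fin N)} (hw : w ∈ Ball N) :
    DifferentiableOn ℂ (fun l : ℂ => S.eval u (l • w)) (ball 0 1) := by
  have := S.diff_line u 0 w (s := ball 0 1) (fun l hl => by
      simpa using smul_mem_Ball hw (by simpa using (mem_ball_zero_iff.1 hl).le))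
  simpa using this

lemma radial_ode (u : S.H) {w : EuclideanSpace ℂ (Fin N)} (hw : w ∈ Ball N) (l : ℂ) (hl : l ∈ ball (0 : ℂ) 1) :
    l * deriv (fun l : ℂ => S.eval u (l • w)) l + t * S.eval u (l • w) = ⟪S.Lv (l • w), u⟫ := by
  rw [S.inner_Lv (smul_mem_Ball hw (mem_ball_zero_iff.1 hl).le)]
  congr 1
  set G : ℂ → ℂ := fun l : ℂ => S.eval u (l • w)
  have e : (fun m : ℂ => S.eval u (l • w + m • l • w)) = fun m => (fun y => G (l + y)) (l * m) := by
    funext m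
    simp only [G, add_smul, smul_smul, mul_comm]
  rw [e, deriv_comp_mul_left l (fun y => G (l + y)) 0, deriv_comp_const_add]
  simp

lemma jet_coeff (u v : S.H) (h : ∀ w ∈ Ball N, ⟪S.Lv w, u⟫ = S.eval v w) (n : ℕ) {w : EuclideanSpace ℂ (Fin N)}
    (hw : w ∈ Ball N) : (n + t : ℂ) * ⟪S.jet n 0 w, u⟫ = ⟪S.jet n 0 w, v⟫ := by
  rw [S.jet_inner n w (by simp), S.jet_inner n w (by simp)]
  simp only [zero_add]
  refine ode_coeff (S.diff_radial u hw) (fun l hl => ?_) n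
  rw [S.radial_ode u hw l hl, h _ (smul_mem_Ball hw (mem_ball_zero_iff.1 hl).le)]

lemma Lv_total (ht : 0 < t) (u : S.H) (h : ∀ w ∈ Ball N, ⟪S.Lv w, u⟫ = 0) : u = 0 := by
  refine S.eq_zero_of_jets u fun n w hw => ?_
  have := S.jet_coeff u 0 (by simpa [S.eval_zero] using h) n hw
  rw [inner_zero_right] at this
  refine (mul_eq_zero.1 this).resolve_left ?_
  have : (0 : ℝ) < n + t := by positivity
  exact_mod_cast this.ne'

lemma dense_of_total {ι : Type*} {H : Type*} [NormedAddCommGroup H] [InnerProductSpace ℂ H]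
    [CompleteSpace H] (g : ι → H) (s : Set ι)
    (h : ∀ u, (∀ i ∈ s, ⟪g i, u⟫ = 0) → u = 0) :
    (Submodule.span ℂ (g '' s)).topologicalClosure = ⊤ := by
  rw [Submodule.topologicalClosure_eq_top_iff, Submodule.eq_bot_iff]
  intro u hu
  refine h u fun i hi => ?_
  exact (Submodule.mem_orthogonal _ _).1 hu _ (Submodule.subset_span ⟨i, hi, rfl⟩)

end kernels
end BallFunctionSpace

/-- the admissible situation: a finite measure carried by a compact subset of the closed ball -/
structure Adm {N : ℕ} (μ : Measure (EuclideanSpace ℂ (Fin N)))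
    (K : Set (EuclideanSpace ℂ (Fin N))) : Prop where
  fin : IsFiniteMeasure μ
  cpt : IsCompact K
  sub : K ⊆ closedBall 0 1
  null : μ Kᶜ = 0

section adm
variable {N : ℕ} {μ : Measure (EuclideanSpace ℂ (Fin N))} {K : Set (EuclideanSpace ℂ (Fin N))}

lemma Adm.ae (h : Adm μ K) : ∀ᵐ z ∂μ, z ∈ K := h.null

lemma Adm.integrable (h : Adm μ K) {g : EuclideanSpace ℂ (Fin N) → ℂ} (hg : ContinuousOn g K) :
    Integrable g μ := by
  have := h.fin
  have h1 := hg.integrableOn_compact (μ := μ) h.cpt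
  rwa [IntegrableOn, Measure.restrict_eq_self_of_ae_mem h.ae] at h1

lemma Adm.integrableR (h : Adm μ K) {g : EuclideanSpace ℂ (Fin N) → ℝ} (hg : ContinuousOn g K) :
    Integrable g μ := by
  have := h.fin
  have h1 := hg.integrableOn_compact (μ := μ) h.cpt
  rwa [IntegrableOn, Measure.restrict_eq_self_of_ae_mem h.ae] at h1

lemma Adm.smul_mem (h : Adm μ K) {r : ℝ} (hr : r ∈ Ioo (0 : ℝ) 1) {z} (hz : z ∈ K) :
    r • z ∈ Ball N := by
  have := mem_closedBall_zero_iff.1 (h.sub hz)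
  rw [mem_ball_zero_iff, norm_smul, Real.norm_of_nonneg hr.1.le]
  nlinarith [hr.1, hr.2, norm_nonneg z]

lemma Ioo_ev : ∀ᶠ r : ℝ in 𝓝[<] (1 : ℝ), r ∈ Ioo (0 : ℝ) 1 := Ioo_mem_nhdsLT one_pos
end adm

namespace BallFunctionSpace
section integrals
variable {N : ℕ} {t : ℝ} {μ : Measure (EuclideanSpace ℂ (Fin N))} (S : BallFunctionSpace N t μ)
  {K : Set (EuclideanSpace ℂ (Fin N))}

lemma contK (h : Adm μ K) {r : ℝ} (hr : r ∈ Ioo (0 : ℝ) 1) (u : S.H) :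
    ContinuousOn (fun z : EuclideanSpace ℂ (Fin N) => S.eval u (r • z)) K :=
  (S.holo u).continuousOn.comp (by fun_prop) fun _ hz => h.smul_mem hr hz

/-- the pairing integral -/
def I (b : EuclideanSpace ℂ (Fin N) → ℂ) (u v : S.H) (r : ℝ) : ℂ :=
  ∫ z, (starRingEnd ℂ) (S.eval v (r • z)) * b z * S.eval u (r • z) ∂μ

/-- the square integral -/
def Q (u : S.H) (r : ℝ) : ℝ := ∫ z, ‖S.eval u (r • z)‖ ^ 2 ∂μ

lemma integrable_I (h : Adm μ K) {r : ℝ} (hr : r ∈ Ioo (0 : ℝ) 1)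
    {b : EuclideanSpace ℂ (Fin N) → ℂ} (hb : ContinuousOn b K) (u v : S.H) :
    Integrable (fun z => (starRingEnd ℂ) (S.eval v (r • z)) * b z * S.eval u (r • z)) μ :=
  h.integrable (((Complex.continuous_conj.comp_continuousOn (S.contK h hr v)).mul hb).mul
    (S.contK h hr u))

lemma integrable_Q (h : Adm μ K) {r : ℝ} (hr : r ∈ Ioo (0 : ℝ) 1) (u : S.H) :
    Integrable (fun z => ‖S.eval u (r • z)‖ ^ 2) μ :=
  h.integrableR ((S.contK h hr u).norm.pow 2)

lemma tendsto_Q (u : S.H) : Tendsto (S.Q u) (𝓝[<] 1) (𝓝 (‖u‖ ^ 2)) := by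
  have h1 := (Complex.continuous_re.tendsto _).comp (S.inner_eq u u)
  have h2 : (⟪u, u⟫ : ℂ).re = ‖u‖ ^ 2 := by
    rw [inner_self_eq_norm_sq_to_K]
    norm_cast
  rw [h2] at h1
  refine h1.congr fun r => ?_
  simp only [Function.comp, Q]
  have : ∀ z : EuclideanSpace ℂ (Fin N), (starRingEnd ℂ) (S.eval u (r • z)) * S.eval u (r • z)
      = ((‖S.eval u (r • z)‖ ^ 2 : ℝ) : ℂ) := by
    intro z
    rw [Complex.conj_mul']
    norm_cast
  simp only [this]
  rw [integral_complex_ofReal, Complex.ofReal_re]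

lemma I_bound (h : Adm μ K) {r : ℝ} (hr : r ∈ Ioo (0 : ℝ) 1)
    {b : EuclideanSpace ℂ (Fin N) → ℂ} {c : ℝ} (hb : ∀ z ∈ K, ‖b z‖ ≤ c) (u v : S.H) :
    ‖S.I b u v r‖ ≤ c * ((S.Q u r + S.Q v r) / 2) := by
  have e : c * ((S.Q u r + S.Q v r) / 2)
      = ∫ z, c * ((‖S.eval u (r • z)‖ ^ 2 + ‖S.eval v (r • z)‖ ^ 2) / 2) ∂μ := by
    rw [integral_const_mul, integral_div,
      integral_add (S.integrable_Q h hr u) (S.integrable_Q h hr v)]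
    rfl
  rw [e, I]
  refine norm_integral_le_of_norm_le ?_ ?_
  · exact (((S.integrable_Q h hr u).add (S.integrable_Q h hr v)).div_const 2).const_mul c
  · filter_upwards [h.ae] with z hz
    rw [norm_mul, norm_mul, RCLike.norm_conj]
    have h1 := hb z hz
    have h0 := (norm_nonneg (b z)).trans h1
    have h2 : ‖S.eval v (r • z)‖ * ‖S.eval u (r • z)‖
        ≤ (‖S.eval u (r • z)‖ ^ 2 + ‖S.eval v (r • z)‖ ^ 2) / 2 := by
      nlinarith [sq_nonneg (‖S.eval v (r • z)‖ - ‖S.eval u (r • z)‖)]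
    calc ‖S.eval v (r • z)‖ * ‖b z‖ * ‖S.eval u (r • z)‖
        = ‖b z‖ * (‖S.eval v (r • z)‖ * ‖S.eval u (r • z)‖) := by ring
      _ ≤ _ := by gcongr

lemma tendsto_I_zero (h : Adm μ K) {b : ℝ → EuclideanSpace ℂ (Fin N) → ℂ}
    (hb : ∀ ε : ℝ, 0 < ε → ∀ᶠ r in 𝓝[<] (1 : ℝ), ∀ z ∈ K, ‖b r z‖ ≤ ε) (u v : S.H) :
    Tendsto (fun r => S.I (b r) u v r) (𝓝[<] 1) (𝓝 0) := by
  rw [NormedAddGroup.tendsto_nhds_zero]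
  intro ε hε
  set q := (‖u‖ ^ 2 + ‖v‖ ^ 2) / 2
  have hq : Tendsto (fun r => (S.Q u r + S.Q v r) / 2) (𝓝[<] 1) (𝓝 q) :=
    ((S.tendsto_Q u).add (S.tendsto_Q v)).div_const 2
  have hq0 : 0 ≤ q := by positivity
  filter_upwards [hb (ε / (q + 2)) (by positivity), Ioo_ev, hq.eventually_lt_const (lt_add_one q)]
    with r h1 hr h2
  refine (S.I_bound h hr h1 u v).trans_lt ?_
  rw [div_mul_eq_mul_div, div_lt_iff₀ (by positivity)]
  nlinarith

lemma I_sub (h : Adm μ K) {r : ℝ} (hr : r ∈ Ioo (0 : ℝ) 1)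
    {b c : EuclideanSpace ℂ (Fin N) → ℂ} (hb : ContinuousOn b K) (hc : ContinuousOn c K)
    (u v : S.H) : S.I (fun z => b z - c z) u v r = S.I b u v r - S.I c u v r := by
  simp only [I]
  rw [← integral_sub (S.integrable_I h hr hb u v) (S.integrable_I h hr hc u v)]
  congr 1; funext z; ring

lemma I_add (h : Adm μ K) {r : ℝ} (hr : r ∈ Ioo (0 : ℝ) 1)
    {b c : EuclideanSpace ℂ (Fin N) → ℂ} (hb : ContinuousOn b K) (hc : ContinuousOn c K)
    (u v : S.H) : S.I (fun z => b z + c z) u v r = S.I b u v r + S.I c u v r := by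
  simp only [I]
  rw [← integral_add (S.integrable_I h hr hb u v) (S.integrable_I h hr hc u v)]
  congr 1; funext z; ring

lemma tendsto_replace (h : Adm μ K) {b : ℝ → EuclideanSpace ℂ (Fin N) → ℂ}
    {b₀ : EuclideanSpace ℂ (Fin N) → ℂ} (hb : ∀ r ∈ Ioo (0 : ℝ) 1, ContinuousOn (b r) K)
    (hb₀ : ContinuousOn b₀ K)
    (hu : ∀ ε : ℝ, 0 < ε → ∀ᶠ r in 𝓝[<] (1 : ℝ), ∀ z ∈ K, ‖b₀ z - b r z‖ ≤ ε) {u v : S.H} {ℓ : ℂ}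
    (hl : Tendsto (fun r => S.I (b r) u v r) (𝓝[<] 1) (𝓝 ℓ)) :
    Tendsto (S.I b₀ u v) (𝓝[<] 1) (𝓝 ℓ) := by
  have h1 := (S.tendsto_I_zero h hu u v).add hl
  rw [zero_add] at h1
  refine h1.congr' ?_
  filter_upwards [Ioo_ev] with r hr
  rw [S.I_sub h hr hb₀ (hb r hr), sub_add_cancel]

lemma toeplitz_iff {b : EuclideanSpace ℂ (Fin N) → ℂ} {T : S.H →L[ℂ] S.H} :
    S.IsToeplitzOperator b T ↔ ∀ u v, Tendsto (S.I b u v) (𝓝[<] 1) (𝓝 ⟪v, T u⟫) := Iff.rfl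

variable {S}

lemma toeplitz_congr (h : Adm μ K) {b c : EuclideanSpace ℂ (Fin N) → ℂ} (hbc : EqOn b c K)
    {T : S.H →L[ℂ] S.H} (hT : S.IsToeplitzOperator b T) : S.IsToeplitzOperator c T := by
  intro u v
  refine (hT u v).congr fun r => ?_
  refine integral_congr_ae ?_
  filter_upwards [h.ae] with z hz
  rw [hbc hz]

lemma toeplitz_add (h : Adm μ K) {b c : EuclideanSpace ℂ (Fin N) → ℂ} (hb : ContinuousOn b K)
    (hc : ContinuousOn c K) {T U : S.H →L[ℂ] S.H} (hT : S.IsToeplitzOperator b T)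
    (hU : S.IsToeplitzOperator c U) : S.IsToeplitzOperator (fun z => b z + c z) (T + U) := by
  intro u v
  have := (hT u v).add (hU u v)
  rw [add_apply, inner_add_right]
  refine this.congr' ?_
  filter_upwards [Ioo_ev] with r hr using (S.I_add h hr hb hc u v).symm

lemma toeplitz_sub (h : Adm μ K) {b c : EuclideanSpace ℂ (Fin N) → ℂ} (hb : ContinuousOn b K)
    (hc : ContinuousOn c K) {T U : S.H →L[ℂ] S.H} (hT : S.IsToeplitzOperator b T)
    (hU : S.IsToeplitzOperator c U) : S.IsToeplitzOperator (fun z => b z - c z) (T - U) := by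
  intro u v
  have := (hT u v).sub (hU u v)
  rw [sub_apply, inner_sub_right]
  refine this.congr' ?_
  filter_upwards [Ioo_ev] with r hr using (S.I_sub h hr hb hc u v).symm

lemma toeplitz_const (a : ℂ) : S.IsToeplitzOperator (fun _ => a) (a • (1 : S.H →L[ℂ] S.H)) := by
  intro u v
  have := (S.inner_eq v u).const_mul a
  rw [smul_apply, inner_smul_right]
  refine this.congr fun r => ?_
  rw [← integral_const_mul]
  congr 1; funext z; ring

lemma toeplitz_star {b : EuclideanSpace ℂ (Fin N) → ℂ} {T : S.H →L[ℂ] S.H}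
    (hT : S.IsToeplitzOperator b T) :
    S.IsToeplitzOperator (fun z => (starRingEnd ℂ) (b z)) (star T) := by
  intro u v
  have := (Complex.continuous_conj.tendsto _).comp (hT v u)
  rw [inner_conj_symm] at this
  rw [ContinuousLinearMap.star_eq_adjoint, ContinuousLinearMap.adjoint_inner_right]
  refine this.congr fun r => ?_
  simp only [Function.comp]
  rw [← integral_conj]
  congr 1; funext z
  simp only [map_mul, Complex.conj_conj]; ring

lemma toeplitz_norm_le (h : Adm μ K) {b : EuclideanSpace ℂ (Fin N) → ℂ} {c : ℝ} (hc : 0 ≤ c)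
    (hb : ∀ z ∈ K, ‖b z‖ ≤ c) {T : S.H →L[ℂ] S.H} (hT : S.IsToeplitzOperator b T) : ‖T‖ ≤ c := by
  have key : ∀ u v, ‖⟪v, T u⟫‖ ≤ c * ((‖u‖ ^ 2 + ‖v‖ ^ 2) / 2) := by
    intro u v
    have h1 := (S.toeplitz_iff.1 hT u v).norm
    have h2 := (((S.tendsto_Q u).add (S.tendsto_Q v)).div_const 2).const_mul c
    refine le_of_tendsto_of_tendsto h1 h2 ?_
    filter_upwards [Ioo_ev] with r hr using S.I_bound h hr hb u v
  refine T.opNorm_le_bound hc fun u => ?_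
  by_cases hTu : T u = 0
  · rw [hTu, norm_zero]; positivity
  by_cases hu0 : u = 0
  · simp [hu0]
  have hp : 0 < ‖T u‖ := norm_pos_iff.2 hTu
  have hpu : 0 < ‖u‖ := norm_pos_iff.2 hu0
  have h1 := key u (((‖u‖ / ‖T u‖ : ℝ) : ℂ) • T u)
  rw [inner_smul_left, norm_mul, inner_self_eq_norm_sq_to_K, norm_smul, RCLike.norm_conj,
    Complex.norm_real, Real.norm_of_nonneg (by positivity), div_mul_cancel₀ _ hp.ne'] at h1
  simp only [norm_pow, Complex.coe_algebraMap, Complex.norm_real, norm_norm] at h1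
  have h3 : ‖u‖ / ‖T u‖ * ‖T u‖ ^ 2 = ‖u‖ * ‖T u‖ := by field_simp
  rw [h3] at h1
  have h4 : ‖u‖ * ‖T u‖ ≤ ‖u‖ * (c * ‖u‖) := h1.trans_eq (by ring)
  exact le_of_mul_le_mul_left h4 hpu

lemma toeplitz_unique {b : EuclideanSpace ℂ (Fin N) → ℂ} {T U : S.H →L[ℂ] S.H}
    (hT : S.IsToeplitzOperator b T) (hU : S.IsToeplitzOperator b U) : T = U := by
  ext u
  refine ext_inner_left ℂ fun v => ?_
  exact tendsto_nhds_unique (hT u v) (hU u v)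

end integrals
end BallFunctionSpace

namespace BallFunctionSpace
section mult
variable {N : ℕ} {t : ℝ} {μ : Measure (EuclideanSpace ℂ (Fin N))} {S : BallFunctionSpace N t μ}
  {K : Set (EuclideanSpace ℂ (Fin N))}

lemma norm_le_of_mul (h : Adm μ K) {u v : S.H} {g : EuclideanSpace ℂ (Fin N) → ℂ}
    (hg : ∀ z ∈ Ball N, ‖g z‖ ≤ 1) (huv : ∀ z ∈ Ball N, S.eval v z = g z * S.eval u z) :
    ‖v‖ ≤ ‖u‖ := by
  refine le_of_sq_le_sq ?_ (norm_nonneg _)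
  refine le_of_tendsto_of_tendsto (S.tendsto_Q v) (S.tendsto_Q u) ?_
  filter_upwards [Ioo_ev] with r hr
  refine integral_mono_ae (S.integrable_Q h hr v) (S.integrable_Q h hr u) ?_
  filter_upwards [h.ae] with z hz
  have hz' := h.smul_mem hr hz
  rw [huv _ hz', norm_mul, mul_pow]
  have := hg _ hz'
  have h2 : ‖g (r • z)‖ ^ 2 ≤ 1 := pow_le_one₀ (norm_nonneg _) this
  nlinarith [sq_nonneg ‖S.eval u (r • z)‖]

lemma coord_le {z : EuclideanSpace ℂ (Fin N)} (hz : z ∈ Ball N) (j : Fin N) : ‖z j‖ ≤ 1 :=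
  (PiLp.norm_apply_le z j).trans (mem_ball_zero_iff.1 hz).le

variable (S) in
/-- functions whose product with `z_j` is in the space -/
def mulDom (j : Fin N) : Submodule ℂ S.H where
  carrier := {u | ∃ v : S.H, ∀ z ∈ Ball N, S.eval v z = z j * S.eval u z}
  add_mem' := by
    rintro u u' ⟨v, hv⟩ ⟨v', hv'⟩
    refine ⟨v + v', fun z hz => ?_⟩
    rw [S.eval_add, S.eval_add, hv z hz, hv' z hz, mul_add]
  zero_mem' := ⟨0, fun z _ => by simp [S.eval_zero]⟩
  smul_mem' := by
    rintro c u ⟨v, hv⟩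
    refine ⟨c • v, fun z hz => ?_⟩
    rw [S.eval_smul, S.eval_smul, hv z hz]; ring

lemma mulDom_closed (h : Adm μ K) (j : Fin N) : IsClosed (mulDom S j : Set S.H) := by
  refine IsSeqClosed.isClosed fun x p hx hp => ?_
  choose y hy using hx
  have hd : ∀ m n, dist (y m) (y n) ≤ dist (x m) (x n) := by
    intro m n
    rw [dist_eq_norm, dist_eq_norm]
    refine norm_le_of_mul h (g := fun z => z j) (fun z hz => coord_le hz j) fun z hz => ?_
    rw [S.eval_sub, S.eval_sub, hy _ z hz, hy _ z hz, mul_sub]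
  have hc : CauchySeq y := by
    rw [Metric.cauchySeq_iff]
    intro ε hε
    obtain ⟨n₀, hn⟩ := Metric.cauchySeq_iff.1 hp.cauchySeq ε hε
    exact ⟨n₀, fun m hm n hn' => (hd m n).trans_lt (hn m hm n hn')⟩
  obtain ⟨v, hv⟩ := cauchySeq_tendsto_of_complete hc
  refine ⟨v, fun z hz => ?_⟩
  have e1 : Tendsto (fun n => S.eval (y n) z) atTop (𝓝 (S.eval v z)) := by
    simp only [S.eval_eq _ hz]
    exact tendsto_const_nhds.inner hv
  have e2 : Tendsto (fun n => S.eval (x n) z) atTop (𝓝 (S.eval p z)) := by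
    simp only [S.eval_eq _ hz]
    exact tendsto_const_nhds.inner hp
  refine tendsto_nhds_unique e1 ((e2.const_mul (z j)).congr fun n => (hy n z hz).symm)

lemma mulDom_top (h : Adm μ K) (ht : 0 < t) (j : Fin N) : mulDom S j = ⊤ := by
  have h1 := dense_of_total S.Lv (Ball N) (fun u hu => S.Lv_total ht u hu)
  rw [eq_top_iff, ← h1]
  refine Submodule.topologicalClosure_minimal _ ?_ (mulDom_closed h j)
  rw [Submodule.span_le]
  rintro _ ⟨w, hw, rfl⟩
  refine ⟨S.jet 1 w (EuclideanSpace.single j 1), fun z hz => ?_⟩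
  rw [S.eval_D_eq _ hw hz, EuclideanSpace.inner_single_left, map_one, one_mul]

lemma exists_mul (h : Adm μ K) (ht : 0 < t) (j : Fin N) :
    ∃ M : S.H →L[ℂ] S.H, ∀ u, ∀ z ∈ Ball N, S.eval (M u) z = z j * S.eval u z := by
  have h1 : ∀ u : S.H, ∃ v : S.H, ∀ z ∈ Ball N, S.eval v z = z j * S.eval u z := by
    intro u
    have : u ∈ mulDom S j := by rw [mulDom_top h ht j]; trivial
    exact this
  choose m hm using h1
  let L : S.H →ₗ[ℂ] S.H :=
    { toFun := m
      map_add' := fun u v => S.eval_injective _ _ fun z hz => by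
        rw [S.eval_add, hm _ z hz, hm _ z hz, hm _ z hz, S.eval_add, mul_add]
      map_smul' := fun c u => S.eval_injective _ _ fun z hz => by
        rw [RingHom.id_apply, S.eval_smul, hm _ z hz, hm _ z hz, S.eval_smul]; ring }
  refine ⟨L.mkContinuous 1 fun u => ?_, fun u z hz => hm u z hz⟩
  rw [one_mul]
  exact norm_le_of_mul h (fun z hz => coord_le hz j) (hm u)

/-- `M` is multiplication by `z_j` -/
def IsMul (S : BallFunctionSpace N t μ) (j : Fin N) (M : S.H →L[ℂ] S.H) : Prop :=
  ∀ u, ∀ z ∈ Ball N, S.eval (M u) z = z j * S.eval u z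

lemma IsMul.comm {i j : Fin N} {A B : S.H →L[ℂ] S.H} (hA : IsMul S i A) (hB : IsMul S j B) :
    A * B = B * A := by
  ext u
  refine S.eval_injective _ _ fun z hz => ?_
  simp only [mul_apply_eq_comp]
  rw [hA _ z hz, hB _ z hz, hB _ z hz, hA _ z hz]; ring

lemma unif_aux (h : Adm μ K) {b : EuclideanSpace ℂ (Fin N) → ℂ} (hb : ContinuousOn b K)
    (ε : ℝ) (hε : 0 < ε) : ∀ᶠ r : ℝ in 𝓝[<] (1 : ℝ), ∀ z ∈ K, ‖b z - (r : ℂ) * b z‖ ≤ ε := by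
  obtain ⟨C, hC⟩ := h.cpt.exists_bound_of_continuousOn hb
  have : Tendsto (fun r : ℝ => (1 - r) * (|C| + 1)) (𝓝[<] 1) (𝓝 ((1 - 1) * (|C| + 1))) := by
    refine Tendsto.mono_left ?_ nhdsWithin_le_nhds
    exact (Continuous.tendsto (by fun_prop) _)
  rw [sub_self, zero_mul] at this
  filter_upwards [this.eventually_lt_const hε, Ioo_ev] with r h1 hr z hz
  have e : b z - r * b z = ((1 - r : ℝ) : ℂ) * b z := by push_cast; ring
  rw [e, norm_mul, Complex.norm_real, Real.norm_of_nonneg (by linarith [hr.2])]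
  refine le_trans ?_ h1.le
  have := hC z hz
  have h0 : 0 ≤ 1 - r := by linarith [hr.2]
  exact mul_le_mul_of_nonneg_left (by linarith [le_abs_self C]) h0

lemma toeplitz_mul (h : Adm μ K) {b : EuclideanSpace ℂ (Fin N) → ℂ} (hb : ContinuousOn b K)
    {j : Fin N} {M T : S.H →L[ℂ] S.H} (hM : IsMul S j M) (hT : S.IsToeplitzOperator b T) :
    S.IsToeplitzOperator (fun z => b z * z j) (T * M) := by
  have hb' : ContinuousOn (fun z : EuclideanSpace ℂ (Fin N) => b z * z j) K :=
    hb.mul (by fun_prop)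
  rw [toeplitz_iff]
  intro u v
  refine S.tendsto_replace h (b := fun r z => r * (b z * z j)) (fun r _ =>
    continuousOn_const.mul hb') hb' (unif_aux h hb') ?_
  refine (hT (M u) v).congr' ?_
  filter_upwards [Ioo_ev] with r hr
  refine integral_congr_ae ?_
  filter_upwards [h.ae] with z hz
  rw [hM u _ (h.smul_mem hr hz)]
  simp
  ring

lemma toeplitz_star_mul (h : Adm μ K) {b : EuclideanSpace ℂ (Fin N) → ℂ} (hb : ContinuousOn b K)
    {j : Fin N} {M T : S.H →L[ℂ] S.H} (hM : IsMul S j M) (hT : S.IsToeplitzOperator b T) :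
    S.IsToeplitzOperator (fun z => b z * (starRingEnd ℂ) (z j)) (star M * T) := by
  have h1 := toeplitz_star (toeplitz_mul h (Complex.continuous_conj.comp_continuousOn hb) hM
    (toeplitz_star hT))
  rw [star_mul, star_star] at h1
  refine toeplitz_congr h (fun z _ => ?_) h1
  simp

end mult
end BallFunctionSpace

namespace BallFunctionSpace
section comm
variable {N : ℕ} {t : ℝ} {μ : Measure (EuclideanSpace ℂ (Fin N))} {S : BallFunctionSpace N t μ}
  {K : Set (EuclideanSpace ℂ (Fin N))}

lemma star_inner (M : S.H →L[ℂ] S.H) (x y : S.H) : ⟪star M x, y⟫ = ⟪x, M y⟫ := by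
  rw [ContinuousLinearMap.star_eq_adjoint, ContinuousLinearMap.adjoint_inner_left]

lemma inner_star (M : S.H →L[ℂ] S.H) (x y : S.H) : ⟪x, star M y⟫ = ⟪M x, y⟫ := by
  rw [ContinuousLinearMap.star_eq_adjoint, ContinuousLinearMap.adjoint_inner_right]

lemma IsMul.star_kernel {j : Fin N} {M : S.H →L[ℂ] S.H} (hM : IsMul S j M)
    {w : EuclideanSpace ℂ (Fin N)} (hw : w ∈ Ball N) :
    star M (S.kernel w) = (starRingEnd ℂ) (w j) • S.kernel w := by
  refine ext_inner_right ℂ fun u => ?_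
  rw [star_inner, S.reproducing _ w hw, hM u w hw, inner_smul_left, Complex.conj_conj,
    S.reproducing _ w hw]

lemma IsMul.star_D {j : Fin N} {M : S.H →L[ℂ] S.H} (hM : IsMul S j M)
    {w : EuclideanSpace ℂ (Fin N)} (x : EuclideanSpace ℂ (Fin N)) (hw : w ∈ Ball N) :
    star M (S.jet 1 w x) = (starRingEnd ℂ) (x j) • S.kernel w
      + (starRingEnd ℂ) (w j) • S.jet 1 w x := by
  refine ext_inner_right ℂ fun u => ?_
  rw [star_inner, inner_add_left, inner_smul_left, inner_smul_left, Complex.conj_conj,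
    Complex.conj_conj, S.reproducing _ w hw, S.jet_inner 1 x hw, S.jet_inner 1 x hw,
    iteratedDeriv_one, iteratedDeriv_one]
  obtain ⟨R, hR, hm⟩ := line_maps w x hw
  have hn := closedBall_mem_nhds (0 : ℂ) hR
  have e : (fun l : ℂ => S.eval (M u) (w + l • x)) =ᶠ[𝓝 0]
      fun l => (w j + l * x j) * S.eval u (w + l • x) := by
    filter_upwards [hn] with l hl
    rw [hM u _ (hm l hl)]
    simp
  rw [e.deriv_eq]
  have h1 : HasDerivAt (fun l : ℂ => w j + l * x j) (x j) 0 := by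
    simpa using ((hasDerivAt_id (0 : ℂ)).mul_const (x j)).const_add (w j)
  have h2 : DifferentiableAt ℂ (fun l : ℂ => S.eval u (w + l • x)) 0 :=
    (S.diff_line u w x hm).differentiableAt hn
  have h3 := (h1.mul h2.hasDerivAt).deriv
  have h4 : ((fun l : ℂ => w j + l * x j) * fun l => S.eval u (w + l • x))
      = fun l => (w j + l * x j) * S.eval u (w + l • x) := rfl
  rw [h4] at h3
  rw [h3]
  simp

lemma IsMul.apply_Lv {i : Fin N} {M : S.H →L[ℂ] S.H} (hM : IsMul S i M)
    {w : EuclideanSpace ℂ (Fin N)} (hw : w ∈ Ball N) :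
    M (S.Lv w) = S.jet 1 w (EuclideanSpace.single i 1) := by
  refine S.eval_injective _ _ fun z hz => ?_
  rw [hM _ z hz, S.eval_D_eq _ hw hz, EuclideanSpace.inner_single_left, map_one, one_mul]

lemma comm_Lv {i j : Fin N} {Mi Mj : S.H →L[ℂ] S.H} (hi : IsMul S i Mi) (hj : IsMul S j Mj)
    {w : EuclideanSpace ℂ (Fin N)} (hw : w ∈ Ball N) :
    (star Mj * Mi - Mi * star Mj) (S.Lv w)
      = ((starRingEnd ℂ) ((EuclideanSpace.single i (1 : ℂ) : EuclideanSpace ℂ (Fin N)) j) •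
        (1 : S.H →L[ℂ] S.H) - Mi * star Mj) (S.kernel w) := by
  have e1 : star Mj (S.Lv w) = (starRingEnd ℂ) (w j) • S.Lv w
      + (starRingEnd ℂ) (w j) • S.kernel w := by
    rw [Lv, map_add, map_smul, hj.star_D w hw, hj.star_kernel hw]
    module
  simp only [sub_apply, mul_apply_eq_comp, smul_apply, one_apply_eq_self]
  rw [hi.apply_Lv hw, hj.star_D _ hw, e1, hj.star_kernel hw]
  simp only [map_add, map_smul]
  rw [hi.apply_Lv hw]
  module

variable (S) in
/-- the homogeneous polynomials of degree `n` -/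
def Vn (n : ℕ) : Submodule ℂ S.H := Submodule.span ℂ (S.jet n 0 '' Ball N)

variable (S) in
/-- evaluation on the ball, as a linear map -/
def evalB : S.H →ₗ[ℂ] (Ball N → ℂ) where
  toFun u := fun z => S.eval u z
  map_add' u v := by funext z; exact S.eval_add u v z
  map_smul' c u := by funext z; exact S.eval_smul c u z

lemma evalB_inj : Function.Injective (evalB S) := fun u v huv =>
  S.eval_injective _ _ fun z hz => congrFun huv ⟨z, hz⟩

lemma Vn_fin (n : ℕ) : FiniteDimensional ℂ (Vn S n) := by
  let W : Submodule ℂ (Ball N → ℂ) :=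
    (Submodule.span ℂ (range fun i : Fin N => fun z : Ball N => (z : EuclideanSpace ℂ (Fin N)) i)) ^ n
  have hW : W.FG := Submodule.FG.pow (Submodule.fg_span (finite_range _)) n
  have hWf : FiniteDimensional ℂ W := Module.Finite.iff_fg.2 hW
  have hle : Vn S n ≤ W.comap (evalB S) := by
    rw [Vn, Submodule.span_le]
    rintro _ ⟨w, hw, rfl⟩
    rw [SetLike.mem_coe, Submodule.mem_comap]
    let g : Ball N → ℂ := fun z => ⟪w, (z : EuclideanSpace ℂ (Fin N))⟫
    have e : evalB S (S.jet n 0 w) = jc t n • g ^ n := by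
      funext z
      exact S.eval_jet_zero n w z.2
    rw [e]
    refine Submodule.smul_mem _ _ (Submodule.pow_mem_pow _ ?_ n)
    have e2 : g = ∑ i, (starRingEnd ℂ) (w i) • fun z : Ball N => (z : EuclideanSpace ℂ (Fin N)) i := by
      funext z
      simp [g, PiLp.inner_apply, mul_comm]
    rw [e2]
    exact Submodule.sum_mem _ fun i _ => Submodule.smul_mem _ _ (Submodule.subset_span ⟨i, rfl⟩)
  let f : Vn S n →ₗ[ℂ] W := (evalB S).restrict hle
  refine FiniteDimensional.of_injective f ?_
  intro a b hab
  have := congrArg (Subtype.val) hab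
  exact Subtype.ext (evalB_inj this)

lemma jet_orth {n m : ℕ} (hnm : n ≠ m) {w w' : EuclideanSpace ℂ (Fin N)} (hw : w ∈ Ball N) :
    ⟪S.jet n 0 w, S.jet m 0 w'⟫ = 0 := by
  rw [S.jet_inner n w (by simp)]
  have e : (fun l : ℂ => S.eval (S.jet m 0 w') (0 + l • w)) =ᶠ[𝓝 0]
      fun l => (jc t m * ⟪w', w⟫ ^ m) * l ^ m := by
    filter_upwards [ball_mem_nhds (0 : ℂ) one_pos] with l hl
    rw [zero_add, S.eval_jet_zero m w' (smul_mem_Ball hw (mem_ball_zero_iff.1 hl).le),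
      inner_smul_right]
    ring
  rw [e.iteratedDeriv_eq, iteratedDeriv_const_mul_field, iteratedDeriv_fun_pow_zero, if_neg hnm,
    Nat.cast_zero, mul_zero]

lemma Vn_orth (n m : ℕ) (hnm : n ≠ m) : ∀ x ∈ Vn S n, ∀ y ∈ Vn S m, ⟪x, y⟫ = 0 := by
  have : Vn S n ⟂ Vn S m := by
    rw [Vn, Vn, Submodule.isOrtho_span]
    rintro _ ⟨w, hw, rfl⟩ _ ⟨w', hw', rfl⟩
    exact jet_orth hnm hw
  intro x hx y hy
  exact this.inner_eq hx hy

lemma Vn_dense : Dense ((⨆ n, Vn S n : Submodule ℂ S.H) : Set S.H) := by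
  rw [Submodule.dense_iff_topologicalClosure_eq_top, Submodule.topologicalClosure_eq_top_iff,
    Submodule.eq_bot_iff]
  intro u hu
  refine S.eq_zero_of_jets u fun n w hw => (Submodule.mem_orthogonal _ _).1 hu _ ?_
  exact (le_iSup (Vn S) n) (Submodule.subset_span ⟨w, hw, rfl⟩)

lemma comm_compact (ht : 0 < t) {i j : Fin N} {Mi Mj : S.H →L[ℂ] S.H} (hi : IsMul S i Mi)
    (hj : IsMul S j Mj) : star Mj * Mi - Mi * star Mj ∈ cptSub S.H := by
  set A := star Mj * Mi - Mi * star Mj with hA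
  set B := (starRingEnd ℂ) ((EuclideanSpace.single i (1 : ℂ) : EuclideanSpace ℂ (Fin N)) j) •
        (1 : S.H →L[ℂ] S.H) - Mi * star Mj with hB
  have hAB : ∀ w ∈ Ball N, A (S.Lv w) = B (S.kernel w) := fun w hw => comm_Lv hi hj hw
  refine compact_of_graded (Vn S) Vn_fin Vn_orth Vn_dense A B (fun n => ((n + t : ℝ) : ℂ)⁻¹) ?_ ?_
  · rw [tendsto_zero_iff_norm_tendsto_zero]
    have h1 : Tendsto (fun n : ℕ => (n : ℝ) + t) atTop atTop :=
      tendsto_atTop_add_const_right _ _ tendsto_natCast_atTop_atTop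
    have h2 := h1.inv_tendsto_atTop.norm
    rw [norm_zero] at h2
    refine h2.congr fun n => ?_
    rw [norm_inv, Complex.norm_real, Pi.inv_apply, norm_inv]
  · intro n x hx
    have hne : ((n + t : ℝ) : ℂ) ≠ 0 := by
      have : (0 : ℝ) < n + t := by positivity
      exact_mod_cast this.ne'
    have hle : Vn S n ≤ LinearMap.ker
        ((A - ((n + t : ℝ) : ℂ)⁻¹ • B : S.H →L[ℂ] S.H) : S.H →ₗ[ℂ] S.H) := by
      rw [Vn, Submodule.span_le]
      rintro _ ⟨w, hw, rfl⟩
      rw [SetLike.mem_coe, LinearMap.mem_ker, ContinuousLinearMap.coe_coe, sub_apply, smul_apply,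
        sub_eq_zero]
      refine ext_inner_right ℂ fun v => ?_
      have h1 := S.jet_coeff (star A v) (star B v) (by
        intro w hw
        rw [inner_star, hAB w hw, ← inner_star, S.reproducing _ w hw]) n hw
      rw [inner_star, inner_star] at h1
      rw [inner_smul_left, map_inv₀, Complex.conj_ofReal, ← h1, eq_inv_mul_iff_mul_eq₀ hne]
      push_cast
      rfl
    have := hle hx
    rwa [LinearMap.mem_ker, ContinuousLinearMap.coe_coe, sub_apply, smul_apply,
        sub_eq_zero] at this

end comm
end BallFunctionSpace

section sw
variable {N : ℕ} {K : Set (EuclideanSpace ℂ (Fin N))}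

/-- an induction principle for continuous functions on a compact set -/
lemma cont_induction (hK : IsCompact K) (P : (EuclideanSpace ℂ (Fin N) → ℂ) → Prop)
    (hconst : ∀ a, P fun _ => a)
    (hadd : ∀ b c, ContinuousOn b K → ContinuousOn c K → P b → P c → P fun z => b z + c z)
    (hmul : ∀ b, ∀ j : Fin N, ContinuousOn b K → P b → P fun z => b z * z j)
    (hmulstar : ∀ b, ∀ j : Fin N, ContinuousOn b K → P b →
      P fun z => b z * (starRingEnd ℂ) (z j))
    (hclosed : ∀ b, ContinuousOn b K →
      (∀ ε : ℝ, 0 < ε → ∃ c, ContinuousOn c K ∧ P c ∧ ∀ z ∈ K, ‖b z - c z‖ ≤ ε) → P b)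
    (b : EuclideanSpace ℂ (Fin N) → ℂ) (hb : ContinuousOn b K) : P b := by
  have : CompactSpace K := isCompact_iff_compactSpace.1 hK
  let x : Fin N → C(K, ℂ) := fun j => ⟨fun z => (z : EuclideanSpace ℂ (Fin N)) j, by fun_prop⟩
  let R : C(K, ℂ) → Prop := fun h => ∃ b : EuclideanSpace ℂ (Fin N) → ℂ, ContinuousOn b K ∧
    (∀ z : K, b z = h z) ∧ ∀ a : ℂ, P fun z => a * b z
  have Rmul : ∀ h j, R h → R (h * x j) := by
    rintro h j ⟨b, h1, h2, h3⟩
    refine ⟨fun z => b z * z j, h1.mul (by fun_prop), fun z => by simp [h2 z, x], fun a => ?_⟩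
    have := hmul (fun z => a * b z) j (continuousOn_const.mul h1) (h3 a)
    simpa only [mul_assoc] using this
  have Rmulstar : ∀ h j, R h → R (h * star (x j)) := by
    rintro h j ⟨b, h1, h2, h3⟩
    refine ⟨fun z => b z * (starRingEnd ℂ) (z j), h1.mul (by
      exact (Complex.continuous_conj.comp (by fun_prop)).continuousOn), fun z => by
        simp [h2 z, x], fun a => ?_⟩
    have := hmulstar (fun z => a * b z) j (continuousOn_const.mul h1) (h3 a)
    simpa only [mul_assoc] using this
  have Radj : ∀ h ∈ StarAlgebra.adjoin ℂ (range x), R h := by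
    intro h hh
    have hh' : h ∈ Algebra.adjoin ℂ (range x ∪ star (range x)) := hh
    rw [← Subalgebra.mem_toSubmodule, Algebra.adjoin_eq_span] at hh'
    clear hh
    induction hh' using Submodule.span_induction with
    | mem h hh =>
      induction hh using Submonoid.closure_induction_right with
      | one => exact ⟨fun _ => 1, continuousOn_const, fun z => rfl, fun a => by simpa using hconst a⟩
      | mul_right h _ y hy ih =>
        rcases hy with ⟨j, rfl⟩ | hy
        · exact Rmul _ _ ih
        · obtain ⟨j, hj⟩ := hy
          have : y = star (x j) := by rw [hj, star_star]
          rw [this]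
          exact Rmulstar _ _ ih
    | zero => exact ⟨fun _ => 0, continuousOn_const, fun z => rfl, fun a => by simpa using hconst 0⟩
    | add f g _ _ hf hg =>
      obtain ⟨b, h1, h2, h3⟩ := hf
      obtain ⟨c, h1', h2', h3'⟩ := hg
      refine ⟨fun z => b z + c z, h1.add h1', fun z => by simp [h2, h2'], fun a => ?_⟩
      have := hadd (fun z => a * b z) (fun z => a * c z) (continuousOn_const.mul h1) (continuousOn_const.mul h1') (h3 a) (h3' a)
      simpa only [mul_add] using this
    | smul a f _ hf =>
      obtain ⟨b, h1, h2, h3⟩ := hf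
      refine ⟨fun z => a * b z, continuousOn_const.mul h1, fun z => by simp [h2], fun a' => ?_⟩
      simpa only [mul_assoc] using h3 (a' * a)
  have htop := ContinuousMap.starSubalgebra_topologicalClosure_eq_top_of_separatesPoints
    (StarAlgebra.adjoin ℂ (range x)) (by
      intro p q hpq
      by_contra hcon
      apply hpq
      ext j
      by_contra hj
      exact hcon ⟨x j, ⟨x j, StarAlgebra.subset_adjoin ℂ _ ⟨j, rfl⟩, rfl⟩, hj⟩)
  refine hclosed b hb fun ε hε => ?_
  let f : C(K, ℂ) := ⟨fun z => b z, continuousOn_iff_continuous_domRestrict.1 hb⟩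
  have hf : f ∈ (StarAlgebra.adjoin ℂ (range x)).topologicalClosure := by rw [htop]; trivial
  obtain ⟨g, hg, hfg⟩ := Metric.mem_closure_iff.1 hf ε hε
  obtain ⟨c, h1, h2, h3⟩ := Radj g hg
  refine ⟨c, h1, by simpa using h3 1, fun z hz => ?_⟩
  have := (ContinuousMap.dist_apply_le_dist (f := f) (g := g) ⟨z, hz⟩).trans hfg.le
  rw [dist_eq_norm, ← h2] at this
  exact this
end sw

namespace BallFunctionSpace
section toep
variable {N : ℕ} {t : ℝ} {μ : Measure (EuclideanSpace ℂ (Fin N))} {S : BallFunctionSpace N t μ}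
  {K : Set (EuclideanSpace ℂ (Fin N))}

lemma mul_cont {b g : EuclideanSpace ℂ (Fin N) → ℂ} (hb : ContinuousOn b K)
    (hg : ContinuousOn g K) : ContinuousOn (fun z => b z * g z) K := hb.mul hg

lemma toeplitz_limit (h : Adm μ K) {b : EuclideanSpace ℂ (Fin N) → ℂ} (hb : ContinuousOn b K)
    (happ : ∀ ε : ℝ, 0 < ε → ∃ c, ContinuousOn c K ∧ (∃ T, S.IsToeplitzOperator c T) ∧
      ∀ z ∈ K, ‖b z - c z‖ ≤ ε) : ∃ T, S.IsToeplitzOperator b T := by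
  have hpos : ∀ n : ℕ, (0 : ℝ) < 1 / (n + 1 : ℝ) := fun n => Nat.one_div_pos_of_nat
  choose c hc hT hbc using fun n : ℕ => happ (1 / (n + 1 : ℝ)) (hpos n)
  choose T hT using hT
  have hd : ∀ m n, dist (T m) (T n) ≤ 1 / (m + 1 : ℝ) + 1 / (n + 1 : ℝ) := by
    intro m n
    rw [dist_eq_norm]
    refine toeplitz_norm_le h (add_pos (hpos m) (hpos n)).le ?_
      (toeplitz_sub h (hc m) (hc n) (hT m) (hT n))
    intro z hz
    have e : c m z - c n z = (b z - c n z) - (b z - c m z) := by ring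
    rw [e]
    refine (norm_sub_le _ _).trans ?_
    linarith [hbc m z hz, hbc n z hz]
  have hlim : Tendsto (fun n : ℕ => 1 / (n + 1 : ℝ)) atTop (𝓝 0) :=
    tendsto_one_div_add_atTop_nhds_zero_nat
  have hcau : CauchySeq T := by
    rw [Metric.cauchySeq_iff]
    intro ε hε
    obtain ⟨n₀, hn⟩ := eventually_atTop.1 (hlim.eventually_lt_const (half_pos hε))
    refine ⟨n₀, fun m hm n hn' => (hd m n).trans_lt ?_⟩
    linarith [hn m hm, hn n hn']
  obtain ⟨T₀, hT₀⟩ := cauchySeq_tendsto_of_complete hcau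
  refine ⟨T₀, ?_⟩
  rw [toeplitz_iff]
  intro u v
  rw [Metric.tendsto_nhds]
  intro ε hε
  set q := (‖u‖ ^ 2 + ‖v‖ ^ 2) / 2 + 1
  have hq : 0 < q := by positivity
  have h1 : Tendsto (fun n => ⟪v, T n u⟫) atTop (𝓝 ⟪v, T₀ u⟫) :=
    tendsto_const_nhds.inner ((ContinuousLinearMap.apply ℂ S.H u).continuous.tendsto _ |>.comp hT₀)
  obtain ⟨n, hn1, hn2⟩ := ((Metric.tendsto_nhds.1 h1 (ε / 3) (by positivity)).and
    (hlim.eventually_lt_const (show 0 < ε / 3 / q by positivity))).exists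
  have hqq : Tendsto (fun r => (S.Q u r + S.Q v r) / 2) (𝓝[<] 1) (𝓝 ((‖u‖ ^ 2 + ‖v‖ ^ 2) / 2)) :=
    ((S.tendsto_Q u).add (S.tendsto_Q v)).div_const 2
  filter_upwards [Ioo_ev, Metric.tendsto_nhds.1 (S.toeplitz_iff.1 (hT n) u v) (ε / 3)
    (by positivity), hqq.eventually_lt_const (lt_add_one _)] with r hr h2 h3
  have h4 := S.I_bound h hr (hbc n) u v
  rw [S.I_sub h hr hb (hc n)] at h4
  have h5 : dist (S.I b u v r) (S.I (c n) u v r) < ε / 3 := by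
    rw [dist_eq_norm]
    refine h4.trans_lt ?_
    calc 1 / (n + 1 : ℝ) * ((S.Q u r + S.Q v r) / 2) ≤ 1 / (n + 1 : ℝ) * q :=
          mul_le_mul_of_nonneg_left h3.le (hpos n).le
      _ < ε / 3 / q * q := mul_lt_mul_of_pos_right hn2 hq
      _ = ε / 3 := div_mul_cancel₀ _ hq.ne'
  have := dist_triangle4 (S.I b u v r) (S.I (c n) u v r) ⟪v, T n u⟫ ⟪v, T₀ u⟫
  linarith

lemma exists_toeplitz (h : Adm μ K) (ht : 0 < t) (b : EuclideanSpace ℂ (Fin N) → ℂ)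
    (hb : ContinuousOn b K) : ∃ T, S.IsToeplitzOperator b T := by
  refine cont_induction h.cpt (fun b => ∃ T, S.IsToeplitzOperator b T) ?_ ?_ ?_ ?_ ?_ b hb
  · exact fun a => ⟨_, toeplitz_const a⟩
  · rintro b c hb hc ⟨T, hT⟩ ⟨U, hU⟩
    exact ⟨_, toeplitz_add h hb hc hT hU⟩
  · rintro b j hb ⟨T, hT⟩
    obtain ⟨M, hM⟩ := exists_mul (S := S) h ht j
    exact ⟨_, toeplitz_mul h hb hM hT⟩
  · rintro b j hb ⟨T, hT⟩
    obtain ⟨M, hM⟩ := exists_mul (S := S) h ht j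
    exact ⟨_, toeplitz_star_mul h hb hM hT⟩
  · exact fun b hb happ => toeplitz_limit h hb happ

variable (S) in
/-- the Toeplitz operator -/
def TT (b : EuclideanSpace ℂ (Fin N) → ℂ) : S.H →L[ℂ] S.H :=
  open Classical in if hb : ∃ T, S.IsToeplitzOperator b T then hb.choose else 0

lemma TT_spec (h : Adm μ K) (ht : 0 < t) {b : EuclideanSpace ℂ (Fin N) → ℂ}
    (hb : ContinuousOn b K) : S.IsToeplitzOperator b (S.TT b) := by
  have hex := exists_toeplitz (S := S) h ht b hb
  rw [TT, dif_pos hex]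
  exact hex.choose_spec

lemma TT_eq {b : EuclideanSpace ℂ (Fin N) → ℂ} {T : S.H →L[ℂ] S.H}
    (hT : S.IsToeplitzOperator b T) : S.TT b = T := by
  have hex : ∃ T, S.IsToeplitzOperator b T := ⟨T, hT⟩
  rw [TT, dif_pos hex]
  exact toeplitz_unique hex.choose_spec hT

lemma TT_const (a : ℂ) : S.TT (fun _ => a) = a • (1 : S.H →L[ℂ] S.H) := TT_eq (toeplitz_const a)

lemma TT_add (h : Adm μ K) (ht : 0 < t) {b c : EuclideanSpace ℂ (Fin N) → ℂ}
    (hb : ContinuousOn b K) (hc : ContinuousOn c K) :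
    S.TT (fun z => b z + c z) = S.TT b + S.TT c :=
  TT_eq (toeplitz_add h hb hc (TT_spec h ht hb) (TT_spec h ht hc))

lemma TT_sub (h : Adm μ K) (ht : 0 < t) {b c : EuclideanSpace ℂ (Fin N) → ℂ}
    (hb : ContinuousOn b K) (hc : ContinuousOn c K) :
    S.TT (fun z => b z - c z) = S.TT b - S.TT c :=
  TT_eq (toeplitz_sub h hb hc (TT_spec h ht hb) (TT_spec h ht hc))

lemma TT_mul (h : Adm μ K) (ht : 0 < t) {b : EuclideanSpace ℂ (Fin N) → ℂ}
    (hb : ContinuousOn b K) {j : Fin N} {M : S.H →L[ℂ] S.H} (hM : IsMul S j M) :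
    S.TT (fun z => b z * z j) = S.TT b * M := TT_eq (toeplitz_mul h hb hM (TT_spec h ht hb))

lemma TT_mulstar (h : Adm μ K) (ht : 0 < t) {b : EuclideanSpace ℂ (Fin N) → ℂ}
    (hb : ContinuousOn b K) {j : Fin N} {M : S.H →L[ℂ] S.H} (hM : IsMul S j M) :
    S.TT (fun z => b z * (starRingEnd ℂ) (z j)) = star M * S.TT b :=
  TT_eq (toeplitz_star_mul h hb hM (TT_spec h ht hb))

lemma TT_star (h : Adm μ K) (ht : 0 < t) {b : EuclideanSpace ℂ (Fin N) → ℂ}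
    (hb : ContinuousOn b K) : S.TT (fun z => (starRingEnd ℂ) (b z)) = star (S.TT b) :=
  TT_eq (toeplitz_star (TT_spec h ht hb))

lemma TT_dist (h : Adm μ K) (ht : 0 < t) {b c : EuclideanSpace ℂ (Fin N) → ℂ}
    (hb : ContinuousOn b K) (hc : ContinuousOn c K) {ε : ℝ} (hε : 0 ≤ ε)
    (hbc : ∀ z ∈ K, ‖b z - c z‖ ≤ ε) : ‖S.TT b - S.TT c‖ ≤ ε := by
  rw [← TT_sub h ht hb hc]
  exact toeplitz_norm_le h hε hbc (TT_spec h ht (hb.sub hc))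

lemma cpt_closed {H : Type*} [NormedAddCommGroup H] [InnerProductSpace ℂ H] [CompleteSpace H]
    {A : H →L[ℂ] H} (C : ℝ) (hC : 0 ≤ C)
    (hA : ∀ ε : ℝ, 0 < ε → ∃ B ∈ cptSub H, ‖A - B‖ ≤ C * ε) : A ∈ cptSub H := by
  have hcl : IsClosed (cptSub H : Set (H →L[ℂ] H)) := cptSub_closed
  rw [← SetLike.mem_coe, ← hcl.closure_eq, Metric.mem_closure_iff]
  intro ε hε
  obtain ⟨B, hB, hAB⟩ := hA (ε / (C + 1)) (by positivity)
  refine ⟨B, hB, ?_⟩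
  rw [dist_eq_norm]
  refine hAB.trans_lt ?_
  rw [← mul_div_assoc, div_lt_iff₀ (by positivity)]
  nlinarith

lemma TT_comm (h : Adm μ K) (ht : 0 < t) {j : Fin N} {M : S.H →L[ℂ] S.H} (hM : IsMul S j M)
    (b : EuclideanSpace ℂ (Fin N) → ℂ) (hb : ContinuousOn b K) :
    S.TT b * M - M * S.TT b ∈ cptSub S.H := by
  refine cont_induction h.cpt (fun b => S.TT b * M - M * S.TT b ∈ cptSub S.H) ?_ ?_ ?_ ?_ ?_ b hb
  · intro a
    simp [TT_const]
  · intro b c hb hc h1 h2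
    rw [TT_add h ht hb hc]
    convert add_mem h1 h2 using 1
    noncomm_ring
  · intro b i hb h1
    obtain ⟨Mi, hMi⟩ := exists_mul (S := S) h ht i
    rw [TT_mul h ht hb hMi]
    convert cptSub_mul_right Mi h1 using 1
    rw [mul_assoc, IsMul.comm hMi hM]
    noncomm_ring
  · intro b i hb h1
    obtain ⟨Mi, hMi⟩ := exists_mul (S := S) h ht i
    rw [TT_mulstar h ht hb hMi]
    convert add_mem (cptSub_mul_left (star Mi) h1)
      (cptSub_mul_right (S.TT b) (comm_compact ht hM hMi)) using 1
    noncomm_ring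
  · intro b hb happ
    refine cpt_closed (2 * ‖M‖) (by positivity) fun ε hε => ?_
    obtain ⟨c, hc, h1, h2⟩ := happ ε hε
    refine ⟨_, h1, ?_⟩
    have h3 := TT_dist (S := S) h ht hb hc hε.le h2
    have e : S.TT b * M - M * S.TT b - (S.TT c * M - M * S.TT c)
        = (S.TT b - S.TT c) * M - M * (S.TT b - S.TT c) := by noncomm_ring
    rw [e]
    refine (norm_sub_le _ _).trans ?_
    have h4 := norm_mul_le (S.TT b - S.TT c) M
    have h5 := norm_mul_le M (S.TT b - S.TT c)
    nlinarith [norm_nonneg M]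

lemma TT_mult (h : Adm μ K) (ht : 0 < t) {g : EuclideanSpace ℂ (Fin N) → ℂ}
    (hg : ContinuousOn g K) (b : EuclideanSpace ℂ (Fin N) → ℂ) (hb : ContinuousOn b K) :
    S.TT (fun z => b z * g z) - S.TT b * S.TT g ∈ cptSub S.H := by
  refine cont_induction h.cpt
    (fun b => S.TT (fun z => b z * g z) - S.TT b * S.TT g ∈ cptSub S.H) ?_ ?_ ?_ ?_ ?_ b hb
  · intro a
    have e : S.TT (fun z => a * g z) = a • S.TT g := by
      refine TT_eq fun u v => ?_
      have := (TT_spec (S := S) h ht hg u v).const_mul a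
      rw [smul_apply, inner_smul_right]
      refine this.congr fun r => ?_
      rw [← integral_const_mul]
      congr 1; funext z; ring
    simp [TT_const, e]
  · intro b c hb hc h1 h2
    simp only [add_mul]
    rw [TT_add h ht hb hc, TT_add h ht (mul_cont hb hg) (mul_cont hc hg)]
    convert add_mem h1 h2 using 1
    noncomm_ring
  · intro b i hb h1
    obtain ⟨Mi, hMi⟩ := exists_mul (S := S) h ht i
    have e : (fun z : EuclideanSpace ℂ (Fin N) => b z * z i * g z) = fun z => (b z * g z) * z i := by
      funext z; ring
    rw [e, TT_mul h ht (mul_cont hb hg) hMi, TT_mul h ht hb hMi]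
    convert add_mem (cptSub_mul_right Mi h1)
      (cptSub_mul_left (S.TT b) (TT_comm h ht hMi g hg)) using 1
    noncomm_ring
  · intro b i hb h1
    obtain ⟨Mi, hMi⟩ := exists_mul (S := S) h ht i
    have e : (fun z : EuclideanSpace ℂ (Fin N) => b z * (starRingEnd ℂ) (z i) * g z)
        = fun z => (b z * g z) * (starRingEnd ℂ) (z i) := by
      funext z; ring
    rw [e, TT_mulstar h ht (mul_cont hb hg) hMi, TT_mulstar h ht hb hMi]
    convert cptSub_mul_left (star Mi) h1 using 1
    noncomm_ring
  · intro b hb happ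
    obtain ⟨C, hC⟩ := h.cpt.exists_bound_of_continuousOn hg
    refine cpt_closed (|C| + ‖S.TT g‖) (by positivity) fun ε hε => ?_
    obtain ⟨c, hc, h1, h2⟩ := happ ε hε
    refine ⟨_, h1, ?_⟩
    have h3 := TT_dist (S := S) h ht hb hc hε.le h2
    have h3' := TT_dist (S := S) h ht (mul_cont hb hg) (mul_cont hc hg) (ε := ε * |C|) (by positivity) (by
      intro z hz
      rw [← sub_mul, norm_mul]
      exact mul_le_mul (h2 z hz) ((hC z hz).trans (le_abs_self C)) (norm_nonneg _) hε.le)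
    have e : S.TT (fun z => b z * g z) - S.TT b * S.TT g
        - (S.TT (fun z => c z * g z) - S.TT c * S.TT g)
        = (S.TT (fun z => b z * g z) - S.TT (fun z => c z * g z))
          - (S.TT b - S.TT c) * S.TT g := by noncomm_ring
    rw [e]
    refine (norm_sub_le _ _).trans ?_
    have h4 := norm_mul_le (S.TT b - S.TT c) (S.TT g)
    nlinarith [norm_nonneg (S.TT g)]

end toep
end BallFunctionSpace

namespace BallFunctionSpace
section main
variable {N : ℕ} {t : ℝ} {μ : Measure (EuclideanSpace ℂ (Fin N))} {S : BallFunctionSpace N t μ}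
  {K : Set (EuclideanSpace ℂ (Fin N))}

lemma phi_comm (h : Adm μ K) (ht : 0 < t)
    {φ : EuclideanSpace ℂ (Fin N) → EuclideanSpace ℂ (Fin N)}
    (hφc : ContinuousOn φ (closedBall 0 1)) (hφB : MapsTo φ (Ball N) (Ball N))
    {C : S.H →L[ℂ] S.H} (hC : S.IsCompositionOperator φ C) {j : Fin N} {M : S.H →L[ℂ] S.H}
    (hM : IsMul S j M) : C * M = S.TT (fun z => φ z j) * C := by
  have hj : ContinuousOn (fun z => φ z j) (closedBall 0 1) :=
    (by fun_prop : Continuous fun z : EuclideanSpace ℂ (Fin N) => z j).comp_continuousOn hφc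
  ext u
  refine ext_inner_left ℂ fun v => ?_
  simp only [mul_apply_eq_comp]
  have h1 := TT_spec (S := S) h ht (hj.mono h.sub) (C u) v
  refine tendsto_nhds_unique ?_ h1
  refine S.tendsto_replace h (b := fun r z => φ (r • z) j) ?_ (hj.mono h.sub) ?_ ?_
  · intro r hr
    exact hj.comp (by fun_prop) fun z hz => ball_subset_closedBall (h.smul_mem hr hz)
  · intro ε hε
    have huc := (isCompact_closedBall (0 : EuclideanSpace ℂ (Fin N)) 1
      ).uniformContinuousOn_of_continuous hj
    obtain ⟨δ, hδ, hd⟩ := Metric.uniformContinuousOn_iff_le.1 huc ε hε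
    filter_upwards [Ioo_ev, Ioo_mem_nhdsLT (show 1 - δ < 1 by linarith)] with r hr hr2 z hz
    have := hd z (h.sub hz) (r • z) (ball_subset_closedBall (h.smul_mem hr hz)) (by
      have e : z - r • z = (1 - r) • z := by rw [sub_smul, one_smul]
      rw [dist_eq_norm, e, norm_smul, Real.norm_of_nonneg (by linarith [hr.2])]
      have h3 := mem_closedBall_zero_iff.1 (h.sub hz)
      nlinarith [hr.2, hr2.1, norm_nonneg z])
    rwa [dist_eq_norm] at this
  · refine (S.inner_eq v (C (M u))).congr' ?_
    filter_upwards [Ioo_ev] with r hr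
    refine integral_congr_ae ?_
    filter_upwards [h.ae] with z hz
    have hz' := h.smul_mem hr hz
    rw [hC _ _ hz', hM _ _ (hφB hz'), hC _ _ hz']
    ring

lemma main_abstract (h : Adm μ K) (ht : 0 < t)
    {φ : EuclideanSpace ℂ (Fin N) → EuclideanSpace ℂ (Fin N)}
    (hφc : ContinuousOn φ (closedBall 0 1)) (hφB : MapsTo φ (Ball N) (Ball N))
    (hφK : MapsTo φ K K)
    {C : S.H →L[ℂ] S.H} (hC : S.IsCompositionOperator φ C)
    (b : EuclideanSpace ℂ (Fin N) → ℂ) (hb : ContinuousOn b K) :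
    C * S.TT b - S.TT (fun z => b (φ z)) * C ∈ cptSub S.H := by
  have hφcK : ContinuousOn φ K := hφc.mono h.sub
  have hcomp : ∀ b : EuclideanSpace ℂ (Fin N) → ℂ, ContinuousOn b K →
      ContinuousOn (fun z => b (φ z)) K := fun b hb => hb.comp hφcK hφK
  have hjK : ∀ j, ContinuousOn (fun z => φ z j) K := fun j =>
    (by fun_prop : Continuous fun z : EuclideanSpace ℂ (Fin N) => z j).comp_continuousOn hφcK
  have hconj : ∀ b : EuclideanSpace ℂ (Fin N) → ℂ, ContinuousOn b K →
      ContinuousOn (fun z => (starRingEnd ℂ) (b z)) K := fun b hb =>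
    Complex.continuous_conj.comp_continuousOn hb
  have hfug : ∀ j M, IsMul S j M →
      C * star M - star (S.TT fun z => φ z j) * C ∈ cptSub S.H := by
    intro j M hM
    refine fuglede_compact M (S.TT fun z => φ z j) C ?_ ?_ (phi_comm h ht hφc hφB hC hM)
    · have := neg_mem (comm_compact ht hM hM)
      convert this using 1
      noncomm_ring
    · rw [← TT_star h ht (hjK j)]
      have h1 := TT_mult (S := S) h ht (hconj _ (hjK j)) _ (hjK j)
      have h2 := TT_mult (S := S) h ht (hjK j) _ (hconj _ (hjK j))
      have e : (fun z => (starRingEnd ℂ) (φ z j) * φ z j)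
          = fun z => φ z j * (starRingEnd ℂ) (φ z j) := by funext z; ring
      rw [e] at h2
      convert sub_mem h2 h1 using 1
      noncomm_ring
  refine cont_induction h.cpt
    (fun b => C * S.TT b - S.TT (fun z => b (φ z)) * C ∈ cptSub S.H) ?_ ?_ ?_ ?_ ?_ b hb
  · intro a
    simp [TT_const]
  · intro b c hb hc h1 h2
    rw [TT_add h ht hb hc, TT_add h ht (hcomp b hb) (hcomp c hc)]
    convert add_mem h1 h2 using 1
    noncomm_ring
  · intro b j hb h1
    obtain ⟨M, hM⟩ := exists_mul (S := S) h ht j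
    have hMC := phi_comm h ht hφc hφB hC hM
    have h2 := TT_mult (S := S) h ht (hjK j) _ (hcomp b hb)
    rw [TT_mul h ht hb hM]
    convert sub_mem (cptSub_mul_right M h1) (cptSub_mul_right C h2) using 1
    have e : S.TT (fun z => b (φ z)) * C * M
        = S.TT (fun z => b (φ z)) * S.TT (fun z => φ z j) * C := by
      rw [mul_assoc, hMC, mul_assoc]
    rw [sub_mul, sub_mul, e]
    noncomm_ring
  · intro b j hb h1
    obtain ⟨M, hM⟩ := exists_mul (S := S) h ht j
    have hF := hfug j M hM
    rw [← TT_star h ht (hjK j)] at hF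
    have h2 := TT_mult (S := S) h ht (hconj _ (hjK j)) _ (hcomp b hb)
    have hz : ContinuousOn (fun z : EuclideanSpace ℂ (Fin N) => (starRingEnd ℂ) (z j)) K :=
      hconj _ (by fun_prop)
    have hMs : S.TT (fun z => (starRingEnd ℂ) (z j)) = star M := by
      have := TT_mulstar (S := S) h ht (b := fun _ => 1) continuousOn_const hM
      simpa [TT_const] using this
    have h3 := TT_mult (S := S) h ht hz b hb
    rw [hMs] at h3
    have key := add_mem (sub_mem (add_mem (cptSub_mul_left C h3) (cptSub_mul_right (star M) h1))
      (cptSub_mul_right C h2)) (cptSub_mul_left (S.TT fun z => b (φ z)) hF)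
    convert key using 1
    noncomm_ring
  · intro b hb happ
    refine cpt_closed (2 * ‖C‖) (by positivity) fun ε hε => ?_
    obtain ⟨c, hc, h1, h2⟩ := happ ε hε
    refine ⟨_, h1, ?_⟩
    have h3 := TT_dist (S := S) h ht hb hc hε.le h2
    have h3' := TT_dist (S := S) h ht (hcomp b hb) (hcomp c hc) hε.le fun z hz => h2 _ (hφK hz)
    have e : C * S.TT b - S.TT (fun z => b (φ z)) * C - (C * S.TT c - S.TT (fun z => c (φ z)) * C)
        = C * (S.TT b - S.TT c)
          - (S.TT (fun z => b (φ z)) - S.TT (fun z => c (φ z))) * C := by noncomm_ring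
    rw [e]
    refine (norm_sub_le _ _).trans ?_
    have h4 := norm_mul_le C (S.TT b - S.TT c)
    have h5 := norm_mul_le (S.TT (fun z => b (φ z)) - S.TT (fun z => c (φ z))) C
    nlinarith [norm_nonneg C]

lemma adm_of (S : BallFunctionSpace N t μ) (hK : IsCompact K) (hK1 : K ⊆ closedBall 0 1)
    (hμ : μ Kᶜ = 0) : Adm μ K := by
  refine ⟨?_, hK, hK1, hμ⟩
  have h0 : (0 : EuclideanSpace ℂ (Fin N)) ∈ Ball N := by simp
  have hk : ∀ z ∈ Ball N, S.eval (S.kernel 0) z = 1 := by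
    intro z hz
    rw [S.eval_kernel 0 h0 z hz]
    simp
  have h1 := S.inner_eq (S.kernel 0) (S.kernel 0)
  rw [S.reproducing _ 0 h0, hk 0 h0] at h1
  by_contra hfin
  have htop : μ univ = ⊤ := by
    by_contra hne
    exact hfin ⟨lt_top_iff_ne_top.2 hne⟩
  have h2 : Tendsto (fun _ : ℝ => (0 : ℂ)) (𝓝[<] (1 : ℝ)) (𝓝 1) := by
    refine h1.congr' ?_
    filter_upwards [Ioo_ev] with r hr
    have hae : ∀ᵐ z ∂μ, z ∈ K := hμ
    have : ∫ z, (starRingEnd ℂ) (S.eval (S.kernel 0) (r • z)) * S.eval (S.kernel 0) (r • z) ∂μ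
        = ∫ z, (1 : ℂ) ∂μ := by
      refine integral_congr_ae ?_
      filter_upwards [hae] with z hz
      have hz' : r • z ∈ Ball N := by
        have := mem_closedBall_zero_iff.1 (hK1 hz)
        rw [mem_ball_zero_iff, norm_smul, Real.norm_of_nonneg hr.1.le]
        nlinarith [hr.1, hr.2, norm_nonneg z]
      rw [hk _ hz']
      simp
    rw [this, integral_const, measureReal_def, htop]
    simp
  exact zero_ne_one (tendsto_nhds_unique tendsto_const_nhds h2)

lemma sphere_null [NeZero N] : sphereMeasure N (sphere 0 1)ᶜ = 0 := by
  have hm : Measurable (fun z : EuclideanSpace ℂ (Fin N) => ‖z‖⁻¹ • z) := by fun_prop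
  rw [sphereMeasure, Measure.map_apply hm isClosed_sphere.measurableSet.compl]
  have hsub : (fun z : EuclideanSpace ℂ (Fin N) => ‖z‖⁻¹ • z) ⁻¹' (sphere 0 1)ᶜ ⊆ {0} := by
    intro z hz
    by_contra hne
    apply hz
    have : ‖z‖ ≠ 0 := norm_ne_zero_iff.2 hne
    rw [mem_sphere_zero_iff_norm, norm_smul, norm_inv, norm_norm, inv_mul_cancel₀ this]
  refine measure_mono_null hsub ?_
  have hv : volume ({0} : Set (EuclideanSpace ℂ (Fin N))) = 0 := by simp
  have hr : (volume.restrict (Ball N)) ({0} : Set (EuclideanSpace ℂ (Fin N))) = 0 :=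
    Measure.absolutelyContinuous_of_le Measure.restrict_le_self hv
  rw [ballMeasure, Measure.smul_apply, hr, smul_zero]

lemma bergman_null (s : ℝ) : bergmanMeasure N s (closedBall 0 1)ᶜ = 0 := by
  refine withDensity_absolutelyContinuous _ _ ?_
  rw [ballMeasure, Measure.smul_apply,
    Measure.restrict_apply isClosed_closedBall.measurableSet.compl]
  have : (closedBall (0 : EuclideanSpace ℂ (Fin N)) 1)ᶜ ∩ Ball N = ∅ := by
    ext z
    simp only [mem_inter_iff, mem_compl_iff, mem_empty_iff_false, iff_false, not_and, not_not]
    intro h1 h2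
    exact h1 (ball_subset_closedBall h2)
  rw [this, measure_empty, smul_zero]

lemma compact_of_zero {μ : Measure (EuclideanSpace ℂ (Fin 0))} (S : BallFunctionSpace 0 t μ)
    (A : S.H →L[ℂ] S.H) : IsCompactOperator A := by
  have hinj : Function.Injective (S.evalL 0) := by
    intro u v huv
    refine S.eval_injective _ _ fun z _ => ?_
    rw [Subsingleton.elim z 0]
    exact huv
  have : FiniteDimensional ℂ S.H := FiniteDimensional.of_injective _ hinj
  have : ProperSpace S.H := FiniteDimensional.proper ℂ S.H
  exact ⟨closedBall 0 1, isCompact_closedBall _ _, A.continuous.continuousAt.preimage_mem_nhds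
        (by simpa using closedBall_mem_nhds (0 : S.H) one_pos)⟩

lemma final {f : EuclideanSpace ℂ (Fin N) → ℂ} (h : Adm μ K) (ht : 0 < t)
    {φ : EuclideanSpace ℂ (Fin N) → EuclideanSpace ℂ (Fin N)}
    (hφc : ContinuousOn φ (closedBall 0 1)) (hφB : MapsTo φ (Ball N) (Ball N))
    (hφK : MapsTo φ K K) (hf : ContinuousOn f K)
    {C Tf Tfφ : S.H →L[ℂ] S.H} (hC : S.IsCompositionOperator φ C)
    (hTf : S.IsToeplitzOperator f Tf) (hTfφ : S.IsToeplitzOperator (f ∘ φ) Tfφ) :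
    IsCompactOperator ⇑(C.comp Tf - Tfφ.comp C) := by
  have h1 := main_abstract h ht hφc hφB hφK hC f hf
  have e1 : S.TT f = Tf := TT_eq hTf
  have e2 : S.TT (fun z => f (φ z)) = Tfφ := TT_eq hTfφ
  rw [e1, e2] at h1
  exact h1

end main
end BallFunctionSpace

/-- Let `φ` be an automorphism of `B_N` (extended continuously to the
closed ball, mapping the sphere to the sphere).  If `f` is continuous on `∂B_N` (Hardy case,
`t = N`, `μ = σ`), respectively continuous on the closed ball (weighted Bergman case,
`t = N + s + 1`, `μ = v_s`, `s > -1`), then `C_φ T_f - T_{f∘φ} C_φ` is compact on `H²(B_N)`,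
respectively on `A²_s(B_N)`. -/
theorem toeplitz_composition_commutator_compact
    (N : ℕ) (t : ℝ) (μ : Measure (EuclideanSpace ℂ (Fin N)))
    (f : EuclideanSpace ℂ (Fin N) → ℂ)
    (ht : (t = N ∧ μ = sphereMeasure N ∧ ContinuousOn f (Metric.sphere 0 1)) ∨
      ∃ s : ℝ, -1 < s ∧ t = N + s + 1 ∧ μ = bergmanMeasure N s ∧
        ContinuousOn f (Metric.closedBall 0 1))
    (S : BallFunctionSpace N t μ)
    (φ : EuclideanSpace ℂ (Fin N) → EuclideanSpace ℂ (Fin N))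
    (hφ : IsBallAutomorphism N φ)
    (hφc : ContinuousOn φ (Metric.closedBall 0 1))
    (hφs : Set.MapsTo φ (Metric.sphere 0 1) (Metric.sphere 0 1))
    (Cφ : S.H →L[ℂ] S.H) (hCφ : S.IsCompositionOperator φ Cφ)
    (Tf Tfφ : S.H →L[ℂ] S.H)
    (hTf : S.IsToeplitzOperator f Tf) (hTfφ : S.IsToeplitzOperator (f ∘ φ) Tfφ) :
    IsCompactOperator ⇑(Cφ.comp Tf - Tfφ.comp Cφ) := by
  rcases N with _ | n
  · exact BallFunctionSpace.compact_of_zero S _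
  have hφcl : MapsTo φ (closedBall 0 1) (closedBall 0 1) := by
    have h1 := hφ.2.1.closure_of_continuousOn (by
      rw [closure_ball _ one_ne_zero]; exact hφc)
    rwa [closure_ball _ one_ne_zero] at h1
  rcases ht with ⟨ht, hμ, hf⟩ | ⟨s, hs, ht, hμ, hf⟩
  · have hA : Adm μ (sphere 0 1) := BallFunctionSpace.adm_of S (isCompact_sphere _ _)
      sphere_subset_closedBall (by rw [hμ]; exact BallFunctionSpace.sphere_null)
    have ht0 : 0 < t := by rw [ht]; positivity
    exact BallFunctionSpace.final hA ht0 hφc hφ.2.1 hφs hf hCφ hTf hTfφ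
  · have hA : Adm μ (closedBall 0 1) := BallFunctionSpace.adm_of S (isCompact_closedBall _ _)
      Subset.rfl (by rw [hμ]; exact BallFunctionSpace.bergman_null s)
    have ht0 : 0 < t := by
      rw [ht]
      have : (0 : ℝ) ≤ ((n + 1 : ℕ) : ℝ) := by positivity
      linarith
    exact BallFunctionSpace.final hA ht0 hφc hφ.2.1 hφcl hf hCφ hTf hTfφ
end
end

section
/- Let φ and ψ be linear fractional self-maps of the unit ball B_N. Then C_φ − C_ψ is compact on the Dirichlet space D(B_N) if and only if φ = ψ or both C_φ and C_ψ are compact on D(B_N) (equivalently, φ = ψ or both ‖φ‖_∞ < 1 and ‖ψ‖_∞ < 1, where ‖φ‖_∞ = sup_{z∈B_N}|φ(z)|). -/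
open Filter MeasureTheory Metric Set
open scoped ComplexInnerProductSpace Topology

noncomputable section

/-- An abstract presentation of the Dirichlet space `𝒟(B_N)`: the reproducing-kernel Hilbert
space of holomorphic functions on `B_N` with kernel `K_w(z) = 1 + log (1/(1 - ⟨z,w⟩))`.
Injectivity of evaluation forces the kernels to be total, so such a structure determines the
space uniquely up to canonical unitary equivalence. -/
structure DirichletSpace (N : ℕ) where
  (H : Type)
  [grp : NormedAddCommGroup H]
  [ips : InnerProductSpace ℂ H]
  [cpl : CompleteSpace H]
  eval : H → EuclideanSpace ℂ (Fin N) → ℂ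
  eval_add : ∀ f g : H, ∀ z, eval (f + g) z = eval f z + eval g z
  eval_smul : ∀ (c : ℂ) (f : H) (z : EuclideanSpace ℂ (Fin N)), eval (c • f) z = c * eval f z
  holo : ∀ f : H, DifferentiableOn ℂ (eval f) (Ball N)
  eval_injective : ∀ f g : H, (∀ z ∈ Ball N, eval f z = eval g z) → f = g
  kernel : EuclideanSpace ℂ (Fin N) → H
  eval_kernel : ∀ w ∈ Ball N, ∀ z ∈ Ball N,
    eval (kernel w) z = 1 + Complex.log (1 - ⟪w, z⟫)⁻¹
  reproducing : ∀ (f : H), ∀ w ∈ Ball N, ⟪kernel w, f⟫ = eval f w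

attribute [instance] DirichletSpace.grp DirichletSpace.ips DirichletSpace.cpl

/-- `T` is the composition operator `C_φ : f ↦ f ∘ φ` on `S`. -/
def DirichletSpace.IsCompositionOperator {N : ℕ} (S : DirichletSpace N)
    (φ : EuclideanSpace ℂ (Fin N) → EuclideanSpace ℂ (Fin N)) (T : S.H →L[ℂ] S.H) : Prop :=
  ∀ f : S.H, ∀ z ∈ Ball N, S.eval (T f) z = S.eval f (φ z)

/-- The data of a linear fractional map `φ(z) = (Az + B)/(⟨z,C⟩ + d)` of `ℂ^N`. -/
structure BallLFT (N : ℕ) where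
  A : Matrix (Fin N) (Fin N) ℂ
  B : EuclideanSpace ℂ (Fin N)
  C : EuclideanSpace ℂ (Fin N)
  d : ℂ

/-- The map `z ↦ (Az + B)/(⟨z,C⟩ + d)` associated to a linear fractional map. -/
def BallLFT.toFun {N : ℕ} (L : BallLFT N) (z : EuclideanSpace ℂ (Fin N)) :
    EuclideanSpace ℂ (Fin N) :=
  (⟪L.C, z⟫ + L.d)⁻¹ •
    ((WithLp.equiv 2 (Fin N → ℂ)).symm (L.A.mulVec (WithLp.equiv 2 (Fin N → ℂ) z)) + L.B)

/-- The Krein adjoint `σ(z) = (A*z - C)/(⟨z,-B⟩ + conj d)` of a linear fractional map. -/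
def BallLFT.krein {N : ℕ} (L : BallLFT N) : BallLFT N :=
  ⟨L.A.conjTranspose, -L.C, -L.B, (starRingEnd ℂ) L.d⟩

/-- `L` is a linear fractional self-map of the unit ball `B_N`. -/
def BallLFT.IsSelfMap {N : ℕ} (L : BallLFT N) : Prop :=
  (∀ z ∈ Ball N, ⟪L.C, z⟫ + L.d ≠ 0) ∧ Set.MapsTo L.toFun (Ball N) (Ball N)

/-- `‖φ‖_∞ = sup_{z ∈ B_N} |φ(z)|`. -/
def supNorm {N : ℕ} (φ : EuclideanSpace ℂ (Fin N) → EuclideanSpace ℂ (Fin N)) : ℝ :=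
  sSup ((fun z => ‖φ z‖) '' Ball N)


/-! ### Basic facts about the abstract Dirichlet space -/

namespace DirichletSpace

variable {N : ℕ} (S : DirichletSpace N)

theorem inner_kernel {w z : EuclideanSpace ℂ (Fin N)} (hw : w ∈ Ball N) (hz : z ∈ Ball N) :
    ⟪S.kernel w, S.kernel z⟫ = 1 + Complex.log (1 - ⟪z, w⟫)⁻¹ := by
  rw [S.reproducing _ w hw, S.eval_kernel z hz w hw]

/-- The linear combination map of kernels. -/
def lin : (Ball N →₀ ℂ) →ₗ[ℂ] S.H := Finsupp.linearCombination ℂ (fun w : Ball N => S.kernel w)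

@[simp] theorem lin_single (w : Ball N) (c : ℂ) : S.lin (Finsupp.single w c) = c • S.kernel w := by
  simp [lin]

theorem eval_eq_inner (f : S.H) (w : Ball N) : S.eval f w = ⟪S.kernel w, f⟫ :=
  (S.reproducing f w w.2).symm

theorem eval_sub (f g : S.H) (w : Ball N) : S.eval (f - g) w = S.eval f w - S.eval g w := by
  simp [eval_eq_inner]

theorem dense_lin : DenseRange S.lin := by
  have h : (LinearMap.range S.lin).topologicalClosure = ⊤ := by
    rw [Submodule.topologicalClosure_eq_top_iff, Submodule.eq_bot_iff]
    intro f hf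
    apply S.eval_injective
    intro z hz
    rw [← S.reproducing f z hz, ← S.reproducing 0 z hz]
    rw [Submodule.mem_orthogonal] at hf
    rw [hf _ ⟨Finsupp.single ⟨z, hz⟩ 1, by simp⟩, inner_zero_right]
  have := Submodule.dense_iff_topologicalClosure_eq_top.2 h
  rw [LinearMap.coe_range] at this
  exact this

/-- Two continuous linear maps agreeing on kernels are equal. -/
theorem ext_kernel {F : Type*} [NormedAddCommGroup F] [NormedSpace ℂ F] {T U : S.H →L[ℂ] F}
    (h : ∀ w ∈ Ball N, T (S.kernel w) = U (S.kernel w)) : T = U := by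
  have h2 : ∀ x, T (S.lin x) = U (S.lin x) := by
    intro x
    induction x using Finsupp.induction_linear with
    | zero => simp
    | add f g hf hg => simp [hf, hg]
    | single a b => simp [h a a.2]
  ext f
  have := S.dense_lin.equalizer T.continuous U.continuous (funext h2)
  exact congrFun this f

/-- Extension of a map on kernels, given a norm bound. -/
theorem exists_extend {F : Type*} [NormedAddCommGroup F] [NormedSpace ℂ F] [CompleteSpace F]
    (v : Ball N → F) (C : ℝ)
    (h : ∀ x : Ball N →₀ ℂ, ‖Finsupp.linearCombination ℂ v x‖ ≤ C * ‖S.lin x‖) :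
    ∃ T : S.H →L[ℂ] F, ∀ w : Ball N, T (S.kernel w) = v w := by
  refine ⟨(Finsupp.linearCombination ℂ v).extendOfNorm S.lin, fun w => ?_⟩
  have := LinearMap.extendOfNorm_eq S.dense_lin ⟨C, h⟩ (Finsupp.single w 1)
  simpa using this

theorem zero_mem : (0 : EuclideanSpace ℂ (Fin N)) ∈ Ball N := by simp

theorem eval_kernel_zero (z : Ball N) : S.eval (S.kernel 0) z = 1 := by
  rw [S.eval_kernel 0 zero_mem z z.2]; simp

theorem norm_kernel_sq {w : EuclideanSpace ℂ (Fin N)} (hw : w ∈ Ball N) :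
    ‖S.kernel w‖ ^ 2 = 1 - Real.log (1 - ‖w‖ ^ 2) := by
  have h := S.inner_kernel hw hw
  rw [inner_self_eq_norm_sq_to_K, inner_self_eq_norm_sq_to_K] at h
  have h2 := congrArg Complex.re h
  have hw' : ‖w‖ < 1 := by simpa using hw
  rw [show (1 - (RCLike.ofReal ‖w‖ : ℂ) ^ 2)⁻¹ = (((1 - ‖w‖ ^ 2)⁻¹ : ℝ) : ℂ) by
    push_cast; rfl, ← Complex.ofReal_log (by
      have : ‖w‖^2 ≤ 1 := by nlinarith [norm_nonneg w]
      exact inv_nonneg.2 (by linarith))] at h2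
  rw [show ((RCLike.ofReal ‖S.kernel w‖ : ℂ) ^ 2) = ((‖S.kernel w‖ ^ 2 : ℝ) : ℂ) by
    push_cast; rfl] at h2
  simp only [Complex.ofReal_re, Complex.add_re, Complex.one_re, Real.log_inv] at h2
  linarith

/-- The Lax symmetrization trick: abstract boundedness of a composition operator. -/
theorem lax_bound (η σ : Ball N → Ball N) (o : Ball N)
    (hησ : ∀ u v : Ball N, S.eval (S.kernel v) (η u) - S.eval (S.kernel v) (η o) =
      S.eval (S.kernel (σ v)) u - S.eval (S.kernel (σ o)) u)
    (M : ℝ) (hM : ∀ w, ‖S.kernel (η w)‖ ≤ M) (x : Ball N →₀ ℂ) :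
    ‖Finsupp.linearCombination ℂ
      (fun w : Ball N => S.kernel (σ w) - S.kernel (σ o)) x‖ ≤ 1 * ‖S.lin x‖ := by
  set X : (Ball N →₀ ℂ) →ₗ[ℂ] S.H := Finsupp.linearCombination ℂ
      (fun w : Ball N => S.kernel (σ w) - S.kernel (σ o)) with hX
  set A : (Ball N →₀ ℂ) →ₗ[ℂ] (Ball N →₀ ℂ) := Finsupp.linearCombination ℂ
      (fun w : Ball N => Finsupp.single (η (σ w)) (1 : ℂ) - Finsupp.single (η (σ o)) 1) with hA
  have key : ∀ x y, ⟪X x, X y⟫ = ⟪S.lin (A x), S.lin y⟫ := by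
    intro x y
    induction x using Finsupp.induction_linear with
    | zero => simp
    | add f g hf hg => simp only [map_add, inner_add_left, hf, hg]
    | single a c =>
      induction y using Finsupp.induction_linear with
      | zero => simp
      | add f g hf hg => simp only [map_add, inner_add_right, hf, hg]
      | single b d =>
        have h1 := hησ (σ a) b
        have h2 := hησ (σ o) b
        simp only [eval_eq_inner] at h1 h2
        simp only [hX, hA, Finsupp.linearCombination_single, map_smul, map_sub, lin_single,
          inner_smul_left, inner_smul_right, inner_sub_left, inner_sub_right, one_smul]
        linear_combination (starRingEnd ℂ c) * d * (h2 - h1)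
  have symm : ∀ x y, ⟪S.lin (A x), S.lin y⟫ = ⟪S.lin x, S.lin (A y)⟫ := by
    intro x y
    rw [← key, ← inner_conj_symm, key, inner_conj_symm]
  -- boundedness of iterates
  have bdd : ∀ x : Ball N →₀ ℂ, ∃ C : ℝ, ∀ n : ℕ, ‖S.lin ((A ^ n) x)‖ ≤ C := by
    intro x
    induction x using Finsupp.induction_linear with
    | zero => exact ⟨0, by simp⟩
    | add f g hf hg =>
      obtain ⟨C, hC⟩ := hf
      obtain ⟨D, hD⟩ := hg
      refine ⟨C + D, fun n => ?_⟩
      rw [map_add, map_add]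
      exact (norm_add_le _ _).trans (add_le_add (hC n) (hD n))
    | single a c =>
      have it : ∀ n : ℕ, (A ^ (n + 1)) (Finsupp.single a c) =
          c • (Finsupp.single ((η ∘ σ)^[n + 1] a) (1 : ℂ)
            - Finsupp.single ((η ∘ σ)^[n + 1] o) 1) := by
        intro n
        induction n with
        | zero => simp [hA]
        | succ n ih =>
          rw [pow_succ', Module.End.mul_apply, ih, map_smul, map_sub]
          simp only [hA, Finsupp.linearCombination_single, one_smul]
          rw [Function.iterate_succ_apply' _ (n + 1), Function.iterate_succ_apply' _ (n + 1)]
          simp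
      refine ⟨max ‖S.lin (Finsupp.single a c)‖ (‖c‖ * (M + M)), fun n => ?_⟩
      cases n with
      | zero => simp
      | succ n =>
        refine le_max_of_le_right ?_
        rw [it, map_smul, norm_smul, map_sub, lin_single, lin_single, one_smul, one_smul,
          Function.iterate_succ_apply', Function.iterate_succ_apply']
        gcongr
        exact (norm_sub_le _ _).trans (add_le_add (hM _) (hM _))
  obtain ⟨C, hC⟩ := bdd x
  set a : ℕ → ℝ := fun n => ‖S.lin ((A ^ n) x)‖ with ha
  have ha0 : ∀ n, 0 ≤ a n := fun n => norm_nonneg _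
  have hconv : ∀ n, a (n + 1) ^ 2 ≤ a (n + 2) * a n := by
    intro n
    have h1 : (⟪S.lin ((A ^ (n + 1)) x), S.lin ((A ^ (n + 1)) x)⟫ : ℂ) =
        ⟪S.lin ((A ^ (n + 2)) x), S.lin ((A ^ n) x)⟫ := by
      rw [pow_succ' A n, Module.End.mul_apply, ← symm, pow_succ' A (n + 1), pow_succ' A n,
        Module.End.mul_apply, Module.End.mul_apply]
    have h2 : a (n + 1) ^ 2 = ‖(⟪S.lin ((A ^ (n + 1)) x), S.lin ((A ^ (n + 1)) x)⟫ : ℂ)‖ := by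
      rw [inner_self_eq_norm_sq_to_K]; simp [ha]
    rw [h2, h1]
    exact norm_inner_le_norm _ _
  have h10 : a 1 ≤ a 0 := by
    by_contra! hlt
    have hpos : 0 < a 0 := by
      rcases (ha0 0).lt_or_eq with h | h
      · exact h
      · have := hconv 0
        rw [← h, mul_zero] at this
        have : a 1 = 0 := by nlinarith [ha0 1]
        linarith
    set q := a 1 / a 0 with hq
    have hq1 : 1 < q := by rw [hq, lt_div_iff₀ hpos]; linarith
    have hgrow : ∀ n, 0 < a n ∧ q * a n ≤ a (n + 1) := by
      intro n
      induction n with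
      | zero => exact ⟨hpos, by rw [hq]; field_simp; simp⟩
      | succ n ih =>
        obtain ⟨p1, p2⟩ := ih
        have p3 : 0 < a (n + 1) := lt_of_lt_of_le (by positivity) p2
        refine ⟨p3, ?_⟩
        have := hconv n
        by_contra! hc
        have : a (n + 2) * a n < a (n + 1) * (q * a n) := by nlinarith
        nlinarith
    have hgrow2 : ∀ n, q ^ n * a 0 ≤ a n := by
      intro n
      induction n with
      | zero => simp
      | succ n ih =>
        calc q ^ (n + 1) * a 0 = q * (q ^ n * a 0) := by ring
          _ ≤ q * a n := by gcongr
          _ ≤ _ := (hgrow n).2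
    obtain ⟨n, hn⟩ := pow_unbounded_of_one_lt (C / a 0) hq1
    rw [div_lt_iff₀ hpos] at hn
    linarith [hgrow2 n, hC n]
  have hfin : ‖X x‖ ^ 2 ≤ a 1 * a 0 := by
    have h2 : ‖X x‖ ^ 2 = ‖(⟪X x, X x⟫ : ℂ)‖ := by
      rw [inner_self_eq_norm_sq_to_K]; simp
    rw [h2, key]
    simpa [ha] using norm_inner_le_norm (𝕜 := ℂ) (S.lin (A x)) (S.lin x)
  have e0 : a 0 = ‖S.lin x‖ := by simp [ha]
  rw [one_mul, ← e0]
  nlinarith [ha0 0, ha0 1, norm_nonneg (X x)]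

/-- Existence of a bounded composition operator with strictly contractive symbol. -/
theorem exists_comp (η σ : Ball N → Ball N) (o : Ball N)
    (hησ : ∀ u v : Ball N, S.eval (S.kernel v) (η u) - S.eval (S.kernel v) (η o) =
      S.eval (S.kernel (σ v)) u - S.eval (S.kernel (σ o)) u)
    (r : ℝ) (hr : r < 1) (hM : ∀ w, ‖(η w : EuclideanSpace ℂ (Fin N))‖ ≤ r) :
    ∃ Y : S.H →L[ℂ] S.H, ∀ v u : Ball N,
      S.eval (Y (S.kernel v)) u = S.eval (S.kernel v) (η u) := by
  have hM' : ∀ w, ‖S.kernel (η w)‖ ≤ √(1 - Real.log (1 - r ^ 2)) := by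
    intro w
    apply Real.le_sqrt_of_sq_le
    rw [S.norm_kernel_sq (η w).2]
    have := hM w
    have h0 := norm_nonneg (η w : EuclideanSpace ℂ (Fin N))
    have : Real.log (1 - r ^ 2) ≤ Real.log (1 - ‖(η w : EuclideanSpace ℂ (Fin N))‖ ^ 2) := by
      apply Real.log_le_log
      · nlinarith
      · nlinarith
    linarith
  obtain ⟨Y, hY⟩ := S.exists_extend _ 1 (S.lax_bound η σ o hησ _ hM')
  refine ⟨Y + (innerSL ℂ (S.kernel (η o))).smulRight (S.kernel 0), fun v u => ?_⟩
  rw [add_apply, S.eval_add, hY, eval_sub, ← hησ,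
    ContinuousLinearMap.smulRight_apply, S.eval_smul, S.eval_kernel_zero, innerSL_apply_apply,
    ← eval_eq_inner]
  ring

end DirichletSpace


/-! ### Compactness of dilations -/

/-- Blocks of the tensor model of the Dirichlet space. -/
abbrev Blk (N : ℕ) (m : ℕ) : Type := EuclideanSpace ℂ (Fin m → Fin N)

/-- The tensor model of the Dirichlet space. -/
abbrev Mdl (N : ℕ) : Type := lp (Blk N) 2

/-- The diagonal operator with weights `s ^ m`. -/
def diagS (N : ℕ) (s : ℝ) (hs0 : 0 ≤ s) (hs1 : s < 1) : Mdl N →L[ℂ] Mdl N :=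
  LinearMap.mkContinuous
    { toFun := fun x => ⟨fun m => (s ^ m : ℂ) • x m, by
        refine Memℓp.mono' (lp.memℓp x) fun m => ?_
        rw [norm_smul]
        have : ‖(s ^ m : ℂ)‖ ≤ 1 := by
          rw [norm_pow, Complex.norm_real, Real.norm_of_nonneg hs0]
          exact pow_le_one₀ hs0 hs1.le
        nlinarith [norm_nonneg (x m)]⟩
      map_add' := fun x y => by
        apply lp.ext
        funext m
        exact smul_add _ _ _
      map_smul' := fun c x => by
        apply lp.ext
        funext m
        exact smul_comm (s ^ m : ℂ) c (x m) } 1 (fun x => by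
      rw [one_mul]
      refine lp.norm_mono (by norm_num) fun m => ?_
      simp only [LinearMap.coe_mk, AddHom.coe_mk]
      rw [norm_smul]
      have : ‖(s ^ m : ℂ)‖ ≤ 1 := by
        rw [norm_pow, Complex.norm_real, Real.norm_of_nonneg hs0]
        exact pow_le_one₀ hs0 hs1.le
      nlinarith [norm_nonneg (x m)])

theorem diagS_apply (N : ℕ) (s : ℝ) (hs0 : 0 ≤ s) (hs1 : s < 1) (x : Mdl N) (m : ℕ) :
    diagS N s hs0 hs1 x m = (s ^ m : ℂ) • x m := rfl

/-- Rank-finite pieces of the diagonal operator. -/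
def pieceS (N : ℕ) (m : ℕ) : Mdl N →L[ℂ] Mdl N :=
  (lp.singleContinuousLinearMap ℂ (Blk N) 2 m).comp (lp.evalCLM ℂ (Blk N) 2 m)

theorem pieceS_compact (N m : ℕ) : IsCompactOperator (pieceS N m) := by
  have h1 : IsCompactOperator (lp.evalCLM ℂ (Blk N) 2 m) :=
    isCompactOperator_of_locallyCompactSpace_dom _
  exact h1.clm_comp (lp.singleContinuousLinearMap ℂ (Blk N) 2 m)

theorem pieceS_apply (N n : ℕ) (x : Mdl N) (m : ℕ) :
    pieceS N n x m = if m = n then x m else 0 := by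
  split_ifs with h
  · subst h
    simp [pieceS]
    rfl
  · simp [pieceS, Pi.single_eq_of_ne h]

/-- Truncations of the diagonal operator. -/
def truncS (N : ℕ) (s : ℝ) (n : ℕ) : Mdl N →L[ℂ] Mdl N :=
  ∑ m ∈ Finset.range n, (s ^ m : ℂ) • pieceS N m

theorem truncS_succ (N : ℕ) (s : ℝ) (n : ℕ) :
    truncS N s (n + 1) = truncS N s n + (s ^ n : ℂ) • pieceS N n := Finset.sum_range_succ _ _

theorem truncS_compact (N : ℕ) (s : ℝ) (n : ℕ) : IsCompactOperator (truncS N s n) := by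
  induction n with
  | zero => exact isCompactOperator_zero
  | succ n ih =>
    rw [truncS_succ]
    have h3 := (pieceS_compact N n).smul (s ^ n : ℂ)
    exact ih.add h3

theorem truncS_apply (N : ℕ) (s : ℝ) (n : ℕ) (x : Mdl N) (m : ℕ) :
    truncS N s n x m = if m < n then (s ^ m : ℂ) • x m else 0 := by
  induction n with
  | zero => simp [truncS]
  | succ n ih =>
    have h0 : truncS N s (n + 1) x m = truncS N s n x m + (s ^ n : ℂ) • pieceS N n x m := by
      rw [truncS_succ]
      rfl
    rw [h0, ih, pieceS_apply]
    by_cases h : m = n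
    · subst h
      simp
    · have h2 : (m < n + 1) ↔ m < n := by omega
      simp [h2, h]

theorem diagS_sub_le (N : ℕ) (s : ℝ) (hs0 : 0 ≤ s) (hs1 : s < 1) (n : ℕ) (x : Mdl N) :
    ‖truncS N s n x - diagS N s hs0 hs1 x‖ ≤ s ^ n * ‖x‖ := by
  have h : ‖(s ^ n : ℂ) • x‖ = s ^ n * ‖x‖ := by
    rw [lp.norm_const_smul (by norm_num), norm_pow, Complex.norm_real, Real.norm_of_nonneg hs0]
  refine le_trans (lp.norm_mono (y := (s ^ n : ℂ) • x) (by norm_num) fun m => ?_) h.le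
  have e1 : (truncS N s n x - diagS N s hs0 hs1 x) m
    = truncS N s n x m - diagS N s hs0 hs1 x m := rfl
  have e2 : ((s ^ n : ℂ) • x) m = (s ^ n : ℂ) • x m := rfl
  rw [e1, e2, truncS_apply, diagS_apply]
  split_ifs with h
  · simp
  · rw [zero_sub, norm_neg, norm_smul, norm_smul, norm_pow, norm_pow, Complex.norm_real,
      Real.norm_of_nonneg hs0]
    exact mul_le_mul_of_nonneg_right (pow_le_pow_of_le_one hs0 hs1.le (by omega)) (norm_nonneg _)

theorem diagS_compact (N : ℕ) (s : ℝ) (hs0 : 0 ≤ s) (hs1 : s < 1) :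
    IsCompactOperator (diagS N s hs0 hs1) := by
  refine isCompactOperator_of_tendsto (l := atTop) (F := truncS N s) ?_
    (Eventually.of_forall (truncS_compact N s))
  rw [tendsto_iff_norm_sub_tendsto_zero]
  refine squeeze_zero (fun _ => norm_nonneg _) (fun n => ?_)
    (tendsto_pow_atTop_nhds_zero_of_lt_one hs0 hs1)
  exact ContinuousLinearMap.opNorm_le_bound _ (by positivity) (diagS_sub_le N s hs0 hs1 n)

/-- Weights. -/
def wgt (m : ℕ) : ℝ := if m = 0 then 1 else (m : ℝ)⁻¹

theorem wgt_nonneg (m : ℕ) : 0 ≤ wgt m := by unfold wgt; split_ifs <;> positivity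

/-- The tensor power vector. -/
def tvec {N : ℕ} (w : EuclideanSpace ℂ (Fin N)) (m : ℕ) : Blk N m :=
  ((√(wgt m) : ℝ) : ℂ) • WithLp.toLp 2 (fun i : Fin m → Fin N => ∏ j, (starRingEnd ℂ) (w (i j)))

theorem tvec_inner {N : ℕ} (w z : EuclideanSpace ℂ (Fin N)) (m : ℕ) :
    ⟪tvec w m, tvec z m⟫ = (wgt m : ℂ) * ⟪z, w⟫ ^ m := by
  unfold tvec
  rw [inner_smul_left, inner_smul_right, Complex.conj_ofReal, ← mul_assoc, ← Complex.ofReal_mul,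
    Real.mul_self_sqrt (wgt_nonneg m)]
  congr 1
  rw [PiLp.inner_apply, PiLp.inner_apply, Finset.sum_pow', Fintype.piFinset_univ]
  refine Finset.sum_congr rfl fun i _ => ?_
  simp only [RCLike.inner_apply, map_prod, Complex.conj_conj, ← Finset.prod_mul_distrib]
  refine Finset.prod_congr rfl fun j _ => ?_
  ring

theorem tvec_smul {N : ℕ} (s : ℝ) (w : EuclideanSpace ℂ (Fin N)) (m : ℕ) :
    tvec ((s : ℂ) • w) m = (s ^ m : ℂ) • tvec w m := by
  unfold tvec
  rw [smul_comm]
  congr 1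
  ext i
  simp [Finset.prod_mul_distrib]

theorem wgt_hasSum {x : ℂ} (hx : ‖x‖ < 1) :
    HasSum (fun m : ℕ => (wgt m : ℂ) * x ^ m) (1 - Complex.log (1 - x)) := by
  have h1 := Complex.hasSum_taylorSeries_neg_log hx
  have h2 := hasSum_ite_eq (0 : ℕ) (1 : ℂ)
  convert! h2.add h1 using 1
  funext m
  unfold wgt
  split_ifs with h
  · simp [h]
  · push_cast; field_simp; simp

theorem norm_inner_lt {N : ℕ} {w z : EuclideanSpace ℂ (Fin N)} (hw : w ∈ Ball N) (hz : z ∈ Ball N) :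
    ‖⟪w, z⟫‖ < 1 := by
  simp only [mem_ball_zero_iff] at hw hz
  calc ‖⟪w, z⟫‖ ≤ ‖w‖ * ‖z‖ := norm_inner_le_norm _ _
    _ < 1 := by nlinarith [norm_nonneg w, norm_nonneg z]

theorem one_sub_inner_re_pos {N : ℕ} {w z : EuclideanSpace ℂ (Fin N)} (hw : w ∈ Ball N)
    (hz : z ∈ Ball N) : 0 < (1 - ⟪w, z⟫).re := by
  have := norm_inner_lt hw hz
  have := Complex.re_le_norm ⟪w, z⟫
  simp only [Complex.sub_re, Complex.one_re]
  linarith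

theorem log_inv_one_sub {N : ℕ} {w z : EuclideanSpace ℂ (Fin N)} (hw : w ∈ Ball N)
    (hz : z ∈ Ball N) : Complex.log (1 - ⟪w, z⟫)⁻¹ = - Complex.log (1 - ⟪w, z⟫) := by
  apply Complex.log_inv
  have := one_sub_inner_re_pos hw hz
  intro h
  rw [Complex.arg_eq_pi_iff] at h
  linarith [h.1]

/-- The feature vector of a point of the ball. -/
def fvec {N : ℕ} (w : Ball N) : Mdl N :=
  ⟨tvec (w : EuclideanSpace ℂ (Fin N)), by
    apply memℓp_gen
    have := (wgt_hasSum (norm_inner_lt w.2 w.2)).summable.norm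
    refine this.congr fun m => ?_
    rw [← tvec_inner, inner_self_eq_norm_sq_to_K]
    simp⟩

theorem fvec_inner {N : ℕ} (w z : Ball N) :
    ⟪fvec w, fvec z⟫ = 1 - Complex.log (1 - ⟪(z : EuclideanSpace ℂ (Fin N)), (w : _)⟫) := by
  refine (lp.hasSum_inner (fvec w) (fvec z)).unique ?_
  convert! wgt_hasSum (norm_inner_lt z.2 w.2) using 1
  funext m
  exact tvec_inner _ _ m

namespace DirichletSpace

variable {N : ℕ} (S : DirichletSpace N)

theorem inner_kernel_fvec (w z : Ball N) :
    (⟪S.kernel w, S.kernel z⟫ : ℂ) = ⟪fvec w, fvec z⟫ := by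
  rw [S.inner_kernel w.2 z.2, fvec_inner, log_inv_one_sub z.2 w.2, ← sub_eq_add_neg]

theorem smul_mem {s : ℝ} (hs0 : 0 ≤ s) (hs1 : s < 1) {w : EuclideanSpace ℂ (Fin N)}
    (hw : w ∈ Ball N) : (s : ℂ) • w ∈ Ball N := by
  simp only [mem_ball_zero_iff] at hw ⊢
  rw [norm_smul, Complex.norm_real, Real.norm_of_nonneg hs0]
  nlinarith [norm_nonneg w]

theorem exists_dilation (s : ℝ) (hs0 : 0 ≤ s) (hs1 : s < 1) :
    ∃ T : S.H →L[ℂ] S.H, IsCompactOperator T ∧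
      ∀ w ∈ Ball N, T (S.kernel w) = S.kernel ((s : ℂ) • w) := by
  have hb : ∀ x y : Ball N →₀ ℂ,
      (⟪Finsupp.linearCombination ℂ fvec x, Finsupp.linearCombination ℂ fvec y⟫ : ℂ)
        = ⟪S.lin x, S.lin y⟫ := by
    intro x y
    induction x using Finsupp.induction_linear with
    | zero => simp
    | add f g hf hg => simp only [map_add, inner_add_left, hf, hg]
    | single a c =>
      induction y using Finsupp.induction_linear with
      | zero => simp
      | add f g hf hg => simp only [map_add, inner_add_right, hf, hg]
      | single b d =>
        simp only [Finsupp.linearCombination_single, lin_single, inner_smul_left,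
          inner_smul_right, inner_kernel_fvec]
  obtain ⟨V, hV⟩ := S.exists_extend (F := Mdl N) fvec 1 (fun x => by
    have h := hb x x
    rw [inner_self_eq_norm_sq_to_K, inner_self_eq_norm_sq_to_K] at h
    have h2 : ‖Finsupp.linearCombination ℂ (fvec (N := N)) x‖ ^ 2 = ‖S.lin x‖ ^ 2 := by
      exact_mod_cast h
    rw [one_mul]
    exact le_of_eq ((sq_eq_sq₀ (norm_nonneg _) (norm_nonneg _)).1 h2))
  refine ⟨(ContinuousLinearMap.adjoint V).comp ((diagS N s hs0 hs1).comp V), ?_, ?_⟩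
  · have h1 : IsCompactOperator ((diagS N s hs0 hs1).comp V) :=
      (diagS_compact N s hs0 hs1).comp_clm V
    exact h1.clm_comp (ContinuousLinearMap.adjoint V)
  · intro w hw
    have hsw := smul_mem hs0 hs1 hw
    have h1 : diagS N s hs0 hs1 (V (S.kernel w)) = fvec ⟨_, hsw⟩ := by
      rw [hV ⟨w, hw⟩]
      apply lp.ext
      funext m
      rw [diagS_apply]
      exact (tvec_smul s w m).symm
    apply S.eval_injective
    intro z hz
    rw [← S.reproducing _ z hz, ← S.reproducing _ z hz]
    simp only [ContinuousLinearMap.comp_apply]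
    rw [h1, ContinuousLinearMap.adjoint_inner_right, hV ⟨z, hz⟩,
      S.inner_kernel_fvec ⟨z, hz⟩ ⟨_, hsw⟩]

end DirichletSpace


/-! ### Geometry of linear fractional self-maps -/

section Geometry

variable {N : ℕ}

theorem norm_le_one_of_inner_ne_one {u : EuclideanSpace ℂ (Fin N)}
    (h : ∀ z ∈ Ball N, ⟪u, z⟫ ≠ 1) : ‖u‖ ≤ 1 := by
  by_contra! hu
  refine h (((‖u‖ ^ 2)⁻¹ : ℝ) • u) ?_ ?_
  · rw [mem_ball_zero_iff, norm_smul, Real.norm_of_nonneg (by positivity)]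
    rw [pow_two, mul_inv, mul_assoc, inv_mul_cancel₀ (by positivity), mul_one]
    exact inv_lt_one_of_one_lt₀ hu
  · have : (‖u‖ : ℂ) ≠ 0 := by
      have : ‖u‖ ≠ 0 := by positivity
      exact_mod_cast this
    rw [← Complex.coe_smul, inner_smul_right, inner_self_eq_norm_sq_to_K]
    push_cast
    exact inv_mul_cancel₀ (pow_ne_zero 2 this)

theorem eq_of_inner_eq_one {u ζ : EuclideanSpace ℂ (Fin N)} (hu : ‖u‖ ≤ 1) (hζ : ‖ζ‖ = 1)
    (h : ⟪u, ζ⟫ = 1) : u = ζ := by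
  have h1 := @norm_sub_sq ℂ _ _ _ _ u ζ
  rw [h, hζ] at h1
  simp only [RCLike.one_re] at h1
  have h2 : ‖u - ζ‖ = 0 := by nlinarith [norm_nonneg u, norm_nonneg (u - ζ), sq_nonneg (‖u - ζ‖)]
  exact sub_eq_zero.1 (norm_eq_zero.1 h2)

theorem tangent_aux {c : EuclideanSpace ℂ (Fin N)} {d : ℂ} (h : ∀ z ∈ Ball N, ⟪c, z⟫ + d ≠ 0) :
    d ≠ 0 ∧ ∃ u : EuclideanSpace ℂ (Fin N), ‖u‖ ≤ 1 ∧ ∀ z, ⟪c, z⟫ + d = d * (1 - ⟪u, z⟫) := by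
  have hd : d ≠ 0 := by simpa using h 0 (by simp)
  have hz : ∀ z, ⟪c, z⟫ + d = d * (1 - ⟪-((starRingEnd ℂ d)⁻¹ • c), z⟫) := by
    intro z
    rw [inner_neg_left, inner_smul_left, map_inv₀, Complex.conj_conj]
    field_simp
    ring
  refine ⟨hd, -((starRingEnd ℂ d)⁻¹ • c), ?_, hz⟩
  apply norm_le_one_of_inner_ne_one
  intro z hzb h1
  apply h z hzb
  rw [hz, h1]
  simp

theorem tangent {c : EuclideanSpace ℂ (Fin N)} {d : ℂ} (h : ∀ z ∈ Ball N, ⟪c, z⟫ + d ≠ 0)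
    {ζ : EuclideanSpace ℂ (Fin N)} (hζ : ‖ζ‖ = 1) (h0 : ⟪c, ζ⟫ + d = 0)
    (z : EuclideanSpace ℂ (Fin N)) : ⟪c, z⟫ + d = d * (1 - ⟪ζ, z⟫) := by
  obtain ⟨hd, u, hu, hz⟩ := tangent_aux h
  have h1 := hz ζ
  rw [h0, eq_comm, mul_eq_zero, or_iff_right hd, sub_eq_zero, eq_comm] at h1
  rw [hz, eq_of_inner_eq_one hu hζ h1]

end Geometry

namespace BallLFT

variable {N : ℕ} (L : BallLFT N)

/-- The linear part of the numerator. -/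
def op : EuclideanSpace ℂ (Fin N) →L[ℂ] EuclideanSpace ℂ (Fin N) :=
  LinearMap.toContinuousLinearMap (Matrix.toEuclideanLin L.A)

/-- The numerator. -/
def num (z : EuclideanSpace ℂ (Fin N)) : EuclideanSpace ℂ (Fin N) := L.op z + L.B

/-- The denominator. -/
def den (z : EuclideanSpace ℂ (Fin N)) : ℂ := ⟪L.C, z⟫ + L.d

theorem toFun_eq (z : EuclideanSpace ℂ (Fin N)) : L.toFun z = (L.den z)⁻¹ • L.num z := rfl

theorem continuous_num : Continuous L.num := by unfold num; fun_prop

theorem continuous_den : Continuous L.den := by unfold den; fun_prop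

theorem aff_eq (e z : EuclideanSpace ℂ (Fin N)) : L.den z - ⟪e, L.num z⟫ =
    ⟪L.C - ContinuousLinearMap.adjoint L.op e, z⟫ + (L.d - ⟪e, L.B⟫) := by
  rw [den, num, inner_add_right, inner_sub_left, ContinuousLinearMap.adjoint_inner_left]
  ring

variable {L}

theorem den_mul (e : EuclideanSpace ℂ (Fin N)) {z : EuclideanSpace ℂ (Fin N)} (hz : L.den z ≠ 0) :
    L.den z - ⟪e, L.num z⟫ = L.den z * (1 - ⟪e, L.toFun z⟫) := by
  rw [toFun_eq, inner_smul_right]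
  field_simp

theorem IsSelfMap.den_ne (h : L.IsSelfMap) {z : EuclideanSpace ℂ (Fin N)} (hz : z ∈ Ball N) :
    L.den z ≠ 0 := h.1 z hz

theorem IsSelfMap.norm_lt (h : L.IsSelfMap) {z : EuclideanSpace ℂ (Fin N)} (hz : z ∈ Ball N) :
    ‖L.toFun z‖ < 1 := by simpa using h.2 hz

theorem IsSelfMap.aff_ne (h : L.IsSelfMap) {e : EuclideanSpace ℂ (Fin N)} (he : ‖e‖ ≤ 1)
    {z : EuclideanSpace ℂ (Fin N)} (hz : z ∈ Ball N) : L.den z - ⟪e, L.num z⟫ ≠ 0 := by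
  rw [den_mul e (h.den_ne hz)]
  refine mul_ne_zero (h.den_ne hz) ?_
  intro h0
  have h1 : ‖⟪e, L.toFun z⟫‖ = 1 := by rw [← sub_eq_zero.1 h0]; simp
  have h2 := norm_inner_le_norm (𝕜 := ℂ) e (L.toFun z)
  have h3 := h.norm_lt hz
  nlinarith [norm_nonneg e, norm_nonneg (L.toFun z)]

theorem IsSelfMap.num_le (h : L.IsSelfMap) {z : EuclideanSpace ℂ (Fin N)} (hz : ‖z‖ ≤ 1) :
    ‖L.num z‖ ≤ ‖L.den z‖ := by
  have hc : z ∈ closure (Ball N) := by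
    rw [closure_ball _ one_ne_zero]; simpa using hz
  have hcl : IsClosed {z | ‖L.num z‖ ≤ ‖L.den z‖} :=
    isClosed_le L.continuous_num.norm L.continuous_den.norm
  refine hcl.closure_subset_iff.2 ?_ hc
  intro w hw
  have h1 := h.norm_lt hw
  have h2 := h.den_ne hw
  rw [toFun_eq, norm_smul, norm_inv, inv_mul_lt_iff₀ (norm_pos_iff.2 h2)] at h1
  simpa using h1.le

theorem IsSelfMap.norm_le (h : L.IsSelfMap) {z : EuclideanSpace ℂ (Fin N)} (hz : ‖z‖ ≤ 1) :
    ‖L.toFun z‖ ≤ 1 := by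
  have h1 := h.num_le hz
  rw [toFun_eq, norm_smul, norm_inv]
  exact inv_mul_le_one_of_le₀ h1 (norm_nonneg _)

/-- Julia-type lemma. -/
theorem IsSelfMap.julia (h : L.IsSelfMap) {e ζ : EuclideanSpace ℂ (Fin N)} (he : ‖e‖ ≤ 1)
    (hζ : ‖ζ‖ = 1) (h0 : L.den ζ - ⟪e, L.num ζ⟫ = 0) :
    ∀ z, L.den z - ⟪e, L.num z⟫ = (L.d - ⟪e, L.B⟫) * (1 - ⟪ζ, z⟫) := by
  intro z
  rw [L.aff_eq]
  refine tangent (fun z hz => ?_) hζ ?_ z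
  · rw [← L.aff_eq]
    exact h.aff_ne he hz
  · rw [← L.aff_eq, h0]

theorem IsSelfMap.const_of_degenerate (h : L.IsSelfMap) {ζ : EuclideanSpace ℂ (Fin N)}
    (hζ : ‖ζ‖ = 1) (h0 : L.den ζ = 0) : ∀ z ∈ Ball N, L.toFun z = L.toFun 0 := by
  have hn : L.num ζ = 0 := by
    have := h.num_le hζ.le
    rw [h0, norm_zero] at this
    exact norm_le_zero_iff.1 this
  have hJ : ∀ e : EuclideanSpace ℂ (Fin N), ‖e‖ ≤ 1 →
      ∀ z, L.den z - ⟪e, L.num z⟫ = (L.d - ⟪e, L.B⟫) * (1 - ⟪ζ, z⟫) :=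
    fun e he => h.julia he hζ (by rw [h0, hn]; simp)
  have hd : L.d ≠ 0 := by simpa [den] using h.den_ne (z := 0) (by simp)
  intro z hz
  have hdz : L.den z = L.d * (1 - ⟪ζ, z⟫) := by simpa using hJ 0 (by simp) z
  have hdz0 := h.den_ne hz
  have hq : (1 - ⟪ζ, z⟫) ≠ 0 := by
    intro hq
    rw [hdz, hq, mul_zero] at hdz0
    exact hdz0 rfl
  have hnum : L.num z = (1 - ⟪ζ, z⟫) • L.B := by
    rw [← sub_eq_zero]
    set v := L.num z - (1 - ⟪ζ, z⟫) • L.B with hv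
    by_contra hne
    have hpos : 0 < ‖v‖ := norm_pos_iff.2 hne
    have h1 := hJ (((‖v‖⁻¹ : ℝ) : ℂ) • v) (by
      rw [norm_smul, Complex.norm_real, Real.norm_of_nonneg (by positivity),
        inv_mul_cancel₀ hpos.ne']) z
    rw [inner_smul_left, inner_smul_left, Complex.conj_ofReal, hdz] at h1
    have h2 : ((‖v‖⁻¹ : ℝ) : ℂ) * ⟪v, v⟫ = 0 := by
      conv_lhs => rw [hv, inner_sub_right, inner_smul_right, ← hv]
      linear_combination -h1
    rw [mul_eq_zero, inner_self_eq_zero] at h2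
    rcases h2 with h2 | h2
    · have : ‖v‖⁻¹ ≠ 0 := by positivity
      exact this (by exact_mod_cast h2)
    · exact hne h2
  have hd0 : L.den 0 = L.d := by simp [den]
  have hn0 : L.num 0 = L.B := by simp [num]
  rw [toFun_eq, toFun_eq, hdz, hnum, hd0, hn0, smul_smul]
  congr 1
  field_simp

end BallLFT

theorem clog_mul_of_re_pos {a q : ℂ} (ha : 0 < a.re) (hq : 0 < q.re) :
    Complex.log (q * a) = Complex.log q + Complex.log a := by
  have ha0 : a ≠ 0 := by rintro rfl; simp at ha
  have hq0 : q ≠ 0 := by rintro rfl; simp at hq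
  rw [Complex.log_mul_eq_add_log_iff hq0 ha0]
  have h1 := abs_lt.1 (Complex.abs_arg_lt_pi_div_two_iff.2 (Or.inl ha))
  have h2 := abs_lt.1 (Complex.abs_arg_lt_pi_div_two_iff.2 (Or.inl hq))
  constructor <;> linarith [h1.1, h1.2, h2.1, h2.2]

theorem eval_kernel' {N : ℕ} (S : DirichletSpace N) {w z : EuclideanSpace ℂ (Fin N)}
    (hw : w ∈ Ball N) (hz : z ∈ Ball N) :
    S.eval (S.kernel w) z = 1 - Complex.log (1 - ⟪w, z⟫) := by
  rw [S.eval_kernel w hw z hz, log_inv_one_sub hw hz, ← sub_eq_add_neg]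

theorem exists_krein {N : ℕ} (S : DirichletSpace N) {L : BallLFT N} (h : L.IsSelfMap)
    (hnd : ∀ ζ, ‖ζ‖ = 1 → L.den ζ ≠ 0) :
    ∃ σ : Ball N → Ball N, ∀ u v : Ball N,
      S.eval (S.kernel v) (L.toFun u) - S.eval (S.kernel v) (L.toFun 0) =
        S.eval (S.kernel (σ v)) u - S.eval (S.kernel (σ ⟨0, by simp⟩)) u := by
  have key : ∀ v : Ball N, ∃ w : Ball N, L.d - ⟪(v : EuclideanSpace ℂ (Fin N)), L.B⟫ ≠ 0 ∧
      ∀ z, L.den z - ⟪(v : EuclideanSpace ℂ (Fin N)), L.num z⟫ =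
      (L.d - ⟪(v : EuclideanSpace ℂ (Fin N)), L.B⟫) *
        (1 - ⟪(w : EuclideanSpace ℂ (Fin N)), z⟫) := by
    rintro ⟨v, hv⟩
    have hv1 : ‖v‖ < 1 := by simpa using hv
    obtain ⟨hd, u, hu, hz⟩ := tangent_aux (c := L.C - ContinuousLinearMap.adjoint L.op v)
      (d := L.d - ⟪v, L.B⟫) (fun z hz => by
        rw [← L.aff_eq]
        exact h.aff_ne hv1.le hz)
    simp only [← L.aff_eq] at hz
    rcases hu.lt_or_eq with hu | hu
    · exact ⟨⟨u, by simpa using hu⟩, hd, hz⟩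
    · exfalso
      have h1 := hz u
      have h2 := hnd u hu
      rw [inner_self_eq_norm_sq_to_K, hu, BallLFT.den_mul v h2] at h1
      simp only [RCLike.ofReal_one, one_pow, sub_self, mul_zero, mul_eq_zero, h2, false_or] at h1
      have h3 : ‖⟪v, L.toFun u⟫‖ = 1 := by rw [← sub_eq_zero.1 h1]; simp
      have h4 := norm_inner_le_norm (𝕜 := ℂ) v (L.toFun u)
      have h5 := h.norm_le hu.le
      nlinarith [norm_nonneg v, norm_nonneg (L.toFun u)]
  choose σ hσ1 hσ using key
  refine ⟨σ, fun u v => ?_⟩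
  have z0 : (0 : EuclideanSpace ℂ (Fin N)) ∈ Ball N := by simp
  set o : Ball N := ⟨0, by simp⟩ with ho
  rw [eval_kernel' S v.2 (h.2 u.2), eval_kernel' S v.2 (h.2 z0), eval_kernel' S (σ v).2 u.2,
    eval_kernel' S (σ o).2 u.2]
  have hu := h.den_ne u.2
  have hd : L.d ≠ 0 := by simpa [BallLFT.den] using h.den_ne z0
  have hd0 : L.den 0 = L.d := by simp [BallLFT.den]
  have e1 := hσ v u
  have e2 := hσ v 0
  have e3 := hσ o u
  rw [BallLFT.den_mul _ hu] at e1 e3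
  rw [BallLFT.den_mul _ (h.den_ne z0), hd0] at e2
  simp only [ho, inner_zero_left, inner_zero_right, sub_zero, mul_one] at e2 e3
  rw [← ho] at e3
  have e4 : (1 - ⟪(σ o : EuclideanSpace ℂ (Fin N)), (u : EuclideanSpace ℂ (Fin N))⟫) *
      (1 - ⟪(v : EuclideanSpace ℂ (Fin N)), L.toFun u⟫) =
      (1 - ⟪(v : EuclideanSpace ℂ (Fin N)), L.toFun 0⟫) *
      (1 - ⟪(σ v : EuclideanSpace ℂ (Fin N)), (u : EuclideanSpace ℂ (Fin N))⟫) := by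
    rw [e3, ← e2] at e1
    apply mul_left_cancel₀ hd
    linear_combination e1
  have e5 := congrArg Complex.log e4
  rw [clog_mul_of_re_pos (one_sub_inner_re_pos v.2 (h.2 u.2))
      (one_sub_inner_re_pos (σ o).2 u.2),
    clog_mul_of_re_pos (one_sub_inner_re_pos (σ v).2 u.2)
      (one_sub_inner_re_pos v.2 (h.2 z0))] at e5
  linear_combination -e5

theorem norm_le_supNorm {N : ℕ} {L : BallLFT N} (h : L.IsSelfMap) {z : EuclideanSpace ℂ (Fin N)}
    (hz : z ∈ Ball N) : ‖L.toFun z‖ ≤ supNorm L.toFun := by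
  refine le_csSup ⟨1, ?_⟩ ⟨z, hz, rfl⟩
  rintro _ ⟨w, hw, rfl⟩
  exact (h.norm_lt hw).le

theorem supNorm_lt_of_const {N : ℕ} {L : BallLFT N} (h : L.IsSelfMap)
    (hc : ∀ z ∈ Ball N, L.toFun z = L.toFun 0) : supNorm L.toFun < 1 := by
  refine lt_of_le_of_lt ?_ (h.norm_lt (z := 0) (by simp))
  refine csSup_le ⟨_, 0, by simp, rfl⟩ ?_
  rintro _ ⟨w, hw, rfl⟩
  simp [hc w hw]

/-- Compactness of `C_φ` if `‖φ‖_∞ < 1`. -/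
theorem compact_of_supNorm {N : ℕ} (S : DirichletSpace N) {L : BallLFT N} (h : L.IsSelfMap)
    {T : S.H →L[ℂ] S.H} (hT : S.IsCompositionOperator L.toFun T) (hs : supNorm L.toFun < 1) :
    IsCompactOperator T := by
  have z0 : (0 : EuclideanSpace ℂ (Fin N)) ∈ Ball N := by simp
  by_cases hnd : ∀ ζ, ‖ζ‖ = 1 → L.den ζ ≠ 0
  · set r := supNorm L.toFun with hr
    have hr0 : 0 ≤ r := (norm_nonneg _).trans (norm_le_supNorm h z0)
    obtain ⟨s, hrs, hs1⟩ := exists_between hs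
    have hs0 : 0 < s := lt_of_le_of_lt hr0 hrs
    have hsc : (s : ℂ) ≠ 0 := by exact_mod_cast hs0.ne'
    let L' : BallLFT N := ⟨(s : ℂ)⁻¹ • L.A, (s : ℂ)⁻¹ • L.B, L.C, L.d⟩
    have hL' : ∀ z, L'.toFun z = (s : ℂ)⁻¹ • L.toFun z := by
      intro z
      rw [L'.toFun_eq, L.toFun_eq, smul_comm]
      have : L'.den z = L.den z := rfl
      rw [this]
      congr 1
      simp [BallLFT.num, BallLFT.op, L', smul_add]
    have hn : ∀ z ∈ Ball N, ‖L'.toFun z‖ ≤ r / s := by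
      intro z hz
      rw [hL', norm_smul, norm_inv, Complex.norm_real, Real.norm_of_nonneg hs0.le,
        inv_mul_eq_div]
      gcongr
      exact norm_le_supNorm h hz
    have hrs1 : r / s < 1 := by rwa [div_lt_one hs0]
    have h' : L'.IsSelfMap := ⟨h.1, fun z hz => by simpa using (hn z hz).trans_lt hrs1⟩
    obtain ⟨σ, hσ⟩ := exists_krein S h' hnd
    obtain ⟨Y, hY⟩ := S.exists_comp (fun u => ⟨L'.toFun u, h'.2 u.2⟩) σ ⟨0, z0⟩ hσ _ hrs1
      (fun w => hn w w.2)
    obtain ⟨D, hD, hDK⟩ := S.exists_dilation s hs0.le hs1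
    have hTY : T = Y.comp D := by
      apply S.ext_kernel
      intro w hw
      apply S.eval_injective
      intro z hz
      have hsw := DirichletSpace.smul_mem hs0.le hs1 hw
      rw [hT _ z hz, ContinuousLinearMap.comp_apply, hDK w hw, hY ⟨_, hsw⟩ ⟨z, hz⟩,
        S.eval_kernel w hw _ (h.2 hz), S.eval_kernel _ hsw _ (h'.2 hz), hL',
        inner_smul_left, inner_smul_right, Complex.conj_ofReal, mul_inv_cancel_left₀ hsc]
    rw [hTY]
    exact hD.clm_comp Y
  · push Not at hnd
    obtain ⟨ζ, hζ, h0⟩ := hnd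
    have hc := h.const_of_degenerate hζ h0
    have hTr : T = (innerSL ℂ (S.kernel (L.toFun 0))).smulRight (S.kernel 0) := by
      ext f
      apply S.eval_injective
      intro z hz
      rw [hT _ z hz, hc z hz, ContinuousLinearMap.smulRight_apply, S.eval_smul,
        S.eval_kernel_zero ⟨z, hz⟩, innerSL_apply_apply, S.reproducing _ _ (h.2 z0), mul_one]
    have hcp : IsCompactOperator (innerSL ℂ (S.kernel (L.toFun 0))) :=
      isCompactOperator_of_locallyCompactSpace_dom _
    rw [hTr]
    exact hcp.clm_comp ((ContinuousLinearMap.id ℂ ℂ).smulRight (S.kernel 0))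


namespace DirichletSpace
variable {N : ℕ} (S : DirichletSpace N)

theorem adjoint_kernel {L : BallLFT N} (h : L.IsSelfMap) {T : S.H →L[ℂ] S.H}
    (hT : S.IsCompositionOperator L.toFun T) {w : EuclideanSpace ℂ (Fin N)} (hw : w ∈ Ball N) :
    ContinuousLinearMap.adjoint T (S.kernel w) = S.kernel (L.toFun w) := by
  refine ext_inner_right ℂ fun f => ?_
  rw [ContinuousLinearMap.adjoint_inner_left, S.reproducing _ _ hw, hT f w hw,
    S.reproducing _ _ (h.2 hw)]

theorem compact_null {T : S.H →L[ℂ] S.H} (hT : IsCompactOperator T) {x : ℕ → S.H} {M : ℝ}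
    (hM : ∀ n, ‖x n‖ ≤ M)
    (hw : ∀ w ∈ Ball N, Tendsto (fun n => ⟪S.kernel w, x n⟫) atTop (𝓝 0)) :
    Tendsto (fun n => ‖ContinuousLinearMap.adjoint T (x n)‖ ^ 2) atTop (𝓝 0) := by
  have hM0 : 0 ≤ M := (norm_nonneg _).trans (hM 0)
  have hlin : ∀ f, Tendsto (fun n => ⟪S.lin f, x n⟫) atTop (𝓝 0) := by
    intro f
    induction f using Finsupp.induction_linear with
    | zero => simp
    | add f g hf hg =>
      simp only [map_add, inner_add_left]
      simpa using hf.add hg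
    | single w c =>
      simp only [lin_single, inner_smul_left]
      simpa using (hw w w.2).const_mul ((starRingEnd ℂ) c)
  obtain ⟨K, hK, hsub⟩ := hT.image_subset_compact_of_bounded
    (S := Metric.closedBall 0 (‖ContinuousLinearMap.adjoint T‖ * M)) (f := (T : S.H →ₗ[ℂ] S.H))
    Metric.isBounded_closedBall
  have hmem : ∀ n, T (ContinuousLinearMap.adjoint T (x n)) ∈ K := fun n =>
    hsub ⟨_, by
      rw [mem_closedBall_zero_iff]
      exact (ContinuousLinearMap.le_opNorm _ _).trans (by gcongr; exact hM n), rfl⟩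
  rw [Metric.tendsto_nhds]
  intro ε hε
  set r := ε / (2 * (M + 1)) with hr
  have hr0 : 0 < r := by positivity
  obtain ⟨t, ht⟩ := hK.elim_finite_subcover (fun f => Metric.ball (S.lin f) r)
    (fun _ => Metric.isOpen_ball) (by
      intro y _
      obtain ⟨f, hf⟩ := S.dense_lin.exists_dist_lt y hr0
      exact mem_iUnion.2 ⟨f, hf⟩)
  have hev : ∀ᶠ n in atTop, ∀ f ∈ t, ‖⟪S.lin f, x n⟫‖ < ε / 2 := by
    rw [Filter.eventually_all_finset]
    intro f _
    have := (Metric.tendsto_nhds.1 (hlin f)) (ε / 2) (by positivity)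
    simpa [dist_eq_norm] using this
  filter_upwards [hev] with n hn
  obtain ⟨f, hf, hfy⟩ : ∃ f ∈ t, T (ContinuousLinearMap.adjoint T (x n)) ∈ Metric.ball (S.lin f) r := by
    simpa using ht (hmem n)
  have h1 : ((‖ContinuousLinearMap.adjoint T (x n)‖ ^ 2 : ℝ) : ℂ) =
      ⟪T (ContinuousLinearMap.adjoint T (x n)), x n⟫ := by
    rw [← ContinuousLinearMap.adjoint_inner_right, inner_self_eq_norm_sq_to_K]
    norm_cast
  have h2 : ⟪T (ContinuousLinearMap.adjoint T (x n)), x n⟫ = 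
     ⟪T (ContinuousLinearMap.adjoint T (x n)) - S.lin f, x n⟫ + ⟪S.lin f, x n⟫ := by
    rw [inner_sub_left]; ring
  have h3 : ‖⟪T (ContinuousLinearMap.adjoint T (x n)) - S.lin f, x n⟫‖ ≤ r * M :=
    (norm_inner_le_norm _ _).trans (by
      gcongr
      · rw [← dist_eq_norm]; exact (mem_ball.1 hfy).le
      · exact hM n)
  have h4 : r * M ≤ ε / 2 := by
    rw [hr, div_mul_eq_mul_div, div_le_div_iff₀ (by positivity) (by positivity)]
    nlinarith
  rw [dist_zero_right, ← Complex.norm_real, h1, h2]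
  calc _ ≤ _ := norm_add_le _ _
    _ < ε := by linarith [hn f hf]

/-- real part of the inner product of two differences of kernels. -/
theorem cross_eq {a b c d : EuclideanSpace ℂ (Fin N)} (ha : a ∈ Ball N) (hb : b ∈ Ball N)
    (hc : c ∈ Ball N) (hd : d ∈ Ball N) :
    (⟪S.kernel a - S.kernel b, S.kernel c - S.kernel d⟫).re =
      -Real.log ‖1 - ⟪a, c⟫‖ + Real.log ‖1 - ⟪a, d⟫‖ + Real.log ‖1 - ⟪b, c⟫‖
        - Real.log ‖1 - ⟪b, d⟫‖ := by
  have key : ∀ {a c : EuclideanSpace ℂ (Fin N)}, a ∈ Ball N → c ∈ Ball N →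
      (⟪S.kernel a, S.kernel c⟫).re = 1 - Real.log ‖1 - ⟪a, c⟫‖ := by
    intro a c ha hc
    rw [← inner_conj_symm, S.reproducing _ _ hc, eval_kernel' S ha hc]
    simp [Complex.log_re]
  simp only [inner_sub_left, inner_sub_right, Complex.sub_re, key ha hc, key ha hd, key hb hc,
    key hb hd]
  ring

theorem four_kernels {a b c d : EuclideanSpace ℂ (Fin N)} (ha : a ∈ Ball N) (hb : b ∈ Ball N)
    (hc : c ∈ Ball N) (hd : d ∈ Ball N)
    (h : S.kernel a + S.kernel b = S.kernel c + S.kernel d) : a = c ∨ a = d := by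
  have key : ∀ x ∈ Ball N, (1 - ⟪a, x⟫) * (1 - ⟪b, x⟫) = (1 - ⟪c, x⟫) * (1 - ⟪d, x⟫) := by
    intro x hx
    have h1 := congrArg (fun f => S.eval f x) h
    simp only [S.eval_add, eval_kernel' S ha hx, eval_kernel' S hb hx, eval_kernel' S hc hx,
      eval_kernel' S hd hx] at h1
    have hne : ∀ {w : EuclideanSpace ℂ (Fin N)}, w ∈ Ball N → 1 - ⟪w, x⟫ ≠ 0 := by
      intro w hw h0
      have := one_sub_inner_re_pos hw hx
      rw [h0] at this; simp at this
    have h2 : Complex.log (1 - ⟪a, x⟫) + Complex.log (1 - ⟪b, x⟫) =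
      Complex.log (1 - ⟪c, x⟫) + Complex.log (1 - ⟪d, x⟫) := by linear_combination -h1
    have h3 := congrArg Complex.exp h2
    rwa [Complex.exp_add, Complex.exp_add, Complex.exp_log (hne ha), Complex.exp_log (hne hb),
      Complex.exp_log (hne hc), Complex.exp_log (hne hd)] at h3
  have key2 : ∀ x ∈ Ball N, ⟪a - c, x⟫ * ⟪a - d, x⟫ = 0 := by
    intro x hx
    have h1 := key x hx
    have h2 := key (-x) (by simpa using hx)
    simp only [inner_neg_right] at h2
    rw [inner_sub_left, inner_sub_left]
    linear_combination (-(1 + ⟪a, x⟫) / 2) * h1 + ((⟪a, x⟫ - 1) / 2 + 1) * h2 - h2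
  by_contra hcon
  push Not at hcon
  have hp : a - c ≠ 0 := sub_ne_zero.2 hcon.1
  have hq : a - d ≠ 0 := sub_ne_zero.2 hcon.2
  have key3 : ∀ x, ⟪a - c, x⟫ * ⟪a - d, x⟫ = 0 := by
    intro x
    have hr : (0 : ℝ) < (‖x‖ + 1)⁻¹ := by positivity
    have hrc : (((‖x‖ + 1)⁻¹ : ℝ) : ℂ) ≠ 0 := by exact_mod_cast hr.ne'
    have h1 := key2 ((((‖x‖ + 1)⁻¹ : ℝ) : ℂ) • x) (by
      rw [mem_ball_zero_iff, norm_smul, Complex.norm_real, Real.norm_of_nonneg hr.le,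
        inv_mul_lt_iff₀ (by positivity)]
      linarith)
    rw [inner_smul_right, inner_smul_right] at h1
    have h2 : (((‖x‖ + 1)⁻¹ : ℝ) : ℂ) ^ 2 * (⟪a - c, x⟫ * ⟪a - d, x⟫) = 0 := by
      linear_combination h1
    exact (mul_eq_zero.1 h2).resolve_left (pow_ne_zero _ hrc)
  have h1 : ⟪a - d, a - c⟫ = 0 :=
    (mul_eq_zero.1 (key3 (a - c))).resolve_left (inner_self_ne_zero.2 hp)
  have h2 := key3 ((a - c) + (a - d))
  rw [inner_add_right, inner_add_right, h1, inner_eq_zero_symm.1 h1, zero_add, add_zero] at h2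
  rcases mul_eq_zero.1 h2 with h | h
  · exact hp (inner_self_eq_zero.1 h)
  · exact hq (inner_self_eq_zero.1 h)

end DirichletSpace


/-! ### Heisenberg flow fixing a boundary point -/

/-- `1 - ⟨z, ζ⟩`. -/
def dlt {N : ℕ} (ζ z : EuclideanSpace ℂ (Fin N)) : ℂ := 1 - ⟪ζ, z⟫

/-- The increment `i t (1 - ⟨z, ζ⟩)`. -/
def inc {N : ℕ} (ζ : EuclideanSpace ℂ (Fin N)) (t : ℝ) (z : EuclideanSpace ℂ (Fin N)) : ℂ :=
  Complex.I * t * dlt ζ z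

/-- The parabolic flow. -/
def flow {N : ℕ} (ζ : EuclideanSpace ℂ (Fin N)) (t : ℝ) (z : EuclideanSpace ℂ (Fin N)) :
    EuclideanSpace ℂ (Fin N) :=
  (1 + inc ζ t z)⁻¹ • (z + inc ζ t z • ζ)

section flow
variable {N : ℕ} {ζ : EuclideanSpace ℂ (Fin N)}

theorem dlt_re_pos (hζ : ‖ζ‖ = 1) {z : EuclideanSpace ℂ (Fin N)} (hz : z ∈ Ball N) :
    0 < (dlt ζ z).re := by
  have h1 : ‖⟪ζ, z⟫‖ < 1 := by
    refine (norm_inner_le_norm _ _).trans_lt ?_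
    rw [hζ, one_mul]; simpa using hz
  have h2 := (Complex.re_le_norm ⟪ζ, z⟫)
  simp only [dlt, Complex.sub_re, Complex.one_re]
  linarith

theorem dlt_ne (hζ : ‖ζ‖ = 1) {z : EuclideanSpace ℂ (Fin N)} (hz : z ∈ Ball N) :
    dlt ζ z ≠ 0 := by
  intro h
  have := dlt_re_pos hζ hz
  rw [h] at this; simp at this

theorem one_add_inc_ne (hζ : ‖ζ‖ = 1) (t : ℝ) {z : EuclideanSpace ℂ (Fin N)} (hz : z ∈ Ball N) :
    1 + inc ζ t z ≠ 0 := by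
  intro h
  have h1 := congrArg Complex.im h
  have h2 := congrArg Complex.re h
  simp [inc] at h1 h2
  rcases h1 with h1 | h1
  · simp [h1] at h2
  · exact (dlt_re_pos hζ hz).ne' h1

theorem flow_zero (z : EuclideanSpace ℂ (Fin N)) : flow ζ 0 z = z := by
  simp [flow, inc]

theorem flow_mem (hζ : ‖ζ‖ = 1) (t : ℝ) {z : EuclideanSpace ℂ (Fin N)} (hz : z ∈ Ball N) :
    flow ζ t z ∈ Ball N := by
  have hne := one_add_inc_ne hζ t hz
  have hz1 : ‖z‖ < 1 := by simpa using hz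
  rw [mem_ball_zero_iff, flow, norm_smul, norm_inv, inv_mul_lt_iff₀ (norm_pos_iff.2 hne), mul_one]
  refine lt_of_pow_lt_pow_left₀ 2 (norm_nonneg _) ?_
  have e1 : ‖z + inc ζ t z • ζ‖ ^ 2 = ‖z‖ ^ 2 + 2 * (inc ζ t z * ⟪z, ζ⟫).re + ‖inc ζ t z‖ ^ 2 := by
    rw [@norm_add_sq ℂ, inner_smul_right, norm_smul, hζ, mul_one]; rfl
  have e2 : ‖1 + inc ζ t z‖ ^ 2 = 1 + 2 * (inc ζ t z).re + ‖inc ζ t z‖ ^ 2 := by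
    rw [Complex.sq_norm, Complex.sq_norm, Complex.normSq_apply, Complex.normSq_apply]
    simp; ring
  have e3 : ⟪z, ζ⟫ = 1 - (starRingEnd ℂ) (dlt ζ z) := by
    simp [dlt]
  have e4 : (inc ζ t z * ⟪z, ζ⟫).re = (inc ζ t z).re := by
    rw [e3]; simp [inc]; ring
  rw [e1, e2, e4]
  nlinarith [norm_nonneg z]

theorem flow_tendsto (hζ : ‖ζ‖ = 1) {z : EuclideanSpace ℂ (Fin N)} (hz : z ∈ Ball N) :
    Tendsto (fun n : ℕ => flow ζ n z) atTop (𝓝 ζ) := by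
  have e : ∀ n : ℕ, flow ζ n z = ζ + (1 + inc ζ n z)⁻¹ • (z - ζ) := by
    intro n
    have hne := one_add_inc_ne hζ n hz
    rw [flow, inv_smul_eq_iff₀ hne, smul_add, smul_inv_smul₀ hne]
    module
  simp only [e]
  have h1 : Tendsto (fun n : ℕ => 1 + inc ζ n z) atTop (Bornology.cobounded ℂ) := by
    rw [← tendsto_norm_atTop_iff_cobounded]
    refine tendsto_atTop_mono (f := fun n : ℕ => (n : ℝ) * (dlt ζ z).re) (fun n => ?_)
      (tendsto_natCast_atTop_atTop.atTop_mul_const (dlt_re_pos hζ hz))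
    refine le_trans (le_of_eq ?_) (Complex.im_le_norm _)
    simp [inc]
  have h2 := (tendsto_inv₀_cobounded.comp h1).smul_const (z - ζ)
  simpa using h2.const_add ζ

end flow

namespace BallLFT
variable {N : ℕ} (L : BallLFT N) (ζ : EuclideanSpace ℂ (Fin N)) 

/-- Homogeneous denominators along the flow. -/
def lam (t : ℝ) (z : EuclideanSpace ℂ (Fin N)) : ℂ := L.den z + inc ζ t z * L.den ζ
/-- Homogeneous numerators along the flow. -/
def vec (t : ℝ) (z : EuclideanSpace ℂ (Fin N)) : EuclideanSpace ℂ (Fin N) :=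
  L.num z + inc ζ t z • L.num ζ

variable {ζ} {L}

theorem den_flow (hζ : ‖ζ‖ = 1) (t : ℝ) {z : EuclideanSpace ℂ (Fin N)} (hz : z ∈ Ball N) :
    (1 + inc ζ t z) * L.den (flow ζ t z) = L.lam ζ t z := by
  have hne := one_add_inc_ne hζ t hz
  simp only [den, lam, flow, inner_smul_right, inner_add_right]
  field_simp
  ring

theorem num_flow (hζ : ‖ζ‖ = 1) (t : ℝ) {z : EuclideanSpace ℂ (Fin N)} (hz : z ∈ Ball N) :
    (1 + inc ζ t z) • L.num (flow ζ t z) = L.vec ζ t z := by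
  have hne := one_add_inc_ne hζ t hz
  simp only [num, vec, flow, map_smul, map_add, smul_add, smul_inv_smul₀ hne, add_smul, one_smul]
  module

theorem lam_ne (h : L.IsSelfMap) (hζ : ‖ζ‖ = 1) (t : ℝ) {z : EuclideanSpace ℂ (Fin N)}
    (hz : z ∈ Ball N) : L.lam ζ t z ≠ 0 := by
  rw [← den_flow hζ t hz]
  exact mul_ne_zero (one_add_inc_ne hζ t hz) (h.den_ne (flow_mem hζ t hz))

theorem smul_toFun (h : L.IsSelfMap) (hζ : ‖ζ‖ = 1) (t : ℝ) {z : EuclideanSpace ℂ (Fin N)}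
    (hz : z ∈ Ball N) : L.lam ζ t z • L.toFun (flow ζ t z) = L.vec ζ t z := by
  rw [← den_flow hζ t hz, toFun_eq, mul_smul, smul_inv_smul₀ (h.den_ne (flow_mem hζ t hz)),
    num_flow hζ t hz]

/-- homogeneous form of `1 - ⟨L₁ z_t, L₂ w_t⟩`. -/
def gram (L₁ L₂ : BallLFT N) (ζ : EuclideanSpace ℂ (Fin N)) (t : ℝ)
    (z w : EuclideanSpace ℂ (Fin N)) : ℂ :=
  (starRingEnd ℂ) (L₁.lam ζ t z) * L₂.lam ζ t w - ⟪L₁.vec ζ t z, L₂.vec ζ t w⟫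

theorem gram_eq {L₁ L₂ : BallLFT N} (h₁ : L₁.IsSelfMap) (h₂ : L₂.IsSelfMap) (hζ : ‖ζ‖ = 1) (t : ℝ)
    {z w : EuclideanSpace ℂ (Fin N)} (hz : z ∈ Ball N) (hw : w ∈ Ball N) :
    gram L₁ L₂ ζ t z w = (starRingEnd ℂ) (L₁.lam ζ t z) * L₂.lam ζ t w *
      (1 - ⟪L₁.toFun (flow ζ t z), L₂.toFun (flow ζ t w)⟫) := by
  rw [gram, ← smul_toFun h₁ hζ t hz, ← smul_toFun h₂ hζ t hw, inner_smul_left, inner_smul_right]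
  ring

theorem gram_ne {L₁ L₂ : BallLFT N} (h₁ : L₁.IsSelfMap) (h₂ : L₂.IsSelfMap) (hζ : ‖ζ‖ = 1) (t : ℝ)
    {z w : EuclideanSpace ℂ (Fin N)} (hz : z ∈ Ball N) (hw : w ∈ Ball N) :
    gram L₁ L₂ ζ t z w ≠ 0 := by
  rw [gram_eq h₁ h₂ hζ t hz hw]
  refine mul_ne_zero (mul_ne_zero ?_ (lam_ne h₂ hζ t hw)) ?_
  · simpa using lam_ne h₁ hζ t hz
  · intro h0
    have := one_sub_inner_re_pos (h₁.2 (flow_mem hζ t hz)) (h₂.2 (flow_mem hζ t hw))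
    rw [h0] at this; simp at this

theorem gram_expand (L₁ L₂ : BallLFT N) (t : ℝ) (z w : EuclideanSpace ℂ (Fin N)) :
    gram L₁ L₂ ζ t z w = gram L₁ L₂ ζ 0 z w
      + Complex.I * t * (dlt ζ w * ((starRingEnd ℂ) (L₁.den z) * L₂.den ζ - ⟪L₁.num z, L₂.num ζ⟫)
        - (starRingEnd ℂ) (dlt ζ z) *
            ((starRingEnd ℂ) (L₁.den ζ) * L₂.den w - ⟪L₁.num ζ, L₂.num w⟫))
      + t ^ 2 * ((starRingEnd ℂ) (dlt ζ z) * dlt ζ w *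
          ((starRingEnd ℂ) (L₁.den ζ) * L₂.den ζ - ⟪L₁.num ζ, L₂.num ζ⟫)) := by
  simp only [gram, lam, vec, inc, inner_add_left, inner_add_right, inner_smul_left,
    inner_smul_right, map_add, map_mul, Complex.conj_I, Complex.conj_ofReal, Complex.ofReal_zero, map_zero]
  linear_combination (-(t : ℂ) ^ 2 * ((starRingEnd ℂ) (dlt ζ z) * dlt ζ w *
          ((starRingEnd ℂ) (L₁.den ζ) * L₂.den ζ - ⟪L₁.num ζ, L₂.num ζ⟫))) * Complex.I_sq

theorem num_of_toFun {η : EuclideanSpace ℂ (Fin N)} (h0 : L.den ζ ≠ 0) (h : L.toFun ζ = η) :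
    L.num ζ = L.den ζ • η := by
  rw [← h, toFun_eq, smul_inv_smul₀ h0]

theorem julia' {η : EuclideanSpace ℂ (Fin N)} (h : L.IsSelfMap) (hζ : ‖ζ‖ = 1) (hη : ‖η‖ = 1)
    (h0 : L.den ζ ≠ 0) (he : L.toFun ζ = η) :
    ∃ k : ℂ, ∀ z, L.den z - ⟪η, L.num z⟫ = k * dlt ζ z := by
  refine ⟨_, h.julia hη.le hζ ?_⟩
  rw [num_of_toFun h0 he, inner_smul_right, inner_self_eq_norm_sq_to_K, hη]
  simp

theorem gram_linear {L₁ L₂ : BallLFT N} {η : EuclideanSpace ℂ (Fin N)} (h₁ : L₁.IsSelfMap)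
    (h₂ : L₂.IsSelfMap) (hζ : ‖ζ‖ = 1) (hη : ‖η‖ = 1) (n₁ : L₁.den ζ ≠ 0) (n₂ : L₂.den ζ ≠ 0)
    (e₁ : L₁.toFun ζ = η) (e₂ : L₂.toFun ζ = η) :
    ∃ κ : ℂ, ∀ t z w, gram L₁ L₂ ζ t z w = gram L₁ L₂ ζ 0 z w +
      Complex.I * (t : ℝ) * ((starRingEnd ℂ) (dlt ζ z) * dlt ζ w * κ) := by
  obtain ⟨k₁, hk₁⟩ := julia' h₁ hζ hη n₁ e₁
  obtain ⟨k₂, hk₂⟩ := julia' h₂ hζ hη n₂ e₂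
  refine ⟨(starRingEnd ℂ) k₁ * L₂.den ζ - (starRingEnd ℂ) (L₁.den ζ) * k₂, fun t z w => ?_⟩
  have hk₁' := congrArg (starRingEnd ℂ) (hk₁ z)
  simp only [map_sub, map_mul, inner_conj_symm] at hk₁'
  have hηη : ⟪η, η⟫ = 1 := by rw [inner_self_eq_norm_sq_to_K, hη]; simp
  rw [gram_expand, num_of_toFun n₁ e₁, num_of_toFun n₂ e₂]
  simp only [inner_smul_left, inner_smul_right, hηη]
  linear_combination Complex.I * t * dlt ζ w * L₂.den ζ * hk₁' -
    Complex.I * t * (starRingEnd ℂ) (dlt ζ z) * (starRingEnd ℂ) (L₁.den ζ) * hk₂ w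

theorem gram_const {η : EuclideanSpace ℂ (Fin N)} (h : L.IsSelfMap) (hζ : ‖ζ‖ = 1) (hη : ‖η‖ = 1)
    (n : L.den ζ ≠ 0) (e : L.toFun ζ = η) (t : ℝ) (z w : EuclideanSpace ℂ (Fin N)) :
    gram L L ζ t z w = gram L L ζ 0 z w := by
  obtain ⟨κ, hκ⟩ := gram_linear h h hζ hη n n e e
  have z0 : (0 : EuclideanSpace ℂ (Fin N)) ∈ Ball N := by simp
  have hpos : ∀ t : ℝ, 0 < (gram L L ζ t 0 0).re ∧ (gram L L ζ t 0 0).im = 0 := by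
    intro t
    have hlt := h.norm_lt (flow_mem hζ t z0)
    have hl := norm_pos_iff.2 (lam_ne h hζ t z0)
    have : gram L L ζ t 0 0 = ((‖L.lam ζ t 0‖ ^ 2 * (1 - ‖L.toFun (flow ζ t 0)‖ ^ 2) : ℝ) : ℂ) := by
      rw [gram_eq h h hζ t z0 z0, inner_self_eq_norm_sq_to_K, Complex.conj_mul']
      simp
    rw [this]
    refine ⟨?_, Complex.ofReal_im _⟩
    rw [Complex.ofReal_re]
    have : ‖L.toFun (flow ζ t 0)‖ ^ 2 < 1 := by nlinarith [norm_nonneg (L.toFun (flow ζ t 0))]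
    have := sub_pos.2 this
    positivity
  have hd : dlt ζ 0 = 1 := by simp [dlt]
  have him : κ.re = 0 := by
    have h1 := (hpos 1).2
    rw [hκ, hd] at h1
    simpa [(hpos 0).2] using h1
  have hre : κ.im = 0 := by
    by_contra hne
    have h1 := (hpos ((gram L L ζ 0 0 0).re / κ.im)).1
    rw [hκ, hd] at h1
    simp [hne] at h1
  have : κ = 0 := Complex.ext him hre
  rw [hκ, this]; simp

end BallLFT


namespace BallLFT
variable {N : ℕ} {ζ : EuclideanSpace ℂ (Fin N)} (S : DirichletSpace N)

/-- Difference of kernels along the flow. -/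
def kd (L : BallLFT N) (ζ : EuclideanSpace ℂ (Fin N)) (t : ℝ)
    (z w : EuclideanSpace ℂ (Fin N)) : S.H :=
  S.kernel (L.toFun (flow ζ t z)) - S.kernel (L.toFun (flow ζ t w))

theorem cross_gram {L₁ L₂ : BallLFT N} (h₁ : L₁.IsSelfMap) (h₂ : L₂.IsSelfMap) (hζ : ‖ζ‖ = 1)
    (t : ℝ) {z w : EuclideanSpace ℂ (Fin N)} (hz : z ∈ Ball N) (hw : w ∈ Ball N) :
    (⟪kd S L₁ ζ t z w, kd S L₂ ζ t z w⟫).re =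
      -Real.log ‖gram L₁ L₂ ζ t z z‖ + Real.log ‖gram L₁ L₂ ζ t z w‖
      + Real.log ‖gram L₁ L₂ ζ t w z‖ - Real.log ‖gram L₁ L₂ ζ t w w‖ := by
  have key : ∀ {z w : EuclideanSpace ℂ (Fin N)}, z ∈ Ball N → w ∈ Ball N →
      Real.log ‖gram L₁ L₂ ζ t z w‖ = Real.log ‖L₁.lam ζ t z‖ + Real.log ‖L₂.lam ζ t w‖ +
      Real.log ‖1 - ⟪L₁.toFun (flow ζ t z), L₂.toFun (flow ζ t w)⟫‖ := by
    intro z w hz hw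
    have hne := gram_ne h₁ h₂ hζ t hz hw
    rw [gram_eq h₁ h₂ hζ t hz hw] at hne ⊢
    have h3 := right_ne_zero_of_mul hne
    rw [norm_mul, norm_mul, RCLike.norm_conj, Real.log_mul, Real.log_mul]
    · exact norm_ne_zero_iff.2 (lam_ne h₁ hζ t hz)
    · exact norm_ne_zero_iff.2 (lam_ne h₂ hζ t hw)
    · exact mul_ne_zero (norm_ne_zero_iff.2 (lam_ne h₁ hζ t hz))
        (norm_ne_zero_iff.2 (lam_ne h₂ hζ t hw))
    · exact norm_ne_zero_iff.2 h3
  rw [kd, kd, S.cross_eq (h₁.2 (flow_mem hζ t hz)) (h₁.2 (flow_mem hζ t hw))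
    (h₂.2 (flow_mem hζ t hz)) (h₂.2 (flow_mem hζ t hw)), key hz hz, key hz hw, key hw hz, key hw hw]
  ring

theorem cross_const {L₁ L₂ : BallLFT N} (h₁ : L₁.IsSelfMap) (h₂ : L₂.IsSelfMap) (hζ : ‖ζ‖ = 1)
    (hc : ∀ t z w, gram L₁ L₂ ζ t z w = gram L₁ L₂ ζ 0 z w)
    (t : ℝ) {z w : EuclideanSpace ℂ (Fin N)} (hz : z ∈ Ball N) (hw : w ∈ Ball N) :
    (⟪kd S L₁ ζ t z w, kd S L₂ ζ t z w⟫).re = (⟪kd S L₁ ζ 0 z w, kd S L₂ ζ 0 z w⟫).re := by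
  rw [cross_gram S h₁ h₂ hζ t hz hw, cross_gram S h₁ h₂ hζ 0 hz hw]
  simp only [hc t]

theorem cross_tendsto {L₁ L₂ : BallLFT N} (h₁ : L₁.IsSelfMap) (h₂ : L₂.IsSelfMap) (hζ : ‖ζ‖ = 1)
    (k : ℕ) (q : ℝ) (hq : q ≠ 0)
    (hc : ∀ z ∈ Ball N, ∀ w ∈ Ball N, Tendsto (fun n : ℕ => ‖gram L₁ L₂ ζ n z w‖ / (n : ℝ) ^ k) atTop
      (𝓝 (‖dlt ζ z‖ * ‖dlt ζ w‖ * q)))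
    {z w : EuclideanSpace ℂ (Fin N)} (hz : z ∈ Ball N) (hw : w ∈ Ball N) :
    Tendsto (fun n : ℕ => (⟪kd S L₁ ζ n z w, kd S L₂ ζ n z w⟫).re) atTop (𝓝 0) := by
  have hz0 := norm_ne_zero_iff.2 (dlt_ne hζ hz)
  have hw0 := norm_ne_zero_iff.2 (dlt_ne hζ hw)
  have key : ∀ {z w : EuclideanSpace ℂ (Fin N)}, z ∈ Ball N → w ∈ Ball N →
      Tendsto (fun n : ℕ => Real.log (‖gram L₁ L₂ ζ n z w‖ / (n : ℝ) ^ k)) atTop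
      (𝓝 (Real.log ‖dlt ζ z‖ + Real.log ‖dlt ζ w‖ + Real.log q)) := by
    intro z w hz hw
    have hz0 := norm_ne_zero_iff.2 (dlt_ne hζ hz)
    have hw0 := norm_ne_zero_iff.2 (dlt_ne hζ hw)
    rw [← Real.log_mul hz0 hw0, ← Real.log_mul (mul_ne_zero hz0 hw0) hq]
    exact (hc z hz w hw).log (mul_ne_zero (mul_ne_zero hz0 hw0) hq)
  have h := (((key hz hz).neg.add (key hz hw)).add (key hw hz)).sub (key hw hw)
  refine (h.congr' ?_).trans (le_of_eq (congrArg 𝓝 (by ring)))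
  filter_upwards [eventually_gt_atTop 0] with n hn
  have hn0 : (n : ℝ) ^ k ≠ 0 := pow_ne_zero _ (by exact_mod_cast hn.ne')
  have e : ∀ {z w : EuclideanSpace ℂ (Fin N)}, z ∈ Ball N → w ∈ Ball N →
      Real.log (‖gram L₁ L₂ ζ n z w‖ / (n : ℝ) ^ k) =
        Real.log ‖gram L₁ L₂ ζ n z w‖ - Real.log ((n : ℝ) ^ k) := fun hz hw =>
    Real.log_div (norm_ne_zero_iff.2 (gram_ne h₁ h₂ hζ n hz hw)) hn0
  rw [cross_gram S h₁ h₂ hζ n hz hw, e hz hz, e hz hw, e hw hz, e hw hw]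
  ring

/-- limit of a linear function divided by `n`. -/
theorem lim_lin (a b : ℂ) : Tendsto (fun n : ℕ => ‖a + n * b‖ / (n : ℝ) ^ 1) atTop (𝓝 ‖b‖) := by
  have h : Tendsto (fun n : ℕ => ‖a * (n : ℂ)⁻¹ + b‖) atTop (𝓝 ‖a * 0 + b‖) :=
    ((tendsto_inv_atTop_nhds_zero_nat (𝕜 := ℂ)).const_mul a |>.add_const b).norm
  rw [mul_zero, zero_add] at h
  refine h.congr' ?_
  filter_upwards [eventually_gt_atTop 0] with n hn
  have hn0 : (n : ℂ) ≠ 0 := by exact_mod_cast hn.ne'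
  have : a * (n : ℂ)⁻¹ + b = (a + n * b) / n := by field_simp
  rw [this, norm_div, Complex.norm_natCast, pow_one]

theorem lim_quad (a b c : ℂ) :
    Tendsto (fun n : ℕ => ‖a + n * b + n ^ 2 * c‖ / (n : ℝ) ^ 2) atTop (𝓝 ‖c‖) := by
  have h0 := tendsto_inv_atTop_nhds_zero_nat (𝕜 := ℂ)
  have h : Tendsto (fun n : ℕ => ‖a * ((n : ℂ)⁻¹ * (n : ℂ)⁻¹) + b * (n : ℂ)⁻¹ + c‖) atTop
      (𝓝 ‖a * (0 * 0) + b * 0 + c‖) :=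
    ((((h0.mul h0).const_mul a).add (h0.const_mul b)).add_const c).norm
  rw [mul_zero, mul_zero, mul_zero, zero_add, zero_add] at h
  refine h.congr' ?_
  filter_upwards [eventually_gt_atTop 0] with n hn
  have hn0 : (n : ℂ) ≠ 0 := by exact_mod_cast hn.ne'
  have : a * ((n : ℂ)⁻¹ * (n : ℂ)⁻¹) + b * (n : ℂ)⁻¹ + c = (a + n * b + n ^ 2 * c) / n ^ 2 := by
    field_simp
  rw [this, norm_div, norm_pow, Complex.norm_natCast]

/-- The identity map. -/
def idm (N : ℕ) : BallLFT N := ⟨1, 0, 0, 1⟩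

theorem idm_apply (z : EuclideanSpace ℂ (Fin N)) : (idm N).toFun z = z := by
  simp [idm, toFun]

theorem idm_self : (idm N).IsSelfMap :=
  ⟨fun z _ => by simp [idm], fun z hz => by rwa [idm_apply]⟩

theorem kd_idm (t : ℝ) (z w : EuclideanSpace ℂ (Fin N)) :
    kd S (idm N) ζ t z w = S.kernel (flow ζ t z) - S.kernel (flow ζ t w) := by
  simp only [kd, idm_apply]

theorem kd_idm_norm (hζ : ‖ζ‖ = 1) (t : ℝ) {z w : EuclideanSpace ℂ (Fin N)}
    (hz : z ∈ Ball N) (hw : w ∈ Ball N) :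
    ‖kd S (idm N) ζ t z w‖ = ‖kd S (idm N) ζ 0 z w‖ := by
  have h := cross_const S idm_self idm_self hζ
    (gram_const idm_self hζ hζ (by simp [idm, den]) (idm_apply ζ)) t hz hw
  rw [inner_self_eq_norm_sq_to_K, inner_self_eq_norm_sq_to_K] at h
  norm_cast at h
  exact (pow_left_inj₀ (norm_nonneg _) (norm_nonneg _) two_ne_zero).1 h

theorem kernel_tendsto (hζ : ‖ζ‖ = 1) {u : EuclideanSpace ℂ (Fin N)} (hu : u ∈ Ball N)
    {z : EuclideanSpace ℂ (Fin N)} (hz : z ∈ Ball N) :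
    Tendsto (fun n : ℕ => ⟪S.kernel u, S.kernel (flow ζ n z)⟫) atTop
      (𝓝 ((starRingEnd ℂ) (1 - Complex.log (1 - ⟪u, ζ⟫)))) := by
  have e : ∀ n : ℕ, ⟪S.kernel u, S.kernel (flow ζ n z)⟫ =
      (starRingEnd ℂ) (1 - Complex.log (1 - ⟪u, flow ζ n z⟫)) := by
    intro n
    rw [← inner_conj_symm, S.reproducing _ _ (flow_mem hζ n hz), eval_kernel' S hu (flow_mem hζ n hz)]
  simp only [e]
  refine (Complex.continuous_conj.tendsto _).comp ?_
  refine Tendsto.const_sub 1 ?_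
  have h1 : 0 < (1 - ⟪u, ζ⟫).re := by
    have := dlt_re_pos hζ hu
    rw [dlt] at this
    rw [← inner_conj_symm u ζ]
    simpa only [Complex.sub_re, Complex.conj_re] using this
  refine Tendsto.clog ?_ (Or.inl h1)
  have h2 : Continuous fun v : EuclideanSpace ℂ (Fin N) => 1 - ⟪u, v⟫ := by fun_prop
  exact (h2.tendsto ζ).comp (flow_tendsto hζ hz)

theorem self_re (a : S.H) : (⟪a, a⟫).re = ‖a‖ ^ 2 := inner_self_eq_norm_sq (𝕜 := ℂ) a

theorem main_null {L₁ L₂ : BallLFT N} (h₁ : L₁.IsSelfMap) (h₂ : L₂.IsSelfMap) (hζ : ‖ζ‖ = 1)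
    {T₁ T₂ : S.H →L[ℂ] S.H} (hT₁ : S.IsCompositionOperator L₁.toFun T₁)
    (hT₂ : S.IsCompositionOperator L₂.toFun T₂) (hK : IsCompactOperator ⇑(T₁ - T₂))
    {z w : EuclideanSpace ℂ (Fin N)} (hz : z ∈ Ball N) (hw : w ∈ Ball N) :
    Tendsto (fun n : ℕ => ‖kd S L₁ ζ n z w - kd S L₂ ζ n z w‖ ^ 2) atTop (𝓝 0) := by
  have h := S.compact_null hK (x := fun n : ℕ => kd S (idm N) ζ n z w)
    (M := ‖kd S (idm N) ζ 0 z w‖) (fun n => (kd_idm_norm S hζ n hz hw).le) (by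
      intro u hu
      simp only [kd_idm, inner_sub_right]
      simpa using (kernel_tendsto S hζ hu hz).sub (kernel_tendsto S hζ hu hw))
  refine h.congr fun n => ?_
  congr 2
  rw [map_sub, kd_idm, sub_apply, map_sub, map_sub,
    S.adjoint_kernel h₁ hT₁ (flow_mem hζ n hz), S.adjoint_kernel h₁ hT₁ (flow_mem hζ n hw),
    S.adjoint_kernel h₂ hT₂ (flow_mem hζ n hz), S.adjoint_kernel h₂ hT₂ (flow_mem hζ n hw)]
  rfl

theorem expand_sq (a b : S.H) : ‖a - b‖ ^ 2 = (⟪a, a⟫).re - 2 * (⟪a, b⟫).re + (⟪b, b⟫).re := by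
  rw [@norm_sub_sq ℂ, inner_self_eq_norm_sq_to_K, inner_self_eq_norm_sq_to_K]
  norm_cast

theorem kernel_inj {a b : EuclideanSpace ℂ (Fin N)} (ha : a ∈ Ball N) (hb : b ∈ Ball N)
    (h : S.kernel a = S.kernel b) : a = b := by
  rcases S.four_kernels ha ha hb hb (by rw [h]) with h | h <;> exact h

/-- Nondegenerate case of the main argument. -/
theorem main_aux {L₁ L₂ : BallLFT N} (h₁ : L₁.IsSelfMap) (h₂ : L₂.IsSelfMap)
    {T₁ T₂ : S.H →L[ℂ] S.H} (hT₁ : S.IsCompositionOperator L₁.toFun T₁)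
    (hT₂ : S.IsCompositionOperator L₂.toFun T₂) (hK : IsCompactOperator ⇑(T₁ - T₂))
    (hne : ¬ EqOn L₁.toFun L₂.toFun (Ball N)) (hζ : ‖ζ‖ = 1) (hη : ‖L₁.toFun ζ‖ = 1)
    (n₁ : L₁.den ζ ≠ 0) (n₂ : L₂.den ζ ≠ 0) : ∀ z ∈ Ball N, L₁.toFun z = L₁.toFun 0 := by
  have z0 : (0 : EuclideanSpace ℂ (Fin N)) ∈ Ball N := by simp
  have c₁ := gram_const h₁ hζ hη n₁ rfl
  -- the case where the cross term vanishes in the limit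
  have A : (∀ z ∈ Ball N, ∀ w ∈ Ball N,
      Tendsto (fun n : ℕ => (⟪kd S L₁ ζ n z w, kd S L₂ ζ n z w⟫).re) atTop (𝓝 0)) →
      ∀ z ∈ Ball N, L₁.toFun z = L₁.toFun 0 := by
    intro hcr z hz
    have hlim := (main_null S h₁ h₂ hζ hT₁ hT₂ hK hz z0).add ((hcr z hz 0 z0).const_mul 2)
    have hle : (⟪kd S L₁ ζ 0 z 0, kd S L₁ ζ 0 z 0⟫).re ≤ 0 + 2 * 0 := by
      refine ge_of_tendsto' hlim fun n => ?_
      rw [expand_sq, cross_const S h₁ h₁ hζ c₁ n hz z0]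
      have : 0 ≤ (⟪kd S L₂ ζ n z 0, kd S L₂ ζ n z 0⟫).re := by
        rw [self_re]; positivity
      linarith
    rw [self_re] at hle
    have h0 : kd S L₁ ζ 0 z 0 = 0 := by
      rw [← norm_eq_zero]
      nlinarith [norm_nonneg (kd S L₁ ζ 0 z 0)]
    rw [kd, flow_zero, flow_zero, sub_eq_zero] at h0
    exact kernel_inj S (h₁.2 hz) (h₁.2 z0) h0
  set Q := (starRingEnd ℂ) (L₁.den ζ) * L₂.den ζ - ⟪L₁.num ζ, L₂.num ζ⟫ with hQ
  by_cases hQ0 : Q = 0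
  · have e₂ : L₂.toFun ζ = L₁.toFun ζ := by
      refine eq_of_inner_eq_one (h₂.norm_le hζ.le) hη ?_
      rw [num_of_toFun n₁ rfl, num_of_toFun n₂ rfl, inner_smul_left, inner_smul_right] at hQ
      have h1 : 1 - ⟪L₁.toFun ζ, L₂.toFun ζ⟫ = 0 := by
        have h2 : (starRingEnd ℂ) (L₁.den ζ) * L₂.den ζ * (1 - ⟪L₁.toFun ζ, L₂.toFun ζ⟫) = 0 := by
          rw [← hQ0, hQ]; ring
        exact (mul_eq_zero.1 h2).resolve_left (mul_ne_zero (by simpa using n₁) n₂)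
      rw [← inner_conj_symm, ← sub_eq_zero.1 h1, map_one]
    have c₂ := gram_const h₂ hζ hη n₂ e₂
    obtain ⟨κ, hκ⟩ := gram_linear h₁ h₂ hζ hη n₁ n₂ rfl e₂
    by_cases hκ0 : κ = 0
    · have c₁₂ : ∀ t z w, gram L₁ L₂ ζ t z w = gram L₁ L₂ ζ 0 z w := by
        intro t z w; rw [hκ, hκ0]; simp
      have hz : ∀ z ∈ Ball N, ∀ w ∈ Ball N, kd S L₁ ζ 0 z w = kd S L₂ ζ 0 z w := by
        intro z hz w hw
        have hlim := main_null S h₁ h₂ hζ hT₁ hT₂ hK hz hw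
        simp only [expand_sq, cross_const S h₁ h₁ hζ c₁ _ hz hw, cross_const S h₂ h₂ hζ c₂ _ hz hw,
          cross_const S h₁ h₂ hζ c₁₂ _ hz hw] at hlim
        rw [← expand_sq] at hlim
        have := tendsto_nhds_unique hlim tendsto_const_nhds
        rw [← sub_eq_zero, ← norm_eq_zero]
        exact pow_eq_zero_iff two_ne_zero |>.1 this.symm
      obtain ⟨z, hzB, hzne⟩ : ∃ z ∈ Ball N, L₁.toFun z ≠ L₂.toFun z := by
        simpa [EqOn] using hne
      have hall : ∀ w ∈ Ball N, L₁.toFun z = L₁.toFun w := by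
        intro w hw
        have h := hz z hzB w hw
        simp only [kd, flow_zero] at h
        rcases S.four_kernels (h₁.2 hzB) (h₂.2 hw) (h₁.2 hw) (h₂.2 hzB)
          (by rw [← sub_eq_zero] at h ⊢; rw [← h]; abel) with h | h
        · exact h
        · exact absurd h hzne
      intro w hw
      rw [← hall w hw, ← hall 0 z0]
    · refine A fun z hz w hw => cross_tendsto S h₁ h₂ hζ 1 ‖κ‖ (norm_ne_zero_iff.2 hκ0) ?_ hz hw
      intro z hz w hw
      have := lim_lin (gram L₁ L₂ ζ 0 z w) (Complex.I * ((starRingEnd ℂ) (dlt ζ z) * dlt ζ w * κ))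
      simp only [norm_mul, Complex.norm_I, one_mul, RCLike.norm_conj] at this
      refine this.congr fun n => ?_
      rw [hκ n]
      congr 2
      push_cast; ring
  · refine A fun z hz w hw => cross_tendsto S h₁ h₂ hζ 2 ‖Q‖ (norm_ne_zero_iff.2 hQ0) ?_ hz hw
    intro z hz w hw
    have := lim_quad (gram L₁ L₂ ζ 0 z w) (Complex.I * 
      (dlt ζ w * ((starRingEnd ℂ) (L₁.den z) * L₂.den ζ - ⟪L₁.num z, L₂.num ζ⟫)
        - (starRingEnd ℂ) (dlt ζ z) *
            ((starRingEnd ℂ) (L₁.den ζ) * L₂.den w - ⟪L₁.num ζ, L₂.num w⟫)))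
       ((starRingEnd ℂ) (dlt ζ z) * dlt ζ w * Q)
    rw [norm_mul, norm_mul, RCLike.norm_conj] at this
    refine this.congr fun n => ?_
    rw [gram_expand L₁ L₂ n]
    congr 2
    push_cast; ring

/-- The constant map. -/
theorem exists_nondeg {L : BallLFT N} (h : L.IsSelfMap) : ∃ L' : BallLFT N, L'.IsSelfMap ∧
    EqOn L'.toFun L.toFun (Ball N) ∧ ∀ ζ, ‖ζ‖ = 1 → L'.den ζ ≠ 0 := by
  by_cases hd : ∀ ζ, ‖ζ‖ = 1 → L.den ζ ≠ 0
  · exact ⟨L, h, fun _ _ => rfl, hd⟩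
  push Not at hd
  obtain ⟨ζ, hζ, h0⟩ := hd
  have hc := h.const_of_degenerate hζ h0
  let L' : BallLFT N := ⟨0, L.toFun 0, 0, 1⟩
  have e : ∀ z, L'.toFun z = L.toFun 0 := by
    intro z
    change (⟪(0 : EuclideanSpace ℂ (Fin N)), z⟫ + 1)⁻¹ • (_ + L.toFun 0) = _
    simp [L']
  refine ⟨L', ⟨fun z _ => by simp [L'], fun z hz => ?_⟩, fun z hz => ?_, fun z _ => by simp [L', den]⟩
  · rw [e]; exact h.2 (by simp)
  · rw [e, hc z hz]

theorem main {L₁ L₂ : BallLFT N} (h₁ : L₁.IsSelfMap) (h₂ : L₂.IsSelfMap)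
    {T₁ T₂ : S.H →L[ℂ] S.H} (hT₁ : S.IsCompositionOperator L₁.toFun T₁)
    (hT₂ : S.IsCompositionOperator L₂.toFun T₂) (hK : IsCompactOperator ⇑(T₁ - T₂))
    (hne : ¬ EqOn L₁.toFun L₂.toFun (Ball N)) : supNorm L₁.toFun < 1 := by
  by_contra hsup
  have hnd : ∀ ζ, ‖ζ‖ = 1 → L₁.den ζ ≠ 0 := fun ζ hζ h0 =>
    hsup (supNorm_lt_of_const h₁ (h₁.const_of_degenerate hζ h0))
  have hden : ∀ z, ‖z‖ ≤ 1 → L₁.den z ≠ 0 := by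
    intro z hz
    rcases hz.lt_or_eq with hz | hz
    · exact h₁.den_ne (by simpa using hz)
    · exact hnd z hz
  obtain ⟨L, h, he, hd⟩ := exists_nondeg h₂
  obtain ⟨ζ, hζ, hmax⟩ := (isCompact_closedBall (0 : EuclideanSpace ℂ (Fin N)) 1).exists_isMaxOn
    ⟨0, by simp⟩ (f := fun z => ‖L₁.toFun z‖) (by
      refine ContinuousOn.norm ?_
      change ContinuousOn (fun z => (L₁.den z)⁻¹ • L₁.num z) _
      exact (L₁.continuous_den.continuousOn.inv₀ (fun z hz => hden z (by simpa using hz))).smul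
        L₁.continuous_num.continuousOn)
  have hζ1 : ‖ζ‖ ≤ 1 := by simpa using hζ
  have hge : 1 ≤ ‖L₁.toFun ζ‖ := by
    by_contra hlt
    push Not at hlt
    refine hsup (lt_of_le_of_lt (csSup_le ⟨_, 0, by simp, rfl⟩ ?_) hlt)
    rintro _ ⟨z, hz, rfl⟩
    exact hmax (Metric.ball_subset_closedBall hz)
  have hη : ‖L₁.toFun ζ‖ = 1 := le_antisymm (h₁.norm_le hζ1) hge
  have hζe : ‖ζ‖ = 1 := by
    refine le_antisymm hζ1 (not_lt.1 fun hlt => ?_)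
    have := h₁.norm_lt (z := ζ) (by simpa using hlt)
    linarith
  refine hsup (supNorm_lt_of_const h₁ (main_aux S h₁ h hT₁ (T₂ := T₂) ?_ hK ?_ hζe hη
    (hnd ζ hζe) (hd ζ hζe)))
  · intro f z hz
    rw [hT₂ f z hz, he hz]
  · exact fun hE => hne (hE.trans he)

end BallLFT

/-- Let `φ, ψ` be linear fractional self-maps of `B_N`.  Then `C_φ - C_ψ`
is compact on the Dirichlet space `𝒟(B_N)` if and only if `φ = ψ` (on `B_N`) or both `C_φ`
and `C_ψ` are compact; equivalently, `φ = ψ` or both `‖φ‖_∞ < 1` and `‖ψ‖_∞ < 1`. -/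
theorem dirichlet_difference_compact_iff
    (N : ℕ) (S : DirichletSpace N)
    (φ ψ : BallLFT N) (hφ : φ.IsSelfMap) (hψ : ψ.IsSelfMap)
    (Cφ Cψ : S.H →L[ℂ] S.H)
    (hCφ : S.IsCompositionOperator φ.toFun Cφ) (hCψ : S.IsCompositionOperator ψ.toFun Cψ) :
    (IsCompactOperator ⇑(Cφ - Cψ) ↔
      (Set.EqOn φ.toFun ψ.toFun (Ball N) ∨
        (IsCompactOperator ⇑Cφ ∧ IsCompactOperator ⇑Cψ))) ∧
    (IsCompactOperator ⇑(Cφ - Cψ) ↔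
      (Set.EqOn φ.toFun ψ.toFun (Ball N) ∨
        (supNorm φ.toFun < 1 ∧ supNorm ψ.toFun < 1))) := by
  have hs : IsCompactOperator ⇑(Cφ - Cψ) → (Set.EqOn φ.toFun ψ.toFun (Ball N) ∨
        (supNorm φ.toFun < 1 ∧ supNorm ψ.toFun < 1)) := by
    intro hK
    by_cases he : Set.EqOn φ.toFun ψ.toFun (Ball N)
    · exact Or.inl he
    · refine Or.inr ⟨BallLFT.main S hφ hψ hCφ hCψ hK he,
        BallLFT.main S hψ hφ hCψ hCφ ?_ (fun h => he h.symm)⟩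
      have h2 : IsCompactOperator (-⇑(Cφ - Cψ)) := hK.neg
      have h3 : -⇑(Cφ - Cψ) = ⇑(Cψ - Cφ) := by
        ext f; simp
      rwa [h3] at h2
  have h0 : Set.EqOn φ.toFun ψ.toFun (Ball N) → IsCompactOperator ⇑(Cφ - Cψ) := by
    intro he
    have : Cφ = Cψ := by
      ext f
      refine S.eval_injective _ _ fun z hz => ?_
      rw [hCφ f z hz, hCψ f z hz, he hz]
    rw [this, sub_self]
    exact isCompactOperator_zero
  have hc : (supNorm φ.toFun < 1 ∧ supNorm ψ.toFun < 1) →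
      (IsCompactOperator ⇑Cφ ∧ IsCompactOperator ⇑Cψ) := fun h =>
    ⟨compact_of_supNorm S hφ hCφ h.1, compact_of_supNorm S hψ hCψ h.2⟩
  have hd : (IsCompactOperator ⇑Cφ ∧ IsCompactOperator ⇑Cψ) → IsCompactOperator ⇑(Cφ - Cψ) :=
    fun h => h.1.sub h.2
  exact ⟨⟨fun h => (hs h).imp id hc, fun h => h.elim h0 hd⟩,
    ⟨hs, fun h => h.elim h0 (fun h => hd (hc h))⟩⟩
end
end
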